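/- arXiv:2603.08449 — 4 statements merged into one kernel-verified Lean document; each statement's English description precedes it below -/
import Mathlib

section
/- Let 1 ≤ p < ∞, a > 0, and let φ : (0,∞) → ℂ be measurable with ∫₀^∞ |φ(t)| t^{(a+1)/p − 1} dt < ∞. Let λ ∈ ℂ lie outside the closure of { k̂_{a,p}(ξ) : ξ ∈ ℝ }. Then there exists a measurable ψ : (0,∞) → ℂ with ∫₀^∞ |ψ(t)| t^{(a+1)/p − 1} dt < ∞ such that for every holomorphic function f on 𝕌 with ‖f‖_{A^p_a} < ∞ the following two identities hold at every point of 𝕌: (1/λ)(g + ℋ_ψ g) = f where g = λf − ℋ_φ f, and λh − ℋ_φ h = f where h = (1/λ)(f + ℋ_ψ f). -/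
open MeasureTheory
open scoped ENNReal NNReal

/-- The upper half-plane `𝕌 = {z : Im z > 0}`. -/
def upperHalf : Set ℂ := {z : ℂ | 0 < z.im}

/-- The Hausdorff operator `ℋ_φ f(z) = ∫₀^∞ f(z/t) φ(t) t⁻¹ dt` on functions on `𝕌`. -/
noncomputable def HphiHol (φ : ℝ → ℂ) (f : ℂ → ℂ) (z : ℂ) : ℂ :=
  ∫ t in Set.Ioi (0 : ℝ), f (z / (t : ℂ)) * φ t / (t : ℂ)

/-- The weighted Bergman norm `‖f‖_{A^p_a} = (∫_𝕌 |f(z)|^p (Im z)^{a−1} dA(z))^{1/p}`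
(valued in `ℝ≥0∞`), where `dA` is area (Lebesgue) measure on `ℂ`. -/
noncomputable def bergmanNorm (p a : ℝ) (f : ℂ → ℂ) : ℝ≥0∞ :=
  (∫⁻ z in upperHalf, (‖f z‖₊ : ℝ≥0∞) ^ p * ENNReal.ofReal (z.im ^ (a - 1))) ^ (1 / p)

/-- `k̂_{a,p}(ξ) = ∫₀^∞ φ(t) t^{c − 1 − iξ} dt` with `c = (a+1)/p`. -/
noncomputable def khat (φ : ℝ → ℂ) (c : ℝ) (ξ : ℝ) : ℂ :=
  ∫ t in Set.Ioi (0 : ℝ), φ t * (t : ℂ) ^ ((c : ℂ) - 1 - Complex.I * (ξ : ℂ))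

/-! In logarithmic coordinates along rays, `ℋ_φ` is convolution on `ℝ` with the integrable kernel
`P u = φ (eᵘ) * e^(c * u)`, `c = (a + 1) / p`, whose Fourier transform is `k̂` up to scaling.
Convolution operators on `L¹(ℝ)` lie in the double commutant of the translations, a commutative
Banach algebra which computes the same spectrum. A character of this algebra that does not vanish
on convolutions restricts to a bounded continuous character of `ℝ`, so it maps convolution by `P`
to a value of `𝓕 P`; the others map it to `0`, which is in the closure of the range of `𝓕 P` by the
Riemann–Lebesgue lemma. Hence `l - P ⋆ ·` is invertible on `L¹`, and `Q = (l - P ⋆ ·)⁻¹ P` satisfies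
`l • Q - P ⋆ Q = P`. Both identities then hold pointwise for any `f` whose weighted restrictions to
rays are bounded, and the mean value inequality gives this for functions in a Bergman space. -/

section DoubleCommutant

variable {A : Type*} [NormedRing A] [NormedAlgebra ℂ A] [CompleteSpace A]

theorem exists_character_centralizer_centralizer_apply_eq_zero {S : Set A}
    (hS : ∀ x ∈ S, ∀ y ∈ S, x * y = y * x)
    {a : Subalgebra.centralizer ℂ (Set.centralizer S)} (ha : ¬IsUnit (a : A)) :
    ∃ χ : WeakDual.characterSpace ℂ (Subalgebra.centralizer ℂ (Set.centralizer S)), χ a = 0 := by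
  let B := Subalgebra.centralizer ℂ (Set.centralizer S)
  have hB : IsClosed (B : Set A) := Set.isClosed_centralizer _
  have : CompleteSpace B := hB.completeSpace_coe
  let _ : NormedCommRing B :=
    { (inferInstance : NormedRing B) with
      mul_comm := fun x y => Subtype.ext <|
        Set.centralizer_centralizer_comm_of_comm hS x x.2 y y.2 }
  exact WeakDual.CharacterSpace.exists_apply_eq_zero (A := B) fun h => ha (h.map B.val)

end DoubleCommutant

section Translation

variable {G : Type*} [AddCommGroup G] [TopologicalSpace G] [IsTopologicalAddGroup G]
  [MeasurableSpace G] [BorelSpace G] {μ : Measure G} [μ.IsAddRightInvariant]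

/-- Translation by `s` as an isometry of `L¹(μ)`: `translateL1 s f x = f (x - s)`. -/
noncomputable def translateL1 (μ : Measure G) [μ.IsAddRightInvariant] (s : G) :
    (G →₁[μ] ℂ) →L[ℂ] (G →₁[μ] ℂ) :=
  (Lp.compMeasurePreservingₗᵢ ℂ (fun x => x - s)
    (measurePreserving_sub_right μ s)).toContinuousLinearMap

theorem coeFn_translateL1 (s : G) (f : G →₁[μ] ℂ) :
    translateL1 μ s f =ᵐ[μ] fun x => f (x - s) :=
  Lp.coeFn_compMeasurePreserving f (measurePreserving_sub_right μ s)

@[simp]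
theorem norm_translateL1_apply (s : G) (f : G →₁[μ] ℂ) : ‖translateL1 μ s f‖ = ‖f‖ :=
  LinearIsometry.norm_map _ f

theorem translateL1_add (s t : G) : translateL1 μ (s + t) = translateL1 μ s * translateL1 μ t := by
  ext1 f
  refine Lp.ext ?_
  filter_upwards [coeFn_translateL1 (s + t) f, coeFn_translateL1 s (translateL1 μ t f),
    (measurePreserving_sub_right μ s).quasiMeasurePreserving.ae (coeFn_translateL1 t f)]
    with x hst hs ht
  rw [hst, mul_apply_eq_comp, hs, ht, sub_sub]

theorem translateL1_zero : translateL1 μ (0 : G) = 1 := by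
  ext1 f
  refine Lp.ext ?_
  filter_upwards [coeFn_translateL1 0 f] with x hx
  rw [hx, sub_zero, one_apply_eq_self]

theorem translateL1_comm (s t : G) :
    translateL1 μ s * translateL1 μ t = translateL1 μ t * translateL1 μ s := by
  rw [← translateL1_add, add_comm, translateL1_add]

theorem continuous_translateL1_apply [R1Space G] [IsLocallyFiniteMeasure μ]
    [μ.InnerRegularCompactLTTop] (f : G →₁[μ] ℂ) :
    Continuous fun s => translateL1 μ s f :=
  continuous_const.compMeasurePreservingLp
    (ContinuousMap.mk (fun a : G × G => a.2 - a.1) (by fun_prop)).curry.continuous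
    (measurePreserving_sub_right μ) ENNReal.one_ne_top

/-- The bicommutant of the translations. It is a commutative Banach algebra containing all
convolution operators, and it is unital and inverse-closed. -/
noncomputable def translationAlgebra (μ : Measure G) [μ.IsAddRightInvariant] :
    Subalgebra ℂ ((G →₁[μ] ℂ) →L[ℂ] (G →₁[μ] ℂ)) :=
  Subalgebra.centralizer ℂ (Set.centralizer (Set.range (translateL1 μ)))

theorem translateL1_mem_translationAlgebra (s : G) : translateL1 μ s ∈ translationAlgebra μ :=
  Set.subset_centralizer_centralizer (Set.mem_range_self s)

namespace translationAlgebra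

/-- The translations, as a character of `G` with values in the translation algebra. -/
noncomputable def translate (μ : Measure G) [μ.IsAddRightInvariant] :
    AddChar G (translationAlgebra μ) where
  toFun s := ⟨translateL1 μ s, translateL1_mem_translationAlgebra s⟩
  map_zero_eq_one' := Subtype.ext translateL1_zero
  map_add_eq_mul' s t := Subtype.ext (translateL1_add s t)

/-- The restriction of a character of the translation algebra to the translations. -/
noncomputable def toAddChar (χ : WeakDual.characterSpace ℂ (translationAlgebra μ)) : AddChar G ℂ :=
  (WeakDual.CharacterSpace.toAlgHom χ : translationAlgebra μ →* ℂ).compAddChar (translate μ)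

theorem toAddChar_apply (χ : WeakDual.characterSpace ℂ (translationAlgebra μ)) (s : G) :
    toAddChar χ s = χ (translate μ s) := rfl

theorem exists_norm_toAddChar_le (χ : WeakDual.characterSpace ℂ (translationAlgebra μ)) :
    ∃ C, ∀ s, ‖toAddChar χ s‖ ≤ C := by
  let L : translationAlgebra μ →L[ℂ] ℂ := WeakDual.toStrongDual χ.1
  have htranslate (s : G) : ‖translate μ s‖ ≤ 1 :=
    ContinuousLinearMap.opNorm_le_bound _ zero_le_one fun f =>
      (norm_translateL1_apply s f).trans_le (one_mul _).ge
  exact ⟨‖L‖ * 1, fun s => L.le_opNorm_of_le (htranslate s)⟩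

end translationAlgebra

end Translation

section Convolution

variable {G : Type*} [AddCommGroup G] [TopologicalSpace G] [IsTopologicalAddGroup G] [R1Space G]
  [SecondCountableTopology G] [MeasurableSpace G] [BorelSpace G] {μ : Measure G}
  [μ.IsAddRightInvariant] [IsLocallyFiniteMeasure μ] [μ.InnerRegularCompactLTTop]

theorem integrable_smul_translateL1 (f g : G →₁[μ] ℂ) :
    Integrable (fun s => f s • translateL1 μ s g) μ :=
  (L1.integrable_coeFn f).smul_of_top_left
    (memLp_top_of_bound (continuous_translateL1_apply g).aestronglyMeasurable ‖g‖
      (ae_of_all μ fun s => (norm_translateL1_apply s g).le))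

/-- Convolution on `L¹(μ)`, as the superposition `convL1 f g = ∫ f(s) τ_s g ds` of translates:
this Bochner integral in `L¹(μ)` makes the algebra of convolution operators formal. -/
noncomputable def convL1 (μ : Measure G) [μ.IsAddRightInvariant] [IsLocallyFiniteMeasure μ]
    [μ.InnerRegularCompactLTTop] : (G →₁[μ] ℂ) →L[ℂ] (G →₁[μ] ℂ) →L[ℂ] (G →₁[μ] ℂ) :=
  LinearMap.mkContinuous₂
    (LinearMap.mk₂ ℂ (fun f g => ∫ s, f s • translateL1 μ s g ∂μ)
      (fun f f' g => by
        rw [← integral_add (integrable_smul_translateL1 f g) (integrable_smul_translateL1 f' g)]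
        refine integral_congr_ae ?_
        filter_upwards [Lp.coeFn_add f f'] with s hs
        rw [hs, Pi.add_apply, add_smul])
      (fun c f g => by
        rw [← integral_smul]
        refine integral_congr_ae ?_
        filter_upwards [Lp.coeFn_smul c f] with s hs
        rw [hs, Pi.smul_apply, smul_assoc])
      (fun f g g' => by
        simp only [map_add, smul_add]
        exact integral_add (integrable_smul_translateL1 f g) (integrable_smul_translateL1 f g'))
      (fun c f g => by
        simp only [map_smul, smul_comm _ c]
        exact integral_smul c _))
    1 fun f g => by
      refine (norm_integral_le_integral_norm _).trans_eq ?_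
      simp only [norm_smul, norm_translateL1_apply]
      rw [integral_mul_const, one_mul, L1.norm_eq_integral_norm f]

theorem convL1_apply (f g : G →₁[μ] ℂ) : convL1 μ f g = ∫ s, f s • translateL1 μ s g ∂μ := rfl

theorem map_convL1_apply {E : Type*} [NormedAddCommGroup E] [NormedSpace ℂ E] [CompleteSpace E]
    (L : (G →₁[μ] ℂ) →L[ℂ] E) (f g : G →₁[μ] ℂ) :
    L (convL1 μ f g) = ∫ s, f s • L (translateL1 μ s g) ∂μ := by
  rw [convL1_apply, ← L.integral_comp_comm (integrable_smul_translateL1 f g)]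
  simp only [map_smul]

theorem convL1_translateL1 (s : G) (f : G →₁[μ] ℂ) :
    convL1 μ (translateL1 μ s f) = translateL1 μ s * convL1 μ f := by
  ext1 g
  rw [mul_apply_eq_comp, map_convL1_apply, convL1_apply,
    ← integral_add_right_eq_self (fun t => translateL1 μ s f t • _) s]
  refine integral_congr_ae ?_
  filter_upwards [(measurePreserving_add_right μ s).quasiMeasurePreserving.ae
    (coeFn_translateL1 s f)] with t ht
  rw [ht, add_sub_cancel_right, add_comm t s, translateL1_add, mul_apply_eq_comp]

theorem convL1_convL1 (f g : G →₁[μ] ℂ) : convL1 μ (convL1 μ f g) = convL1 μ f * convL1 μ g := by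
  ext1 h
  refine (map_convL1_apply ((convL1 μ).flip h) f g).trans ?_
  simp only [ContinuousLinearMap.flip_apply, convL1_translateL1, mul_apply_eq_comp]
  rfl

theorem convL1_mem_translationAlgebra (f : G →₁[μ] ℂ) : convL1 μ f ∈ translationAlgebra μ := by
  refine Subalgebra.mem_centralizer_iff ℂ |>.2 fun U hU => ?_
  ext1 g
  have hU' (s : G) : U (translateL1 μ s g) = translateL1 μ s (U g) :=
    (DFunLike.congr_fun (hU _ (Set.mem_range_self s)) g).symm
  rw [mul_apply_eq_comp, mul_apply_eq_comp, map_convL1_apply]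
  simp only [hU']
  rfl

namespace translationAlgebra

/-- The convolution operators, as elements of the translation algebra. -/
noncomputable def conv (μ : Measure G) [μ.IsAddRightInvariant]
    [IsLocallyFiniteMeasure μ] [μ.InnerRegularCompactLTTop] :
    (G →₁[μ] ℂ) →L[ℂ] translationAlgebra μ :=
  (convL1 μ).codRestrict (Subalgebra.toSubmodule (translationAlgebra μ))
    convL1_mem_translationAlgebra

theorem conv_translateL1 (s : G) (f : G →₁[μ] ℂ) :
    conv μ (translateL1 μ s f) = translate μ s * conv μ f :=
  Subtype.ext (convL1_translateL1 s f)

theorem conv_convL1 (f g : G →₁[μ] ℂ) : conv μ (convL1 μ f g) = conv μ f * conv μ g :=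
  Subtype.ext (convL1_convL1 f g)

variable {χ : WeakDual.characterSpace ℂ (translationAlgebra μ)} {g : G →₁[μ] ℂ}

theorem toAddChar_mul_character_conv (s : G) (g : G →₁[μ] ℂ) :
    toAddChar χ s * χ (conv μ g) = χ (conv μ (translateL1 μ s g)) := by
  rw [conv_translateL1, map_mul, toAddChar_apply]

theorem continuous_toAddChar (hg : χ (conv μ g) ≠ 0) : Continuous (toAddChar χ) := by
  have h (s : G) : toAddChar χ s = χ (conv μ (translateL1 μ s g)) / χ (conv μ g) := by
    rw [← toAddChar_mul_character_conv, mul_div_cancel_right₀ _ hg]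
  simp only [funext h]
  exact (((map_continuous χ).comp (conv μ).continuous).comp
    (continuous_translateL1_apply g)).div_const _

theorem character_conv_eq_integral (hg : χ (conv μ g) ≠ 0) (f : G →₁[μ] ℂ) :
    χ (conv μ f) = ∫ s, f s * toAddChar χ s ∂μ := by
  refine mul_right_cancel₀ hg ?_
  have h := map_convL1_apply
    ((WeakDual.toStrongDual (χ : WeakDual ℂ (translationAlgebra μ))).comp (conv μ)) f g
  calc χ (conv μ f) * χ (conv μ g) = χ (conv μ (convL1 μ f g)) := by rw [conv_convL1, map_mul]
    _ = ∫ s, f s * χ (conv μ (translateL1 μ s g)) ∂μ := h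
    _ = (∫ s, f s * toAddChar χ s ∂μ) * χ (conv μ g) := by
      simp only [← toAddChar_mul_character_conv, ← mul_assoc, integral_mul_const]

end translationAlgebra

theorem eq_zero_or_exists_addChar_of_mem_spectrum_convL1 {f : G →₁[μ] ℂ} {l : ℂ}
    (hl : l ∈ spectrum ℂ (convL1 μ f)) :
    l = 0 ∨ ∃ α : AddChar G ℂ, Continuous α ∧ (∃ C, ∀ s, ‖α s‖ ≤ C) ∧ ∫ s, f s * α s ∂μ = l := by
  have hcomm : ∀ U ∈ Set.range (translateL1 μ), ∀ V ∈ Set.range (translateL1 μ), U * V = V * U := by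
    rintro _ ⟨s, rfl⟩ _ ⟨t, rfl⟩
    exact translateL1_comm s t
  obtain ⟨χ, hχ⟩ : ∃ χ : WeakDual.characterSpace ℂ (translationAlgebra μ),
      χ (algebraMap ℂ _ l - translationAlgebra.conv μ f) = 0 :=
    exists_character_centralizer_centralizer_apply_eq_zero hcomm hl
  have hχf : χ (translationAlgebra.conv μ f) = l := by
    rw [map_sub, AlgHomClass.commutes, sub_eq_zero] at hχ
    exact hχ.symm
  refine or_iff_not_imp_left.2 fun hl0 => ?_
  have hf : χ (translationAlgebra.conv μ f) ≠ 0 := hχf ▸ hl0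
  exact ⟨translationAlgebra.toAddChar χ, translationAlgebra.continuous_toAddChar hf,
    translationAlgebra.exists_norm_toAddChar_le χ,
    (translationAlgebra.character_conv_eq_integral hf f).symm.trans hχf⟩

end Convolution

section RealCharacters

open scoped FourierTransform

variable {α : AddChar ℝ ℂ}

theorem exists_integral_addChar_ne_zero (hα : Continuous α) :
    ∃ δ : ℝ, ∫ s in (0 : ℝ)..δ, α s ≠ 0 := by
  by_contra! h
  have hderiv : deriv (fun x => ∫ s in (0 : ℝ)..x, α s) 0 = α 0 := hα.deriv_integral _ 0 0
  simp [h] at hderiv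

theorem differentiable_addChar_of_continuous (hα : Continuous α) : Differentiable ℝ α := by
  obtain ⟨δ, hδ⟩ := exists_integral_addChar_ne_zero hα
  have hprim : Differentiable ℝ fun x => ∫ s in (0 : ℝ)..x, α s := fun x =>
    (intervalIntegral.integral_hasDerivAt_right (hα.intervalIntegrable 0 x)
      (hα.stronglyMeasurableAtFilter _ _) hα.continuousAt).differentiableAt
  have hα_eq : ⇑α = fun t =>
      ((∫ s in (0 : ℝ)..t + δ, α s) - ∫ s in (0 : ℝ)..t, α s) / ∫ s in (0 : ℝ)..δ, α s := by
    ext t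
    rw [eq_div_iff hδ, intervalIntegral.integral_interval_sub_left (hα.intervalIntegrable _ _)
      (hα.intervalIntegrable _ _), ← intervalIntegral.integral_const_mul]
    simp only [← AddChar.map_add_eq_mul]
    rw [intervalIntegral.integral_comp_add_left (fun s => α s), add_zero]
  rw [hα_eq]
  exact ((hprim.comp (differentiable_id.add_const δ)).sub hprim).div_const _

theorem hasDerivAt_addChar_of_continuous (hα : Continuous α) (t : ℝ) :
    HasDerivAt α (deriv α 0 * α t) t := by
  have h0 : HasDerivAt α (deriv α 0) (t - t) := by
    rw [sub_self]
    exact (differentiable_addChar_of_continuous hα 0).hasDerivAt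
  simpa only [← AddChar.map_add_eq_mul, sub_add_cancel] using
    (h0.comp_sub_const t t).mul_const (α t)

theorem addChar_apply_eq_exp_of_continuous (hα : Continuous α) (t : ℝ) :
    α t = Complex.exp (deriv α 0 * t) := by
  set c := deriv α 0
  have hconst (x : ℝ) : HasDerivAt (fun x : ℝ => α x * Complex.exp (-(c * x))) 0 x := by
    have hexp : HasDerivAt (fun x : ℝ => Complex.exp (-(c * x))) (Complex.exp (-(c * x)) * -c) x :=
      ((hasDerivAt_const_mul c).neg.cexp).comp_ofReal
    exact ((hasDerivAt_addChar_of_continuous hα x).mul hexp).congr_deriv (by ring)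
  have h := is_const_of_deriv_eq_zero (fun x => (hconst x).differentiableAt)
    (fun x => (hconst x).deriv) t 0
  simp only [Complex.ofReal_zero, mul_zero, neg_zero, Complex.exp_zero, AddChar.map_zero_eq_one,
    Complex.exp_neg, mul_one] at h
  exact eq_of_mul_inv_eq_one h

theorem norm_addChar_apply_eq_one {G : Type*} [AddCommGroup G] {α : AddChar G ℂ} {C : ℝ}
    (hC : ∀ t, ‖α t‖ ≤ C) (t : G) : ‖α t‖ = 1 := by
  have hle (t : G) : ‖α t‖ ≤ 1 := by
    by_contra! h
    obtain ⟨n, hn⟩ := pow_unbounded_of_one_lt C h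
    rw [← norm_pow, ← AddChar.map_nsmul_eq_pow] at hn
    exact (hC _).not_gt hn
  refine (hle t).antisymm ?_
  calc 1 = ‖α t‖ * ‖α (-t)‖ := by
        rw [← norm_mul, ← AddChar.map_add_eq_mul, add_neg_cancel, AddChar.map_zero_eq_one, norm_one]
    _ ≤ ‖α t‖ := mul_le_of_le_one_right (norm_nonneg _) (hle _)

theorem exists_addChar_apply_eq_fourierChar (hα : Continuous α) {C : ℝ} (hC : ∀ t, ‖α t‖ ≤ C) :
    ∃ ξ : ℝ, ∀ t, α t = 𝐞 (-(t * ξ)) := by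
  set c := deriv α 0
  have hre : c.re = 0 := by
    have h := norm_addChar_apply_eq_one hC 1
    simpa [addChar_apply_eq_exp_of_continuous hα, Complex.norm_exp] using h
  have hc : c = c.im * Complex.I := by simpa [hre] using (Complex.re_add_im c).symm
  refine ⟨-c.im / (2 * Real.pi), fun t => ?_⟩
  rw [addChar_apply_eq_exp_of_continuous hα, Real.fourierChar_apply]
  have hexponent : (2 * Real.pi * -(t * (-c.im / (2 * Real.pi))) : ℝ) = t * c.im := by
    field_simp
  rw [hexponent, Complex.ofReal_mul, mul_assoc, ← hc, mul_comm]

end RealCharacters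

section Wiener

open scoped FourierTransform

theorem spectrum_convL1_subset (P : ℝ →₁[volume] ℂ) :
    spectrum ℂ (convL1 volume P) ⊆ insert 0 (Set.range (𝓕 (P : ℝ → ℂ))) := by
  intro l hl
  refine (eq_zero_or_exists_addChar_of_mem_spectrum_convL1 hl).imp id ?_
  rintro ⟨α, hα, ⟨C, hC⟩, rfl⟩
  obtain ⟨ξ, hξ⟩ := exists_addChar_apply_eq_fourierChar hα hC
  refine ⟨ξ, ?_⟩
  rw [Real.fourier_real_eq]
  simp only [hξ, Circle.smul_def, smul_eq_mul, mul_comm]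

theorem zero_mem_closure_range_fourier (P : ℝ → ℂ) : (0 : ℂ) ∈ closure (Set.range (𝓕 P)) :=
  mem_closure_of_tendsto (Real.zero_at_infty_fourier P) (.of_forall Set.mem_range_self)

theorem exists_smul_sub_convL1_eq {P : ℝ →₁[volume] ℂ} {l : ℂ}
    (hl : l ∉ closure (Set.range (𝓕 (P : ℝ → ℂ)))) :
    ∃ Q : ℝ →₁[volume] ℂ, l • Q - convL1 volume P Q = P := by
  have hl0 : l ∉ insert 0 (Set.range (𝓕 (P : ℝ → ℂ))) := by
    rintro (rfl | h)
    exacts [hl (zero_mem_closure_range_fourier P), hl (subset_closure h)]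
  obtain ⟨R, hR⟩ : IsUnit (algebraMap ℂ _ l - convL1 volume P) :=
    spectrum.notMem_iff.1 fun h => hl0 (spectrum_convL1_subset P h)
  refine ⟨(↑R⁻¹ : (ℝ →₁[volume] ℂ) →L[ℂ] (ℝ →₁[volume] ℂ)) P, ?_⟩
  have hRP := DFunLike.congr_fun R.mul_inv P
  rw [hR] at hRP
  exact hRP

end Wiener

section BoundedConvolution

open ContinuousLinearMap (mul)
open scoped Convolution

variable {G : Type*} [MeasurableSpace G] {μ : Measure G} {P Q F F' : G → ℂ}

/-- Measurable bounded functions, the functions with which every integrable kernel can be convolved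
pointwise everywhere. -/
def IsBoundedMeasurable (F : G → ℂ) : Prop := Measurable F ∧ ∃ C, ∀ x, ‖F x‖ ≤ C

namespace IsBoundedMeasurable

theorem const_smul (hF : IsBoundedMeasurable F) (a : ℂ) : IsBoundedMeasurable (a • F) := by
  obtain ⟨hFm, C, hC⟩ := hF
  refine ⟨hFm.const_smul a, ‖a‖ * C, fun x => ?_⟩
  rw [Pi.smul_apply, norm_smul]
  gcongr
  exact hC x

variable [AddCommGroup G] [MeasurableAdd₂ G] [MeasurableNeg G]

theorem convolutionExists (hF : IsBoundedMeasurable F) (hP : Integrable P μ) :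
    ConvolutionExists P F (mul ℂ ℂ) μ := fun x => by
  obtain ⟨hFm, C, hC⟩ := hF
  exact hP.mul_bdd (hFm.comp (measurable_const.sub measurable_id)).aestronglyMeasurable
    (ae_of_all μ fun y => hC (x - y))

theorem exists_functional_eq_convolution (hF : IsBoundedMeasurable F) (x : G) :
    ∃ Λ : (G →₁[μ] ℂ) →L[ℂ] ℂ, ∀ g : G →₁[μ] ℂ, Λ g = (g ⋆[mul ℂ ℂ, μ] F) x := by
  obtain ⟨hFm, C, hC⟩ := hF
  have hFx : MemLp (fun y => F (x - y)) ∞ μ :=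
    memLp_top_of_bound (hFm.comp (measurable_id.const_sub x)).aestronglyMeasurable C
      (ae_of_all μ fun y => hC (x - y))
  refine ⟨((mul ℂ ℂ).lpPairing μ 1 ∞).flip (hFx.toLp _), fun g => ?_⟩
  rw [ContinuousLinearMap.flip_apply, ContinuousLinearMap.lpPairing_eq_integral]
  refine integral_congr_ae ?_
  filter_upwards [hFx.coeFn_toLp] with y hy
  rw [hy]

theorem convolution_add (hF : IsBoundedMeasurable F) (hF' : IsBoundedMeasurable F')
    (hP : Integrable P μ) :
    P ⋆[mul ℂ ℂ, μ] (F + F') = P ⋆[mul ℂ ℂ, μ] F + P ⋆[mul ℂ ℂ, μ] F' :=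
  (hF.convolutionExists hP).distrib_add (hF'.convolutionExists hP)

theorem convolution_sub (hF : IsBoundedMeasurable F) (hF' : IsBoundedMeasurable F')
    (hP : Integrable P μ) :
    P ⋆[mul ℂ ℂ, μ] (F - F') = P ⋆[mul ℂ ℂ, μ] F - P ⋆[mul ℂ ℂ, μ] F' := by
  ext x
  rw [Pi.sub_apply, convolution_def, convolution_def, convolution_def,
    ← integral_sub (hF.convolutionExists hP x) (hF'.convolutionExists hP x)]
  simp only [Pi.sub_apply, map_sub]

variable [SFinite μ]

theorem convolution [μ.IsAddRightInvariant] (hF : IsBoundedMeasurable F)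
    (hP : Integrable P μ) : IsBoundedMeasurable (P ⋆[mul ℂ ℂ, μ] F) := by
  obtain ⟨hFm, C, hC⟩ := hF
  refine ⟨?_, C * ∫ s, ‖P s‖ ∂μ, fun x => ?_⟩
  · rw [convolution_congr _ hP.1.ae_eq_mk .rfl]
    have h : StronglyMeasurable fun z : G × G => hP.1.mk P z.2 * F (z.1 - z.2) :=
      (hP.1.stronglyMeasurable_mk.measurable.comp measurable_snd |>.mul
        (hFm.comp (measurable_fst.sub measurable_snd))).stronglyMeasurable
    exact h.integral_prod_right'.measurable
  · rw [convolution_mul, ← integral_const_mul]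
    refine norm_integral_le_of_norm_le (hP.norm.const_mul C) (ae_of_all μ fun s => ?_)
    rw [norm_mul, mul_comm]
    gcongr
    exact hC _

theorem convolution_convolution_comm (hF : IsBoundedMeasurable F) (hP : Integrable P μ)
    (hQ : Integrable Q μ) :
    P ⋆[mul ℂ ℂ, μ] (Q ⋆[mul ℂ ℂ, μ] F) = Q ⋆[mul ℂ ℂ, μ] (P ⋆[mul ℂ ℂ, μ] F) := by
  obtain ⟨hFm, C, hC⟩ := hF
  ext x
  have hint : Integrable (fun z : G × G => P z.1 * Q z.2 * F (x - z.1 - z.2)) (μ.prod μ) :=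
    (hP.mul_prod hQ).mul_bdd
      (hFm.comp ((measurable_fst.const_sub x).sub measurable_snd)).aestronglyMeasurable
      (ae_of_all _ fun z => hC (x - z.1 - z.2))
  simp only [convolution_mul, ← integral_const_mul, ← mul_assoc]
  rw [integral_integral_swap hint]
  simp only [mul_comm (P _), sub_right_comm x]

end IsBoundedMeasurable

variable [AddCommGroup G] [TopologicalSpace G] [IsTopologicalAddGroup G] [BorelSpace G]
  [SecondCountableTopology G] [μ.IsAddRightInvariant] [IsLocallyFiniteMeasure μ]

theorem translateL1_convolution_apply (s x : G) (g : G →₁[μ] ℂ) (F : G → ℂ) :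
    (translateL1 μ s g ⋆[mul ℂ ℂ, μ] F) x = (g ⋆[mul ℂ ℂ, μ] F) (x - s) := by
  rw [convolution_congr _ (coeFn_translateL1 s g) .rfl, convolution_mul, convolution_mul,
    ← integral_sub_right_eq_self (fun y => g y * F (x - s - y)) s]
  simp only [sub_sub, add_sub_cancel]

variable [R1Space G] [μ.InnerRegularCompactLTTop]

theorem convL1_convolution (hF : IsBoundedMeasurable F) (f g : G →₁[μ] ℂ) :
    convL1 μ f g ⋆[mul ℂ ℂ, μ] F = f ⋆[mul ℂ ℂ, μ] (g ⋆[mul ℂ ℂ, μ] F) := by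
  ext x
  obtain ⟨Λ, hΛ⟩ := hF.exists_functional_eq_convolution (μ := μ) x
  rw [← hΛ, map_convL1_apply]
  simp only [hΛ, translateL1_convolution_apply]
  rfl

theorem convolution_eq_of_smul_sub_convL1_eq {f g h : G →₁[μ] ℂ} {l : ℂ}
    (hfgh : l • g - convL1 μ f g = h) (hF : IsBoundedMeasurable F) :
    l • (g ⋆[mul ℂ ℂ, μ] F) - f ⋆[mul ℂ ℂ, μ] (g ⋆[mul ℂ ℂ, μ] F) = h ⋆[mul ℂ ℂ, μ] F := by
  ext x
  obtain ⟨Λ, hΛ⟩ := hF.exists_functional_eq_convolution (μ := μ) x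
  rw [← convL1_convolution hF, Pi.sub_apply, Pi.smul_apply, ← hΛ, ← hΛ, ← hΛ, ← map_smul, ← map_sub,
    hfgh]

end BoundedConvolution

section Resolvent

open ContinuousLinearMap (mul)
open scoped Convolution FourierTransform

theorem exists_resolvent_kernel {P : ℝ → ℂ} (hP : Integrable P) {l : ℂ}
    (hl : l ∉ closure (Set.range (𝓕 P))) :
    ∃ Q : ℝ → ℂ, Measurable Q ∧ Integrable Q ∧ ∀ F : ℝ → ℂ, IsBoundedMeasurable F →
      l • (Q ⋆[mul ℂ ℂ, volume] F) - P ⋆[mul ℂ ℂ, volume] (Q ⋆[mul ℂ ℂ, volume] F) =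
        P ⋆[mul ℂ ℂ, volume] F := by
  have hPL : hP.toL1 P =ᵐ[volume] P := hP.coeFn_toL1
  have hfourier : 𝓕 (hP.toL1 P : ℝ → ℂ) = 𝓕 P := by
    ext ξ
    simp only [Real.fourier_real_eq]
    exact integral_congr_ae (hPL.mono fun x hx => by simp only [hx])
  obtain ⟨Q, hQ⟩ := exists_smul_sub_convL1_eq (hfourier ▸ hl)
  refine ⟨Q, (Lp.stronglyMeasurable Q).measurable, L1.integrable_coeFn Q, fun F hF => ?_⟩
  have hconv (H : ℝ → ℂ) : P ⋆[mul ℂ ℂ, volume] H = hP.toL1 P ⋆[mul ℂ ℂ, volume] H :=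
    convolution_congr _ hPL.symm .rfl
  simpa only [hconv] using convolution_eq_of_smul_sub_convL1_eq hQ hF

theorem exists_kernel_inverting_smul_sub_convolution {P : ℝ → ℂ} (hP : Integrable P) {l : ℂ}
    (hl : l ∉ closure (Set.range (𝓕 P))) :
    ∃ Q : ℝ → ℂ, Measurable Q ∧ Integrable Q ∧ ∀ F : ℝ → ℂ, IsBoundedMeasurable F →
      (l • F - P ⋆[mul ℂ ℂ, volume] F) +
          Q ⋆[mul ℂ ℂ, volume] (l • F - P ⋆[mul ℂ ℂ, volume] F) = l • F ∧
        l • (F + Q ⋆[mul ℂ ℂ, volume] F) -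
          P ⋆[mul ℂ ℂ, volume] (F + Q ⋆[mul ℂ ℂ, volume] F) = l • F := by
  obtain ⟨Q, hQm, hQ, hres⟩ := exists_resolvent_kernel hP hl
  refine ⟨Q, hQm, hQ, fun F hF => ⟨?_, ?_⟩⟩
  · rw [(hF.const_smul l).convolution_sub (hF.convolution hP) hQ, convolution_smul,
      ← hF.convolution_convolution_comm hP hQ, hres F hF, sub_add_cancel]
  · rw [smul_add, hF.convolution_add (hF.convolution hQ) hP, add_sub_add_comm, hres F hF,
      sub_add_cancel]

end Resolvent

section ExpSubstitution

variable {E : Type*} [NormedAddCommGroup E] [NormedSpace ℝ E] (g : ℝ → E)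

theorem integral_Ioi_zero_eq_integral_exp_smul :
    ∫ t in Set.Ioi (0 : ℝ), g t = ∫ u, Real.exp u • g (Real.exp u) := by
  rw [← Real.range_exp, ← Set.image_univ, integral_image_eq_integral_abs_deriv_smul
    MeasurableSet.univ (fun x _ => (Real.hasDerivAt_exp x).hasDerivWithinAt)
    Real.exp_injective.injOn]
  simp only [abs_of_pos (Real.exp_pos _), setIntegral_univ]

theorem integrableOn_Ioi_zero_iff_integrable_exp_smul :
    IntegrableOn g (Set.Ioi (0 : ℝ)) ↔ Integrable fun u => Real.exp u • g (Real.exp u) := by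
  rw [← Real.range_exp, ← Set.image_univ, integrableOn_image_iff_integrableOn_abs_deriv_smul
    MeasurableSet.univ (fun x _ => (Real.hasDerivAt_exp x).hasDerivWithinAt)
    Real.exp_injective.injOn]
  simp only [abs_of_pos (Real.exp_pos _), integrableOn_univ]

end ExpSubstitution

section LogCoordinates

open ContinuousLinearMap (mul)
open scoped Convolution FourierTransform

/-- The kernel `φ` in the coordinate `t = eᵘ`, weighted so that `∫ |φ(t)| t ^ (c - 1) dt` becomes
an unweighted `L¹` norm and `ℋ_φ` becomes convolution with `logKernel φ c`. -/
noncomputable def logKernel (φ : ℝ → ℂ) (c u : ℝ) : ℂ := φ (Real.exp u) * Real.exp (c * u)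

/-- The restriction of `f` to the ray through `z`, in logarithmic coordinates and weighted by the
growth rate `c`. -/
noncomputable def logRay (f : ℂ → ℂ) (c : ℝ) (z : ℂ) (u : ℝ) : ℂ :=
  f (z * Real.exp u) * Real.exp (c * u)

variable {φ : ℝ → ℂ} (c : ℝ)

theorem measurable_logKernel (hφ : Measurable φ) : Measurable (logKernel φ c) := by
  unfold logKernel
  fun_prop

theorem integrable_logKernel_iff (hφ : Measurable φ) :
    Integrable (logKernel φ c) ↔
      IntegrableOn (fun t => ‖φ t‖ * t ^ (c - 1)) (Set.Ioi (0 : ℝ)) := by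
  rw [integrableOn_Ioi_zero_iff_integrable_exp_smul,
    ← integrable_norm_iff (measurable_logKernel c hφ).aestronglyMeasurable]
  refine iff_of_eq (congrArg (Integrable · volume) (funext fun u => ?_))
  rw [logKernel, norm_mul, Complex.norm_real, Real.norm_of_nonneg (Real.exp_pos _).le,
    ← Real.exp_mul, smul_eq_mul, mul_left_comm, ← Real.exp_add]
  ring_nf

theorem exists_logKernel_eq {Q : ℝ → ℂ} (hQ : Measurable Q) :
    ∃ ψ : ℝ → ℂ, Measurable ψ ∧ logKernel ψ c = Q := by
  refine ⟨fun t => Q (Real.log t) * Real.exp (-(c * Real.log t)), by fun_prop, funext fun u => ?_⟩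
  rw [logKernel, Real.log_exp, mul_assoc, ← Complex.ofReal_mul, ← Real.exp_add, neg_add_cancel,
    Real.exp_zero, Complex.ofReal_one, mul_one]

theorem fourier_logKernel (φ : ℝ → ℂ) (x : ℝ) :
    𝓕 (logKernel φ c) x = khat φ c (2 * Real.pi * x) := by
  rw [khat, integral_Ioi_zero_eq_integral_exp_smul, Real.fourier_eq]
  congr 1 with u
  have hu : (Real.exp u : ℂ) ≠ 0 := by exact_mod_cast (Real.exp_pos u).ne'
  rw [Circle.smul_def, Real.fourierChar_apply, logKernel, Complex.cpow_def_of_ne_zero hu,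
    ← Complex.ofReal_log (Real.exp_pos u).le, Real.log_exp, smul_eq_mul, Complex.real_smul]
  simp only [RCLike.inner_apply, conj_trivial]
  push_cast
  rw [mul_left_comm, ← Complex.exp_add, mul_left_comm, ← Complex.exp_add]
  ring_nf

theorem range_fourier_logKernel_subset (φ : ℝ → ℂ) :
    Set.range (𝓕 (logKernel φ c)) ⊆ Set.range (khat φ c) := by
  rintro _ ⟨x, rfl⟩
  exact ⟨_, (fourier_logKernel c φ x).symm⟩

theorem logRay_zero (f : ℂ → ℂ) (z : ℂ) : logRay f c z 0 = f z := by
  simp [logRay]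

theorem logRay_HphiHol (φ : ℝ → ℂ) (f : ℂ → ℂ) (z : ℂ) :
    logRay (HphiHol φ f) c z = logKernel φ c ⋆[mul ℂ ℂ, volume] logRay f c z := by
  ext v
  rw [logRay, HphiHol, integral_Ioi_zero_eq_integral_exp_smul, convolution_mul,
    ← integral_mul_const]
  congr 1 with u
  rw [logKernel, logRay, Real.exp_sub, mul_sub, Real.exp_sub, Complex.real_smul]
  push_cast
  field_simp

theorem logRay_smul_sub (l : ℂ) (f g : ℂ → ℂ) (z : ℂ) :
    logRay (fun w => l * f w - g w) c z = l • logRay f c z - logRay g c z := by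
  ext u
  simp only [logRay, Pi.sub_apply, Pi.smul_apply, smul_eq_mul, sub_mul, mul_assoc]

theorem logRay_smul_add (l : ℂ) (f g : ℂ → ℂ) (z : ℂ) :
    logRay (fun w => l * (f w + g w)) c z = l • (logRay f c z + logRay g c z) := by
  ext u
  simp only [logRay, Pi.add_apply, Pi.smul_apply, smul_eq_mul, add_mul, mul_assoc]

theorem isBoundedMeasurable_logRay {f : ℂ → ℂ} (hf : ContinuousOn f upperHalf) {C : ℝ}
    (hC : ∀ z ∈ upperHalf, ‖f z‖ ≤ C * z.im ^ (-c)) {z : ℂ} (hz : z ∈ upperHalf) :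
    IsBoundedMeasurable (logRay f c z) := by
  have him (u : ℝ) : (z * Real.exp u).im = z.im * Real.exp u := Complex.im_mul_ofReal _ _
  have hmem (u : ℝ) : z * Real.exp u ∈ upperHalf := by
    change 0 < (z * Real.exp u).im
    rw [him]
    exact mul_pos hz (Real.exp_pos u)
  constructor
  · have hcont : Continuous fun u : ℝ => f (z * Real.exp u) :=
      hf.comp_continuous (by fun_prop) hmem
    exact (hcont.mul (by fun_prop)).measurable
  · refine ⟨C * z.im ^ (-c), fun u => ?_⟩
    have hu := hC _ (hmem u)
    rw [him, Real.mul_rpow (le_of_lt hz) (Real.exp_pos u).le, ← Real.exp_mul] at hu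
    rw [logRay, norm_mul, Complex.norm_real, Real.norm_of_nonneg (Real.exp_pos _).le]
    calc ‖f (z * Real.exp u)‖ * Real.exp (c * u)
        ≤ C * (z.im ^ (-c) * Real.exp (u * -c)) * Real.exp (c * u) := by gcongr
      _ = C * z.im ^ (-c) := by
        rw [← mul_assoc, mul_assoc, ← Real.exp_add, mul_neg, mul_comm u, neg_add_cancel,
          Real.exp_zero, mul_one]

end LogCoordinates

section HausdorffResolvent

open scoped FourierTransform

theorem stmt12_general {φ : ℝ → ℂ} {c : ℝ} (hφm : Measurable φ)
    (hφ : IntegrableOn (fun t => ‖φ t‖ * t ^ (c - 1)) (Set.Ioi (0 : ℝ)))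
    {l : ℂ} (hl : l ∉ closure (Set.range (khat φ c))) :
    ∃ ψ : ℝ → ℂ, Measurable ψ ∧
      IntegrableOn (fun t => ‖ψ t‖ * t ^ (c - 1)) (Set.Ioi (0 : ℝ)) ∧
      ∀ (f : ℂ → ℂ) (z : ℂ), IsBoundedMeasurable (logRay f c z) →
        (1 / l) * (l * f z - HphiHol φ f z +
          HphiHol ψ (fun w => l * f w - HphiHol φ f w) z) = f z ∧
        l * ((1 / l) * (f z + HphiHol ψ f z)) -
          HphiHol φ (fun w => (1 / l) * (f w + HphiHol ψ f w)) z = f z := by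
  have hP := (integrable_logKernel_iff c hφm).2 hφ
  replace hl : l ∉ closure (Set.range (𝓕 (logKernel φ c))) :=
    fun h => hl (closure_mono (range_fourier_logKernel_subset c φ) h)
  have hl0 : l ≠ 0 := fun h => hl (h ▸ zero_mem_closure_range_fourier _)
  obtain ⟨Q, hQm, hQ, hinv⟩ := exists_kernel_inverting_smul_sub_convolution hP hl
  obtain ⟨ψ, hψm, rfl⟩ := exists_logKernel_eq c hQm
  refine ⟨ψ, hψm, (integrable_logKernel_iff c hψm).1 hQ, fun f z hF => ?_⟩
  obtain ⟨hleft, hright⟩ := hinv _ hF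
  replace hleft := congrFun hleft 0
  replace hright := congrFun hright 0
  rw [← logRay_HphiHol, ← logRay_smul_sub, ← logRay_HphiHol] at hleft
  rw [← logRay_HphiHol] at hright
  simp only [Pi.add_apply, Pi.sub_apply, Pi.smul_apply, smul_eq_mul, logRay_zero]
    at hleft hright
  constructor
  · rw [hleft, ← mul_assoc, one_div_mul_cancel hl0, one_mul]
  · rw [← logRay_zero c (HphiHol φ _), logRay_HphiHol, logRay_smul_add, convolution_smul,
      Pi.smul_apply, smul_eq_mul, mul_left_comm, ← mul_sub, hright, ← mul_assoc,
      one_div_mul_cancel hl0, one_mul]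

end HausdorffResolvent

section MeanValue

open Metric
open scoped Real

theorem setLIntegral_ball_eq_lintegral_circleMap {g : ℂ → ℝ≥0∞} (hg : Measurable g) (z : ℂ)
    (R : ℝ) :
    ∫⁻ w in ball z R, g w =
      ∫⁻ r in Set.Ioo 0 R, ENNReal.ofReal r * ∫⁻ θ in Set.Ioo (-π) π, g (circleMap z r θ) := by
  let h : ℂ → ℝ≥0∞ := (ball z R).indicator g
  have hh : Measurable h := hg.indicator measurableSet_ball
  have hcircle (r θ : ℝ) : z + Complex.polarCoord.symm (r, θ) = circleMap z r θ := by
    rw [Complex.polarCoord_symm_apply, circleMap, Complex.exp_mul_I]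
    push_cast
    rfl
  have hpolar : Measurable fun x : ℝ × ℝ => ENNReal.ofReal x.1 * h (circleMap z x.1 x.2) :=
    (by fun_prop : Measurable fun x : ℝ × ℝ => ENNReal.ofReal x.1).mul
      (hh.comp (by unfold circleMap; fun_prop))
  rw [← lintegral_indicator measurableSet_ball, ← lintegral_add_left_eq_self _ z,
    ← Complex.lintegral_comp_polarCoord_symm]
  simp only [smul_eq_mul, hcircle]
  rw [polarCoord_target, Measure.volume_eq_prod, ← Measure.prod_restrict,
    lintegral_prod _ hpolar.aemeasurable, ← Set.Ioi_inter_Iio (a := 0), Set.inter_comm (Set.Ioi 0),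
    ← Measure.restrict_restrict measurableSet_Iio, ← lintegral_indicator measurableSet_Iio]
  refine setLIntegral_congr_fun measurableSet_Ioi fun r (hr : 0 < r) => ?_
  have hmem (θ : ℝ) : circleMap z r θ ∈ ball z R ↔ r < R := by
    rw [mem_ball, dist_eq_norm, circleMap_sub_center, norm_circleMap_zero, abs_of_pos hr]
  by_cases hrR : r < R
  · simp [h, Set.indicator, hmem, hrR, lintegral_const_mul']
  · simp [h, Set.indicator, hmem, hrR]

variable {E : Type*} [NormedAddCommGroup E] [NormedSpace ℂ E] [CompleteSpace E] {f : ℂ → E}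
  {z : ℂ} {R : ℝ}

theorem lintegral_enorm_center_le_lintegral_circleMap (hf : DiffContOnCl ℂ f (ball z |R|)) :
    ∫⁻ _ in Set.Ioo (-π) π, ‖f z‖ₑ ≤ ∫⁻ θ in Set.Ioo (-π) π, ‖f (circleMap z R θ)‖ₑ := by
  have hmean : (2 * π) • f z = ∫ θ in Set.Ioo (-π) π, f (circleMap z R θ) := by
    have hper := ((periodic_circleMap z R).comp f).intervalIntegral_add_eq 0 (-π)
    simp only [Function.comp_apply, zero_add, show -π + 2 * π = π by ring] at hper
    rw [← integral_Ioc_eq_integral_Ioo,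
      ← intervalIntegral.integral_of_le (by linarith [Real.pi_pos]), ← hper,
      ← hf.circleAverage, Real.circleAverage, smul_inv_smul₀ (by positivity)]
  calc ∫⁻ _ in Set.Ioo (-π) π, ‖f z‖ₑ = ‖(2 * π) • f z‖ₑ := by
        rw [setLIntegral_const, Real.volume_Ioo, enorm_smul, Real.enorm_of_nonneg (by positivity),
          mul_comm, show π - -π = 2 * π by ring]
    _ ≤ _ := hmean ▸ enorm_integral_le_lintegral_enorm _

theorem volume_ball_mul_enorm_le (hf : DifferentiableOn ℂ f (ball z R)) :
    volume (ball z R) * ‖f z‖ₑ ≤ ∫⁻ w in ball z R, ‖f w‖ₑ := by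
  classical
  have hmeas : Measurable ((ball z R).piecewise (fun w => ‖f w‖ₑ) 0) :=
    hf.continuousOn.enorm.measurable_piecewise continuousOn_const measurableSet_ball
  have hball : ∫⁻ w in ball z R, ‖f w‖ₑ =
      ∫⁻ w in ball z R, (ball z R).piecewise (fun w => ‖f w‖ₑ) 0 w :=
    setLIntegral_congr_fun measurableSet_ball fun w hw =>
      (Set.piecewise_eq_of_mem _ (fun w => ‖f w‖ₑ) 0 hw).symm
  rw [mul_comm, ← setLIntegral_const, hball,
    setLIntegral_ball_eq_lintegral_circleMap measurable_const,
    setLIntegral_ball_eq_lintegral_circleMap hmeas]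
  refine setLIntegral_mono' measurableSet_Ioo fun r hr => mul_le_mul_right ?_ _
  have hsub : closedBall z |r| ⊆ ball z R :=
    closedBall_subset_ball (by simpa [abs_of_pos hr.1] using hr.2)
  have hpiece (θ : ℝ) : (ball z R).piecewise (fun w => ‖f w‖ₑ) 0 (circleMap z r θ) =
      ‖f (circleMap z r θ)‖ₑ :=
    Set.piecewise_eq_of_mem _ _ _ (hsub (sphere_subset_closedBall (circleMap_mem_sphere' z r θ)))
  simp only [hpiece]
  exact lintegral_enorm_center_le_lintegral_circleMap
    (hf.mono (closure_ball_subset_closedBall.trans hsub)).diffContOnCl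

theorem laverage_rpow_le {α : Type*} [MeasurableSpace α] {μ : Measure α} [IsFiniteMeasure μ]
    {g : α → ℝ≥0∞} (hg : AEMeasurable g μ) {p : ℝ} (hp : 1 ≤ p) :
    (⨍⁻ x, g x ∂μ) ^ p ≤ ⨍⁻ x, g x ^ p ∂μ := by
  have hp0 : 0 < p := one_pos.trans_le hp
  rcases eq_zero_or_neZero μ with rfl | _
  · simp [hp0]
  have h := eLpNorm_le_eLpNorm_of_exponent_le (p := 1) (q := ENNReal.ofReal p) (by simpa using hp)
    (hg.smul_measure (μ Set.univ)⁻¹).aestronglyMeasurable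
  rw [eLpNorm_one_eq_lintegral_enorm, eLpNorm_eq_lintegral_rpow_enorm_toReal (by simpa using hp0)
    ENNReal.ofReal_ne_top, ENNReal.toReal_ofReal hp0.le, one_div] at h
  simpa only [laverage, enorm_eq_self] using (ENNReal.le_rpow_inv_iff hp0).1 h

theorem volume_ball_mul_enorm_rpow_le {p : ℝ} (hp : 1 ≤ p) (hf : DifferentiableOn ℂ f (ball z R)) :
    volume (ball z R) * ‖f z‖ₑ ^ p ≤ ∫⁻ w in ball z R, ‖f w‖ₑ ^ p := by
  rcases le_or_gt R 0 with hR | hR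
  · simp [ball_eq_empty.2 hR]
  have : IsFiniteMeasure (volume.restrict (ball z R)) :=
    isFiniteMeasure_restrict.2 measure_ball_lt_top.ne
  have hvol : volume (ball z R) ≠ 0 := (measure_ball_pos volume z hR).ne'
  have hmean := volume_ball_mul_enorm_le hf
  rw [mul_comm, ← ENNReal.le_div_iff_mul_le (.inl hvol) (.inl measure_ball_lt_top.ne),
    ← setLAverage_eq] at hmean ⊢
  exact (ENNReal.rpow_le_rpow hmean (by positivity)).trans (laverage_rpow_le
    (hf.continuousOn.aestronglyMeasurable measurableSet_ball).enorm hp)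

end MeanValue

section BergmanGrowth

open Metric
open scoped Real

theorem im_mem_Icc_of_mem_ball {z w : ℂ} (hw : w ∈ ball z (z.im / 2)) :
    w.im ∈ Set.Icc (z.im / 2) (3 / 2 * z.im) := by
  have h : |w.im - z.im| ≤ z.im / 2 :=
    (Complex.abs_im_le_norm (w - z)).trans (mem_ball_iff_norm.1 hw).le
  constructor <;> linarith [abs_le.1 h]

theorem min_rpow_mul_rpow_le {α β x y : ℝ} (hα : 0 < α) (hy : 0 < y)
    (hx : x ∈ Set.Icc (α * y) (β * y)) (b : ℝ) : min (α ^ b) (β ^ b) * y ^ b ≤ x ^ b := by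
  have hβ : 0 < β := hα.trans_le (le_of_mul_le_mul_right (hx.1.trans hx.2) hy)
  have hx0 : 0 < x := (mul_pos hα hy).trans_le hx.1
  rcases le_total 0 b with hb | hb
  · calc min (α ^ b) (β ^ b) * y ^ b ≤ α ^ b * y ^ b := by gcongr; exact min_le_left _ _
      _ = (α * y) ^ b := (Real.mul_rpow hα.le hy.le).symm
      _ ≤ x ^ b := Real.rpow_le_rpow (by positivity) hx.1 hb
  · calc min (α ^ b) (β ^ b) * y ^ b ≤ β ^ b * y ^ b := by gcongr; exact min_le_right _ _
      _ = (β * y) ^ b := (Real.mul_rpow hβ.le hy.le).symm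
      _ ≤ x ^ b := Real.rpow_le_rpow_of_nonpos hx0 hx.2 hb

theorem volume_ball_mul_enorm_rpow_le_bergmanNorm_rpow {p : ℝ} (hp : 1 ≤ p) (a : ℝ) {f : ℂ → ℂ}
    (hf : DifferentiableOn ℂ f upperHalf) {z : ℂ} (hz : z ∈ upperHalf) :
    volume (ball z (z.im / 2)) * ‖f z‖ₑ ^ p *
        ENNReal.ofReal (min (2⁻¹ ^ (a - 1)) ((3 / 2) ^ (a - 1)) * z.im ^ (a - 1)) ≤
      bergmanNorm p a f ^ p := by
  have hsub : ball z (z.im / 2) ⊆ upperHalf := fun w hw =>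
    (half_pos hz).trans_le (im_mem_Icc_of_mem_ball hw).1
  rw [bergmanNorm, one_div, ENNReal.rpow_inv_rpow (by positivity)]
  refine (mul_le_mul_left (volume_ball_mul_enorm_rpow_le hp (hf.mono hsub)) _).trans ?_
  rw [← lintegral_mul_const' _ _ ENNReal.ofReal_ne_top]
  refine le_trans ?_ (lintegral_mono_set hsub)
  refine setLIntegral_mono' measurableSet_ball fun w hw => ?_
  rw [enorm_eq_nnnorm]
  gcongr
  have hw' := im_mem_Icc_of_mem_ball hw
  rw [div_eq_inv_mul] at hw'
  exact min_rpow_mul_rpow_le (by positivity) hz hw' _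

theorem exists_norm_le_mul_im_rpow {p a : ℝ} (hp : 1 ≤ p) {f : ℂ → ℂ}
    (hf : DifferentiableOn ℂ f upperHalf) (hb : bergmanNorm p a f < ⊤) :
    ∃ C : ℝ, ∀ z ∈ upperHalf, ‖f z‖ ≤ C * z.im ^ (-((a + 1) / p)) := by
  have hp0 : 0 < p := one_pos.trans_le hp
  let N := (bergmanNorm p a f).toReal
  let k : ℝ := min (2⁻¹ ^ (a - 1)) ((3 / 2) ^ (a - 1))
  have hk : 0 < k := lt_min (by positivity) (by positivity)
  refine ⟨(4 / (π * k) * N ^ p) ^ p⁻¹, fun z hz => ?_⟩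
  have hy : 0 < z.im := hz
  have hle : π * (z.im / 2) ^ 2 * ‖f z‖ ^ p * (k * z.im ^ (a - 1)) ≤ N ^ p := by
    have h := ENNReal.toReal_mono (ENNReal.rpow_ne_top_of_nonneg hp0.le hb.ne)
      (volume_ball_mul_enorm_rpow_le_bergmanNorm_rpow hp a hf hz)
    rw [ENNReal.toReal_mul, ENNReal.toReal_mul, ← ENNReal.toReal_rpow, ← ENNReal.toReal_rpow,
      toReal_enorm, Complex.volume_ball, ENNReal.toReal_ofReal (by positivity)] at h
    simpa [N, k, ENNReal.toReal_ofReal (half_pos hy).le, mul_comm π] using h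
  have hpow : z.im ^ 2 * z.im ^ (a - 1) * z.im ^ (-(a + 1)) = 1 := by
    rw [← Real.rpow_natCast, ← Real.rpow_add hy, ← Real.rpow_add hy,
      show ((2 : ℕ) : ℝ) + (a - 1) + -(a + 1) = 0 by push_cast; ring, Real.rpow_zero]
  have hnorm : ‖f z‖ ^ p ≤ 4 / (π * k) * N ^ p * z.im ^ (-(a + 1)) := calc
    ‖f z‖ ^ p = 4 / (π * k) * (π * (z.im / 2) ^ 2 * ‖f z‖ ^ p * (k * z.im ^ (a - 1))) *
        z.im ^ (-(a + 1)) := by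
      field_simp
      linear_combination (-4 * ‖f z‖ ^ p) * hpow
    _ ≤ _ := by gcongr
  rw [← neg_div, div_eq_mul_inv (-(a + 1)), Real.rpow_mul hy.le,
    ← Real.mul_rpow (by positivity) (by positivity)]
  exact (Real.le_rpow_inv_iff_of_pos (norm_nonneg _) (by positivity) hp0).2 hnorm

end BergmanGrowth

/-- For `l` outside the closure of the range of `k̂_{a,p}`, there is a
measurable `ψ` with `∫₀^∞ |ψ(t)| t^{(a+1)/p −1} dt < ∞` such that for every holomorphic `f`
on `𝕌` with finite weighted Bergman norm, `(1/l)(g + ℋ_ψ g) = f` where `g = l f − ℋ_φ f`,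
and `l h − ℋ_φ h = f` where `h = (1/l)(f + ℋ_ψ f)`, at every point of `𝕌`. -/
theorem stmt12 (p a : ℝ) (hp : 1 ≤ p) (ha : 0 < a) (φ : ℝ → ℂ) (hφm : Measurable φ)
    (hφ : IntegrableOn (fun t => ‖φ t‖ * t ^ ((a + 1) / p - 1)) (Set.Ioi (0 : ℝ)))
    (l : ℂ) (hl : l ∉ closure (Set.range (khat φ ((a + 1) / p)))) :
    ∃ ψ : ℝ → ℂ, Measurable ψ ∧
      IntegrableOn (fun t => ‖ψ t‖ * t ^ ((a + 1) / p - 1)) (Set.Ioi (0 : ℝ)) ∧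
      ∀ f : ℂ → ℂ, DifferentiableOn ℂ f upperHalf → bergmanNorm p a f < ⊤ →
        (∀ z ∈ upperHalf,
          (1 / l) * ((fun w => l * f w - HphiHol φ f w) z +
            HphiHol ψ (fun w => l * f w - HphiHol φ f w) z) = f z) ∧
        (∀ z ∈ upperHalf,
          l * ((fun w => (1 / l) * (f w + HphiHol ψ f w)) z) -
            HphiHol φ (fun w => (1 / l) * (f w + HphiHol ψ f w)) z = f z) := by
  obtain ⟨ψ, hψm, hψ, hinv⟩ := stmt12_general hφm hφ hl
  refine ⟨ψ, hψm, hψ, fun f hf hfb => ?_⟩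
  obtain ⟨C, hC⟩ := exists_norm_le_mul_im_rpow hp hf hfb
  have hray {z : ℂ} (hz : z ∈ upperHalf) : IsBoundedMeasurable (logRay f ((a + 1) / p) z) :=
    isBoundedMeasurable_logRay _ hf.continuousOn hC hz
  exact ⟨fun z hz => (hinv f z (hray hz)).1, fun z hz => (hinv f z (hray hz)).2⟩
end

section
/- Let 1 ≤ p < ∞, a > 0, and let φ : (0,∞) → ℂ be measurable with ∫₀^∞ |φ(t)| t^{(a+1)/p − 1} dt < ∞. For ξ ∈ ℝ and ε ∈ (0,1), let f_{ε,ξ}(z) = (z+i)^{−(a+1)/p − ε + iξ} (principal branch) for z ∈ 𝕌. Then ‖f_{ε,ξ}‖_{A^p_a} < ∞ and, for each fixed ξ ∈ ℝ, lim_{ε→0⁺} ‖ℋ_φ f_{ε,ξ} − k̂_{a,p}(ξ)·f_{ε,ξ}‖_{A^p_a} / ‖f_{ε,ξ}‖_{A^p_a} = 0. -/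
open MeasureTheory Filter
open scoped ENNReal NNReal Topology

/-- The test function `f_{ε,ξ}(z) = (z+i)^{−c − ε + iξ}` (principal branch), `c = (a+1)/p`. -/
noncomputable def testFun (c ε ξ : ℝ) (z : ℂ) : ℂ :=
  (z + Complex.I) ^ (((-c - ε : ℝ) : ℂ) + Complex.I * (ξ : ℂ))

/-
Put `c = (a+1)/p`. The twisted dilations `δ_t f(z) = t^{−c+iξ} f(z/t)` are isometries of `A^p_a`,
and `ℋ_φ f − k̂(ξ) f` is the average of `δ_t f − f` against the finite complex measure
`φ(t) t^{c−1−iξ} dt`. By Jensen's inequality and dominated convergence it is therefore enough that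
`‖δ_t f_ε − f_ε‖ / ‖f_ε‖ → 0` for each fixed `t`. Now `δ_t f_ε(z) = t^ε (z + ti)^s` with
`s = −c − ε + iξ`, so by the mean value inequality `δ_t f_ε − t^ε f_ε` decays like
`|z + i|^{−c−1}` and has norm bounded uniformly in `ε`, whereas `‖f_ε‖ → ∞` because `|z + i|^{−cp}`
just fails to be integrable against `(Im z)^{a−1} dA`.
-/

section Integration

theorem lintegral_rpow_lintegral_le {α β : Type*} [MeasurableSpace α] [MeasurableSpace β]
    {μ : Measure α} {ν : Measure β} [SFinite μ] [SFinite ν] {p : ℝ} (hp : 1 ≤ p)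
    {F : α → β → ℝ≥0∞} (hF : Measurable (Function.uncurry F)) :
    ∫⁻ z, (∫⁻ t, F t z ∂μ) ^ p ∂ν ≤ μ Set.univ ^ (p - 1) * ∫⁻ t, ∫⁻ z, F t z ^ p ∂ν ∂μ := by
  have hp0 : 0 < p := by linarith
  have jensen (z : β) : (∫⁻ t, F t z ∂μ) ^ p ≤ μ Set.univ ^ (p - 1) * ∫⁻ t, F t z ^ p ∂μ := by
    have hFz : AEStronglyMeasurable (fun t => F t z) μ := by fun_prop
    have h := eLpNorm'_le_eLpNorm'_mul_rpow_measure_univ one_pos hp hFz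
    simp only [eLpNorm', enorm_eq_self, ENNReal.rpow_one, div_one] at h
    calc (∫⁻ t, F t z ∂μ) ^ p
        ≤ ((∫⁻ t, F t z ^ p ∂μ) ^ (1 / p) * μ Set.univ ^ (1 - 1 / p)) ^ p := by gcongr
      _ = μ Set.univ ^ (p - 1) * ∫⁻ t, F t z ^ p ∂μ := by
        rw [ENNReal.mul_rpow_of_nonneg _ _ hp0.le, ← ENNReal.rpow_mul, ← ENNReal.rpow_mul,
          one_div_mul_cancel hp0.ne', ENNReal.rpow_one, mul_comm, sub_mul,
          one_div_mul_cancel hp0.ne', one_mul]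
  have hmeas : Measurable fun z => ∫⁻ t, F t z ^ p ∂μ := (hF.pow_const p).lintegral_prod_left'
  calc ∫⁻ z, (∫⁻ t, F t z ∂μ) ^ p ∂ν
      ≤ ∫⁻ z, μ Set.univ ^ (p - 1) * ∫⁻ t, F t z ^ p ∂μ ∂ν := lintegral_mono jensen
    _ = μ Set.univ ^ (p - 1) * ∫⁻ t, ∫⁻ z, F t z ^ p ∂ν ∂μ := by
      rw [lintegral_const_mul _ hmeas, lintegral_lintegral_swap (by fun_prop)]

theorem enorm_integral_sub_integral_le {α E : Type*} [MeasurableSpace α] [NormedAddCommGroup E]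
    [NormedSpace ℝ E] {μ : Measure α} {u v : α → E} (hu : AEStronglyMeasurable u μ)
    (hv : Integrable v μ) :
    ‖∫ t, u t ∂μ - ∫ t, v t ∂μ‖ₑ ≤ ∫⁻ t, ‖u t - v t‖ₑ ∂μ := by
  by_cases huv : Integrable (fun t => u t - v t) μ
  · have hu' : Integrable u μ := (huv.add hv).congr (.of_forall fun t => sub_add_cancel (u t) (v t))
    rw [← integral_sub hu' hv]
    exact enorm_integral_le_lintegral_enorm _
  · have htop : ∫⁻ t, ‖u t - v t‖ₑ ∂μ = ⊤ := by
      contrapose! huv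
      exact ⟨hu.sub hv.1, lt_top_iff_ne_top.2 huv⟩
    exact htop ▸ le_top

theorem lintegral_comp_smul {E : Type*} [NormedAddCommGroup E] [NormedSpace ℝ E]
    [FiniteDimensional ℝ E] [MeasurableSpace E] [BorelSpace E] (μ : Measure E)
    [μ.IsAddHaarMeasure] (F : E → ℝ≥0∞) {r : ℝ} (hr : r ≠ 0) :
    ∫⁻ x, F (r • x) ∂μ = ENNReal.ofReal |(r ^ Module.finrank ℝ E)⁻¹| * ∫⁻ x, F x ∂μ := by
  have h := (Homeomorph.smulOfNeZero r hr).measurableEmbedding.lintegral_map (μ := μ) F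
  simp only [Homeomorph.smulOfNeZero_apply] at h
  rw [← h, ← smul_eq_mul, ← lintegral_smul_measure, ← Measure.map_addHaar_smul μ hr]

theorem lintegral_complex_eq_lintegral_lintegral {F : ℂ → ℝ≥0∞} (hF : Measurable F) :
    ∫⁻ z, F z = ∫⁻ y : ℝ, ∫⁻ x : ℝ, F (x + y * Complex.I) := by
  rw [← Complex.volume_preserving_equiv_real_prod.symm.lintegral_comp hF,
    Measure.volume_eq_prod, lintegral_prod_symm _ (by fun_prop)]
  simp [Complex.measurableEquivRealProd_symm_apply, Complex.mk_eq_add_mul_I]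

end Integration

section BetaIntegral

variable {a q : ℝ}

theorem integrableOn_Ioi_rpow_mul_one_add_rpow (ha : 0 < a) (haq : a < q) :
    IntegrableOn (fun y : ℝ => y ^ (a - 1) * (1 + y) ^ (-q)) (Set.Ioi 0) := by
  have hcont : ContinuousOn (fun y : ℝ => (1 + y) ^ (-q)) (Set.Ici 0) :=
    (by fun_prop : ContinuousOn (fun y : ℝ => 1 + y) _).rpow_const fun y hy =>
      .inl (by linarith [Set.mem_Ici.1 hy])
  have h_top : (fun y : ℝ => (1 + y) ^ (-q)) =O[atTop] (· ^ (-q)) := by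
    refine .of_bound' ?_
    filter_upwards [eventually_gt_atTop 0] with y hy
    rw [Real.norm_of_nonneg (by positivity), Real.norm_of_nonneg (by positivity)]
    exact Real.rpow_le_rpow_of_nonpos hy (by linarith) (by linarith)
  have h_bot : (fun y : ℝ => (1 + y) ^ (-q)) =O[𝓝[>] 0] (· ^ (-0 : ℝ)) := by
    simp only [neg_zero, Real.rpow_zero]
    exact ((hcont 0 Set.self_mem_Ici).mono Set.Ioi_subset_Ici_self).tendsto.isBigO_one ℝ
  exact mellin_convergent_of_isBigO_scalar
    ((hcont.mono Set.Ioi_subset_Ici_self).locallyIntegrableOn measurableSet_Ioi)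
    h_top haq h_bot ha

theorem ofReal_div_sub_le_lintegral_Ioi_rpow_mul_one_add_rpow (hq : 0 ≤ q) (haq : a < q) :
    ENNReal.ofReal (2 ^ (-q) / (q - a)) ≤
      ∫⁻ y in Set.Ioi (0 : ℝ), ENNReal.ofReal (y ^ (a - 1) * (1 + y) ^ (-q)) := by
  have hint : IntegrableOn (fun y : ℝ => 2 ^ (-q) * y ^ (a - 1 - q)) (Set.Ioi 1) :=
    (integrableOn_Ioi_rpow_of_lt (by linarith) one_pos).const_mul _
  have hpos : 0 ≤ᵐ[volume.restrict (Set.Ioi 1)] fun y : ℝ => 2 ^ (-q) * y ^ (a - 1 - q) := by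
    filter_upwards [ae_restrict_mem measurableSet_Ioi] with y (hy : 1 < y)
    positivity
  calc ENNReal.ofReal (2 ^ (-q) / (q - a))
      = ∫⁻ y in Set.Ioi (1 : ℝ), ENNReal.ofReal (2 ^ (-q) * y ^ (a - 1 - q)) := by
        rw [← ofReal_integral_eq_lintegral_ofReal hint hpos, integral_const_mul,
          integral_Ioi_rpow_of_lt (by linarith) one_pos, Real.one_rpow, neg_div, ← div_neg,
          mul_one_div]
        congr 2
        ring
    _ ≤ ∫⁻ y in Set.Ioi (1 : ℝ), ENNReal.ofReal (y ^ (a - 1) * (1 + y) ^ (-q)) := by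
        refine setLIntegral_mono' measurableSet_Ioi fun y (hy : 1 < y) => ?_
        have hy0 : 0 < y := by linarith
        rw [sub_eq_add_neg (a - 1), Real.rpow_add hy0, mul_left_comm,
          ← Real.mul_rpow zero_le_two hy0.le]
        gcongr ENNReal.ofReal (_ * ?_)
        exact Real.rpow_le_rpow_of_nonpos (by linarith) (by linarith) (by linarith)
    _ ≤ _ := lintegral_mono_set (Set.Ioi_subset_Ioi zero_le_one)

theorem tendsto_lintegral_Ioi_rpow_mul_one_add_rpow (ha : 0 ≤ a) :
    Tendsto (fun q : ℝ => ∫⁻ y in Set.Ioi (0 : ℝ), ENNReal.ofReal (y ^ (a - 1) * (1 + y) ^ (-q)))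
      (𝓝[>] a) (𝓝 ⊤) := by
  have hnum : Tendsto (fun q : ℝ => (2 : ℝ) ^ (-q)) (𝓝[>] a) (𝓝 (2 ^ (-a))) :=
    ((Real.continuous_const_rpow two_ne_zero).comp continuous_neg).continuousWithinAt
  have hden : Tendsto (fun q : ℝ => (q - a)⁻¹) (𝓝[>] a) atTop := by
    refine tendsto_inv_nhdsGT_zero.comp (tendsto_nhdsWithin_iff.2 ⟨?_, ?_⟩)
    · exact tendsto_nhdsWithin_of_tendsto_nhds ((continuous_sub_right a).tendsto' a 0 (sub_self a))
    · exact eventually_nhdsWithin_of_forall fun q hq => Set.mem_Ioi.2 (sub_pos.2 hq)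
  refine tendsto_nhds_top_mono
    (ENNReal.tendsto_ofReal_atTop.comp (hnum.pos_mul_atTop (by positivity) hden)) ?_
  exact eventually_nhdsWithin_of_forall fun q (hq : a < q) =>
    ofReal_div_sub_le_lintegral_Ioi_rpow_mul_one_add_rpow (ha.trans hq.le) hq

end BetaIntegral

section BergmanMeasure

/-- The weighted area measure `(Im z)^{a−1} dA(z)` on the upper half-plane, whose `L^p` norm is the
Bergman norm. It is a measure on all of `ℂ`, giving no mass to the complement of `𝕌`. -/
noncomputable def bergmanMeasure (a : ℝ) : Measure ℂ :=
  (volume.restrict upperHalf).withDensity fun z => ENNReal.ofReal (z.im ^ (a - 1))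

instance bergmanMeasure.instSFinite (a : ℝ) : SFinite (bergmanMeasure a) := by
  unfold bergmanMeasure
  infer_instance

variable {a : ℝ}

theorem measurableSet_upperHalf : MeasurableSet upperHalf :=
  measurableSet_lt measurable_const Complex.measurable_im

theorem ae_bergmanMeasure_mem_upperHalf (a : ℝ) : ∀ᵐ z ∂bergmanMeasure a, z ∈ upperHalf :=
  (withDensity_absolutelyContinuous _ _).ae_le (ae_restrict_mem measurableSet_upperHalf)

theorem lintegral_bergmanMeasure (a : ℝ) (F : ℂ → ℝ≥0∞) :
    ∫⁻ z, F z ∂bergmanMeasure a = ∫⁻ z in upperHalf, F z * ENNReal.ofReal (z.im ^ (a - 1)) := by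
  rw [bergmanMeasure, lintegral_withDensity_eq_lintegral_mul_non_measurable _ (by fun_prop)
    (.of_forall fun _ => ENNReal.ofReal_lt_top)]
  simp only [Pi.mul_apply, mul_comm]

theorem lintegral_bergmanMeasure_eq_lintegral_lintegral (a : ℝ) {F : ℂ → ℝ≥0∞}
    (hF : Measurable F) :
    ∫⁻ z, F z ∂bergmanMeasure a = ∫⁻ y in Set.Ioi (0 : ℝ),
      (∫⁻ x : ℝ, F (x + y * Complex.I)) * ENNReal.ofReal (y ^ (a - 1)) := by
  rw [lintegral_bergmanMeasure, ← lintegral_indicator measurableSet_upperHalf,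
    lintegral_complex_eq_lintegral_lintegral
      (Measurable.indicator (by fun_prop) measurableSet_upperHalf),
    ← lintegral_indicator measurableSet_Ioi]
  refine lintegral_congr fun y => ?_
  by_cases hy : 0 < y
  · simp [Set.indicator, upperHalf, hy, lintegral_mul_const' _ _ ENNReal.ofReal_ne_top]
  · simp [Set.indicator, upperHalf, hy]

theorem lintegral_bergmanMeasure_comp_div {t : ℝ} (ht : 0 < t) (F : ℂ → ℝ≥0∞) :
    ∫⁻ z, F (z / t) ∂bergmanMeasure a =
      ENNReal.ofReal (t ^ (a + 1)) * ∫⁻ z, F z ∂bergmanMeasure a := by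
  let G : ℂ → ℝ≥0∞ := upperHalf.indicator fun z => F z * ENNReal.ofReal (z.im ^ (a - 1))
  have hG (z : ℂ) : upperHalf.indicator (fun z => F (z / t) * ENNReal.ofReal (z.im ^ (a - 1))) z =
      ENNReal.ofReal (t ^ (a - 1)) * G (t⁻¹ • z) := by
    have hdiv : t⁻¹ • z = z / t := by rw [Complex.real_smul, Complex.ofReal_inv, inv_mul_eq_div]
    have him : (z / t).im = z.im / t := Complex.div_ofReal_im z t
    by_cases hz : 0 < z.im
    · have hz' : 0 < z.im / t := by positivity
      simp only [G, hdiv, Set.indicator, upperHalf, Set.mem_ofPred_eq, him, hz, hz', if_true]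
      rw [mul_left_comm, ← ENNReal.ofReal_mul (by positivity),
        ← Real.mul_rpow ht.le hz'.le, mul_div_cancel₀ _ ht.ne']
    · have hz' : ¬0 < z.im / t := by rwa [div_pos_iff_of_pos_right ht]
      simp [G, hdiv, Set.indicator, upperHalf, him, hz, hz']
  have hscale : t ^ (a - 1) * t ^ 2 = t ^ (a + 1) := by
    rw [← Real.rpow_natCast, ← Real.rpow_add ht]
    congr 1
    push_cast
    ring
  rw [lintegral_bergmanMeasure, lintegral_bergmanMeasure,
    ← lintegral_indicator measurableSet_upperHalf, ← lintegral_indicator measurableSet_upperHalf,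
    lintegral_congr hG, lintegral_const_mul' _ _ ENNReal.ofReal_ne_top,
    lintegral_comp_smul volume G (inv_ne_zero ht.ne'), Complex.finrank_real_complex, inv_pow,
    inv_inv, abs_of_pos (by positivity), ← mul_assoc, ← ENNReal.ofReal_mul (by positivity), hscale]

end BergmanMeasure

section BergmanNorm

variable {a p : ℝ} {f g : ℂ → ℂ}

theorem bergmanNorm_eq_eLpNorm (hp : 0 < p) (a : ℝ) (f : ℂ → ℂ) :
    bergmanNorm p a f = eLpNorm f (ENNReal.ofReal p) (bergmanMeasure a) := by
  rw [eLpNorm_eq_lintegral_rpow_enorm_toReal (by simpa using hp) ENNReal.ofReal_ne_top,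
    ENNReal.toReal_ofReal hp.le, lintegral_bergmanMeasure]
  rfl

theorem bergmanNorm_rpow (hp : 0 < p) (a : ℝ) (f : ℂ → ℂ) :
    bergmanNorm p a f ^ p = ∫⁻ z, ‖f z‖ₑ ^ p ∂bergmanMeasure a := by
  rw [bergmanNorm, ← ENNReal.rpow_mul, one_div_mul_cancel hp.ne', ENNReal.rpow_one,
    lintegral_bergmanMeasure]
  rfl

theorem bergmanNorm_le_mul (hp : 0 < p) {C : ℝ} (h : ∀ z ∈ upperHalf, ‖f z‖ ≤ C * ‖g z‖) :
    bergmanNorm p a f ≤ ENNReal.ofReal C * bergmanNorm p a g := by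
  rw [bergmanNorm_eq_eLpNorm hp, bergmanNorm_eq_eLpNorm hp]
  exact eLpNorm_le_mul_eLpNorm_of_ae_le_mul ((ae_bergmanMeasure_mem_upperHalf a).mono h) _

theorem bergmanNorm_add_le (hp : 1 ≤ p) (hf : Measurable f) (hg : Measurable g) :
    bergmanNorm p a (fun z => f z + g z) ≤ bergmanNorm p a f + bergmanNorm p a g := by
  simp only [bergmanNorm_eq_eLpNorm (one_pos.trans_le hp)]
  exact eLpNorm_add_le hf.aestronglyMeasurable hg.aestronglyMeasurable
    (ENNReal.one_le_ofReal.2 hp)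

theorem bergmanNorm_sub_le (hp : 1 ≤ p) (hf : Measurable f) (hg : Measurable g) :
    bergmanNorm p a (fun z => f z - g z) ≤ bergmanNorm p a f + bergmanNorm p a g := by
  simp only [bergmanNorm_eq_eLpNorm (one_pos.trans_le hp)]
  exact eLpNorm_sub_le hf.aestronglyMeasurable hg.aestronglyMeasurable
    (ENNReal.one_le_ofReal.2 hp)

end BergmanNorm

section TwistedDilation

variable {a p c ξ t : ℝ} {f : ℂ → ℂ}

/-- The twisted dilation `f ↦ t^{−c+iξ} f(·/t)`. For `c = (a+1)/p` it is an isometry of `A^p_a`,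
and `ℋ_φ` is a superposition over `t` of these isometries. -/
noncomputable def twistedDilation (c ξ t : ℝ) (f : ℂ → ℂ) (z : ℂ) : ℂ :=
  (t : ℂ) ^ (-(c : ℂ) + Complex.I * ξ) * f (z / t)

theorem measurable_uncurry_twistedDilation (c ξ : ℝ) (hf : Measurable f) :
    Measurable (Function.uncurry fun t => twistedDilation c ξ t f) := by
  unfold Function.uncurry twistedDilation
  fun_prop

theorem bergmanNorm_twistedDilation (hp : 0 < p) (hc : c * p = a + 1) (ht : 0 < t) (f : ℂ → ℂ) :
    bergmanNorm p a (twistedDilation c ξ t f) = bergmanNorm p a f := by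
  have hpow (z : ℂ) : ‖twistedDilation c ξ t f z‖ₑ ^ p =
      ENNReal.ofReal (t ^ (-(a + 1))) * ‖f (z / t)‖ₑ ^ p := by
    have hnorm : ‖(t : ℂ) ^ (-(c : ℂ) + Complex.I * ξ)‖ = t ^ (-c) := by
      simp [Complex.norm_cpow_eq_rpow_re_of_pos ht]
    rw [twistedDilation, enorm_mul, ENNReal.mul_rpow_of_nonneg _ _ hp.le, ← ofReal_norm, hnorm,
      ENNReal.ofReal_rpow_of_nonneg (by positivity) hp.le, ← Real.rpow_mul ht.le, neg_mul, hc]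
  refine ENNReal.rpow_left_injective hp.ne' ?_
  simp only [bergmanNorm_rpow hp, hpow]
  rw [lintegral_const_mul' _ _ ENNReal.ofReal_ne_top,
    lintegral_bergmanMeasure_comp_div ht fun z => ‖f z‖ₑ ^ p, ← mul_assoc,
    ← ENNReal.ofReal_mul (by positivity), ← Real.rpow_add ht, neg_add_cancel, Real.rpow_zero,
    ENNReal.ofReal_one, one_mul]

theorem measurable_bergmanNorm_twistedDilation_sub (p a c ξ : ℝ) (hf : Measurable f) :
    Measurable fun t => bergmanNorm p a fun z => twistedDilation c ξ t f z - f z := by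
  have hsub : Measurable (Function.uncurry fun t z => twistedDilation c ξ t f z - f z) :=
    (measurable_uncurry_twistedDilation c ξ hf).sub (hf.comp measurable_snd)
  have hint : Measurable (Function.uncurry fun (t : ℝ) (z : ℂ) =>
      (‖twistedDilation c ξ t f z - f z‖₊ : ℝ≥0∞) ^ p * ENNReal.ofReal (z.im ^ (a - 1))) :=
    (hsub.nnnorm.coe_nnreal_ennreal.pow_const p).mul (by fun_prop)
  exact hint.lintegral_prod_right'.pow_const (1 / p)

theorem bergmanNorm_twistedDilation_sub_le (hp : 1 ≤ p) (hc : c * p = a + 1) (ht : 0 < t)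
    (hf : Measurable f) :
    bergmanNorm p a (fun z => twistedDilation c ξ t f z - f z) ≤ 2 * bergmanNorm p a f := by
  have hδf : Measurable (twistedDilation c ξ t f) :=
    (measurable_uncurry_twistedDilation c ξ hf).comp measurable_prodMk_left
  calc bergmanNorm p a (fun z => twistedDilation c ξ t f z - f z)
      ≤ bergmanNorm p a (twistedDilation c ξ t f) + bergmanNorm p a f :=
        bergmanNorm_sub_le hp hδf hf
    _ = 2 * bergmanNorm p a f := by
      rw [bergmanNorm_twistedDilation (one_pos.trans_le hp) hc ht, two_mul]

end TwistedDilation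

section HausdorffOperator

variable {a p c ξ : ℝ} {φ : ℝ → ℂ}

/-- The integrand `φ(t) t^{c−1−iξ}` of `k̂`, which is also the weight of the twisted dilations
`twistedDilation c ξ t` in `ℋ_φ`. -/
noncomputable def mellinKernel (φ : ℝ → ℂ) (c ξ t : ℝ) : ℂ :=
  φ t * (t : ℂ) ^ ((c : ℂ) - 1 - Complex.I * ξ)

/-- The measure `|φ(t)| t^{c−1} dt` on `(0,∞)`, whose density is the modulus of
`mellinKernel φ c ξ` for every `ξ`. -/
noncomputable def kernelMeasure (φ : ℝ → ℂ) (c : ℝ) : Measure ℝ :=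
  (volume.restrict (Set.Ioi 0)).withDensity fun t => ENNReal.ofReal (‖φ t‖ * t ^ (c - 1))

theorem isFiniteMeasure_kernelMeasure
    (hφ : IntegrableOn (fun t => ‖φ t‖ * t ^ (c - 1)) (Set.Ioi 0)) :
    IsFiniteMeasure (kernelMeasure φ c) :=
  isFiniteMeasure_withDensity_ofReal hφ.2

theorem ae_kernelMeasure_pos (φ : ℝ → ℂ) (c : ℝ) : ∀ᵐ t ∂kernelMeasure φ c, 0 < t :=
  (withDensity_absolutelyContinuous _ _).ae_le (ae_restrict_mem measurableSet_Ioi)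

theorem measurable_mellinKernel (hφm : Measurable φ) (c ξ : ℝ) :
    Measurable (mellinKernel φ c ξ) := by
  unfold mellinKernel
  fun_prop

theorem norm_mellinKernel (φ : ℝ → ℂ) (c ξ : ℝ) {t : ℝ} (ht : 0 < t) :
    ‖mellinKernel φ c ξ t‖ = ‖φ t‖ * t ^ (c - 1) := by
  simp [mellinKernel, Complex.norm_cpow_eq_rpow_re_of_pos ht]

theorem integrableOn_mellinKernel (hφm : Measurable φ)
    (hφ : IntegrableOn (fun t => ‖φ t‖ * t ^ (c - 1)) (Set.Ioi 0)) (ξ : ℝ) :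
    IntegrableOn (mellinKernel φ c ξ) (Set.Ioi 0) :=
  hφ.mono' (measurable_mellinKernel hφm c ξ).aestronglyMeasurable
    ((ae_restrict_mem measurableSet_Ioi).mono fun _ ht => (norm_mellinKernel φ c ξ ht).le)

theorem lintegral_kernelMeasure (hφm : Measurable φ) (c ξ : ℝ) (F : ℝ → ℝ≥0∞) :
    ∫⁻ t, F t ∂kernelMeasure φ c = ∫⁻ t in Set.Ioi 0, ‖mellinKernel φ c ξ t‖ₑ * F t := by
  rw [kernelMeasure, lintegral_withDensity_eq_lintegral_mul_non_measurable _ (by fun_prop)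
    (.of_forall fun _ => ENNReal.ofReal_lt_top)]
  refine setLIntegral_congr_fun measurableSet_Ioi fun t ht => ?_
  rw [Pi.mul_apply, ← norm_mellinKernel φ c ξ ht, ofReal_norm]

theorem HphiHol_eq_integral_twistedDilation (φ : ℝ → ℂ) (c ξ : ℝ) (f : ℂ → ℂ) (z : ℂ) :
    HphiHol φ f z = ∫ t in Set.Ioi 0, mellinKernel φ c ξ t * twistedDilation c ξ t f z := by
  refine setIntegral_congr_fun measurableSet_Ioi fun t (ht : 0 < t) => ?_
  have ht' : (t : ℂ) ≠ 0 := Complex.ofReal_ne_zero.2 ht.ne'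
  have hexp : (c : ℂ) - 1 - Complex.I * ξ + (-(c : ℂ) + Complex.I * ξ) = -1 := by ring
  simp only [mellinKernel, twistedDilation]
  rw [mul_assoc, ← mul_assoc (_ ^ _), ← Complex.cpow_add _ _ ht', hexp, Complex.cpow_neg_one]
  field_simp

theorem enorm_HphiHol_sub_khat_mul_le (hφm : Measurable φ)
    (hφ : IntegrableOn (fun t => ‖φ t‖ * t ^ (c - 1)) (Set.Ioi 0)) (ξ : ℝ) {f : ℂ → ℂ}
    (hf : Measurable f) (z : ℂ) :
    ‖HphiHol φ f z - khat φ c ξ * f z‖ₑ ≤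
      ∫⁻ t, ‖twistedDilation c ξ t f z - f z‖ₑ ∂kernelMeasure φ c := by
  have hδf : Measurable fun t => twistedDilation c ξ t f z :=
    (measurable_uncurry_twistedDilation c ξ hf).comp measurable_prodMk_right
  have hk : khat φ c ξ * f z = ∫ t in Set.Ioi 0, mellinKernel φ c ξ t * f z :=
    (integral_mul_const _ _).symm
  rw [HphiHol_eq_integral_twistedDilation φ c ξ, hk, lintegral_kernelMeasure hφm c ξ]
  simp only [← enorm_mul, mul_sub]
  exact enorm_integral_sub_integral_le
    ((measurable_mellinKernel hφm c ξ).mul hδf).aestronglyMeasurable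
    ((integrableOn_mellinKernel hφm hφ ξ).mul_const _)

theorem bergmanNorm_HphiHol_sub_khat_mul_rpow_le (hp : 1 ≤ p) (a : ℝ) (hφm : Measurable φ)
    (hφ : IntegrableOn (fun t => ‖φ t‖ * t ^ (c - 1)) (Set.Ioi 0)) (ξ : ℝ) {f : ℂ → ℂ}
    (hf : Measurable f) :
    bergmanNorm p a (fun z => HphiHol φ f z - khat φ c ξ * f z) ^ p ≤
      kernelMeasure φ c Set.univ ^ (p - 1) *
        ∫⁻ t, bergmanNorm p a (fun z => twistedDilation c ξ t f z - f z) ^ p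
          ∂kernelMeasure φ c := by
  have := isFiniteMeasure_kernelMeasure hφ
  simp only [bergmanNorm_rpow (one_pos.trans_le hp)]
  calc ∫⁻ z, ‖HphiHol φ f z - khat φ c ξ * f z‖ₑ ^ p ∂bergmanMeasure a
      ≤ ∫⁻ z, (∫⁻ t, ‖twistedDilation c ξ t f z - f z‖ₑ ∂kernelMeasure φ c) ^ p
          ∂bergmanMeasure a := by
        gcongr with z
        exact enorm_HphiHol_sub_khat_mul_le hφm hφ ξ hf z
    _ ≤ _ := lintegral_rpow_lintegral_le hp
        ((measurable_uncurry_twistedDilation c ξ hf).sub (hf.comp measurable_snd)).enorm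

variable {ι : Type*} {l : Filter ι} [l.IsCountablyGenerated] {f : ι → ℂ → ℂ}

theorem tendsto_lintegral_bergmanNorm_twistedDilation_sub_div_rpow (hp : 1 ≤ p)
    (hc : c * p = a + 1) (hφ : IntegrableOn (fun t => ‖φ t‖ * t ^ (c - 1)) (Set.Ioi 0))
    (hf : ∀ i, Measurable (f i))
    (hlim : ∀ t > 0, Tendsto (fun i =>
      bergmanNorm p a (fun z => twistedDilation c ξ t (f i) z - f i z) / bergmanNorm p a (f i))
      l (𝓝 0)) :
    Tendsto (fun i => ∫⁻ t, (bergmanNorm p a (fun z => twistedDilation c ξ t (f i) z - f i z) /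
      bergmanNorm p a (f i)) ^ p ∂kernelMeasure φ c) l (𝓝 0) := by
  have hp0 : 0 < p := one_pos.trans_le hp
  have := isFiniteMeasure_kernelMeasure hφ
  rw [← lintegral_zero (μ := kernelMeasure φ c)]
  refine tendsto_lintegral_filter_of_dominated_convergence (fun _ => 2 ^ p)
    (.of_forall fun i => ?_) (.of_forall fun i => ?_) ?_ ?_
  · exact ((measurable_bergmanNorm_twistedDilation_sub p a c ξ (hf i)).div_const _).pow_const p
  · filter_upwards [ae_kernelMeasure_pos φ c] with t ht
    gcongr
    exact ENNReal.div_le_of_le_mul (bergmanNorm_twistedDilation_sub_le hp hc ht (hf i))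
  · rw [lintegral_const]
    finiteness
  · filter_upwards [ae_kernelMeasure_pos φ c] with t ht
    simpa only [ENNReal.zero_rpow_of_pos hp0] using (hlim t ht).ennrpow_const p

theorem tendsto_bergmanNorm_HphiHol_sub_khat_mul_div (hp : 1 ≤ p) (hc : c * p = a + 1)
    (hφm : Measurable φ) (hφ : IntegrableOn (fun t => ‖φ t‖ * t ^ (c - 1)) (Set.Ioi 0))
    (hf : ∀ i, Measurable (f i))
    (hlim : ∀ t > 0, Tendsto (fun i =>
      bergmanNorm p a (fun z => twistedDilation c ξ t (f i) z - f i z) / bergmanNorm p a (f i))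
      l (𝓝 0)) :
    Tendsto (fun i => bergmanNorm p a (fun z => HphiHol φ (f i) z - khat φ c ξ * f i z) /
      bergmanNorm p a (f i)) l (𝓝 0) := by
  have hp0 : 0 < p := one_pos.trans_le hp
  have := isFiniteMeasure_kernelMeasure hφ
  have hM : kernelMeasure φ c Set.univ ^ (p - 1) ≠ ⊤ :=
    ENNReal.rpow_ne_top_of_nonneg (sub_nonneg.2 hp) (measure_ne_top _ _)
  have hbound := ENNReal.Tendsto.const_mul (a := kernelMeasure φ c Set.univ ^ (p - 1))
    (tendsto_lintegral_bergmanNorm_twistedDilation_sub_div_rpow hp hc hφ hf hlim) (.inr hM)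
  rw [mul_zero] at hbound
  have hpow : Tendsto (fun i => (bergmanNorm p a (fun z => HphiHol φ (f i) z - khat φ c ξ * f i z) /
      bergmanNorm p a (f i)) ^ p) l (𝓝 0) := by
    refine tendsto_of_tendsto_of_tendsto_of_le_of_le tendsto_const_nhds hbound
      (fun _ => zero_le) fun i => ?_
    have hmeas := (measurable_bergmanNorm_twistedDilation_sub p a c ξ (hf i)).pow_const p
    simp only [ENNReal.div_rpow_of_nonneg _ _ hp0.le, div_eq_mul_inv (_ ^ p)]
    rw [lintegral_mul_const _ hmeas, ← mul_assoc]
    gcongr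
    exact bergmanNorm_HphiHol_sub_khat_mul_rpow_le hp a hφm hφ ξ (hf i)
  simpa [← ENNReal.rpow_mul, mul_inv_cancel₀ hp0.ne', hp0] using hpow.ennrpow_const p⁻¹

end HausdorffOperator

section ComplexPower

theorem ofReal_mul_cpow {t : ℝ} (ht : 0 < t) {w : ℂ} (hw : w ≠ 0) (s : ℂ) :
    ((t : ℂ) * w) ^ s = (t : ℂ) ^ s * w ^ s := by
  have ht' : (t : ℂ) ≠ 0 := Complex.ofReal_ne_zero.2 ht.ne'
  rw [Complex.cpow_def_of_ne_zero (mul_ne_zero ht' hw), Complex.cpow_def_of_ne_zero ht',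
    Complex.cpow_def_of_ne_zero hw, Complex.log_ofReal_mul ht hw, Complex.ofReal_log ht.le,
    add_mul, Complex.exp_add]

theorem abs_arg_mul_le (w : ℂ) (y : ℝ) : |w.arg * y| ≤ Real.pi * |y| := by
  rw [abs_mul]
  gcongr
  exact Complex.abs_arg_le_pi w

theorem norm_cpow_le_exp_pi_mul (w s : ℂ) :
    ‖w ^ s‖ ≤ Real.exp (Real.pi * |s.im|) * ‖w‖ ^ s.re := by
  refine (Complex.norm_cpow_le w s).trans ?_
  rw [div_eq_inv_mul, ← Real.exp_neg]
  gcongr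
  exact (neg_le_abs _).trans (abs_arg_mul_le w s.im)

theorem rpow_re_le_exp_pi_mul {w : ℂ} (hw : w ≠ 0) (s : ℂ) :
    ‖w‖ ^ s.re ≤ Real.exp (Real.pi * |s.im|) * ‖w ^ s‖ := by
  have h : ‖w‖ ^ s.re = Real.exp (w.arg * s.im) * ‖w ^ s‖ := by
    rw [Complex.norm_cpow_of_ne_zero hw, mul_div_cancel₀ _ (Real.exp_pos _).ne']
  rw [h]
  gcongr ?_ * _
  refine Real.exp_le_exp.2 ?_
  exact (le_abs_self _).trans (abs_arg_mul_le w s.im)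

theorem mul_norm_add_I_le {m x : ℝ} (hm : 0 ≤ m) (hm1 : m ≤ 1) (hmx : m ≤ x) {z : ℂ}
    (hz : 0 ≤ z.im) : m * ‖z + Complex.I‖ ≤ ‖z + x * Complex.I‖ := by
  rw [← abs_of_nonneg hm, ← Real.norm_eq_abs, ← Complex.norm_real, ← norm_mul,
    ← sq_le_sq₀ (norm_nonneg _) (norm_nonneg _), Complex.sq_norm, Complex.sq_norm,
    Complex.normSq_apply, Complex.normSq_apply]
  have hre : m * z.re * (m * z.re) ≤ z.re * z.re := by
    nlinarith [mul_self_nonneg z.re, mul_nonneg hm (sub_nonneg.2 hm1)]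
  have him : m * (z.im + 1) ≤ z.im + x := by nlinarith
  have him' : m * (z.im + 1) * (m * (z.im + 1)) ≤ (z.im + x) * (z.im + x) :=
    mul_self_le_mul_self (by positivity) him
  simpa using add_le_add hre him'

theorem norm_add_mul_I_cpow_sub_le {s z : ℂ} (hs : s.re ≤ 1) (hz : 0 ≤ z.im) {m t : ℝ}
    (hm : 0 < m) (hm1 : m ≤ 1) (hmt : m ≤ t) :
    ‖(z + t * Complex.I) ^ s - (z + Complex.I) ^ s‖ ≤
      ‖s‖ * (Real.exp (Real.pi * |s.im|) * (m * ‖z + Complex.I‖) ^ (s.re - 1)) * |t - 1| := by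
  have h_deriv (x : ℝ) (hx : x ∈ Set.Ici m) :
      HasDerivWithinAt (fun x : ℝ => (z + x * Complex.I) ^ s)
        (s * (z + x * Complex.I) ^ (s - 1) * Complex.I) (Set.Ici m) x := by
    have him : 0 < (z + x * Complex.I).im := by
      simpa using add_pos_of_nonneg_of_pos hz (hm.trans_le hx)
    have hlin : HasDerivAt (fun x : ℝ => z + x * Complex.I) Complex.I x := by
      simpa using (Complex.ofRealCLM.hasDerivAt.mul_const Complex.I).const_add z
    have hpow := (hasDerivAt_id (z + x * Complex.I)).cpow_const (c := s) (.inr him.ne')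
    simpa only [id_eq, mul_one, Function.comp_def] using (hpow.comp x hlin).hasDerivWithinAt
  have h_norm_pos : 0 < ‖z + Complex.I‖ := norm_pos_iff.2 fun h => by
    have := congrArg Complex.im h
    simp only [Complex.add_im, Complex.I_im, Complex.zero_im] at this
    linarith
  have h_bound (x : ℝ) (hx : x ∈ Set.Ici m) :
      ‖s * (z + x * Complex.I) ^ (s - 1) * Complex.I‖ ≤
        ‖s‖ * (Real.exp (Real.pi * |s.im|) * (m * ‖z + Complex.I‖) ^ (s.re - 1)) := by
    rw [norm_mul, norm_mul, Complex.norm_I, mul_one]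
    gcongr
    refine (norm_cpow_le_exp_pi_mul _ _).trans ?_
    simp only [Complex.sub_im, Complex.sub_re, Complex.one_im, Complex.one_re, sub_zero]
    gcongr _ * ?_
    exact Real.rpow_le_rpow_of_nonpos (by positivity) (mul_norm_add_I_le hm.le hm1 hx hz)
      (by linarith)
  simpa using (convex_Ici m).norm_image_sub_le_of_norm_hasDerivWithin_le h_deriv h_bound
    (Set.mem_Ici.2 hm1) (Set.mem_Ici.2 hmt)

end ComplexPower

section RadialIntegral

variable {a b : ℝ}

theorem norm_ofReal_add_I_rpow (x b : ℝ) :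
    ‖(x : ℂ) + Complex.I‖ ^ (-b) = (1 + ‖x‖ ^ 2) ^ (-b / 2) := by
  have hsq : ‖(x : ℂ) + Complex.I‖ ^ 2 = 1 + ‖x‖ ^ 2 := by
    rw [Complex.sq_norm, Complex.normSq_apply]
    simp [add_comm, sq]
  rw [← hsq, ← Real.rpow_natCast, ← Real.rpow_mul (norm_nonneg _)]
  congr 1
  push_cast
  ring

theorem lintegral_norm_ofReal_add_I_rpow_lt_top (hb : 1 < b) :
    ∫⁻ x : ℝ, ENNReal.ofReal (‖(x : ℂ) + Complex.I‖ ^ (-b)) < ⊤ := by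
  simp only [norm_ofReal_add_I_rpow]
  exact (integrable_rpow_neg_one_add_norm_sq (by simpa using hb)).lintegral_lt_top

theorem lintegral_norm_ofReal_add_I_rpow_ne_zero (b : ℝ) :
    ∫⁻ x : ℝ, ENNReal.ofReal (‖(x : ℂ) + Complex.I‖ ^ (-b)) ≠ 0 := by
  have hpos (x : ℝ) : 0 < (1 + ‖x‖ ^ 2) ^ (-b / 2) := by positivity
  have hsupp : (Function.support fun x : ℝ => ENNReal.ofReal (‖(x : ℂ) + Complex.I‖ ^ (-b))) =
      Set.univ :=
    Set.eq_univ_of_forall fun x => by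
      simpa only [Function.mem_support, ne_eq, ENNReal.ofReal_eq_zero, not_le,
        norm_ofReal_add_I_rpow] using hpos x
  rw [← pos_iff_ne_zero, lintegral_pos_iff_support (by fun_prop), hsupp, Real.volume_univ]
  exact ENNReal.zero_lt_top

theorem antitone_lintegral_norm_ofReal_add_I_rpow :
    Antitone fun b : ℝ => ∫⁻ x : ℝ, ENNReal.ofReal (‖(x : ℂ) + Complex.I‖ ^ (-b)) := by
  intro b b' hbb'
  refine lintegral_mono fun x => ENNReal.ofReal_le_ofReal ?_
  simp only [norm_ofReal_add_I_rpow]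
  gcongr
  exact le_add_of_nonneg_right (sq_nonneg _)

theorem lintegral_norm_ofReal_add_mul_I_rpow {h : ℝ} (hh : 0 < h) (b : ℝ) :
    ∫⁻ x : ℝ, ENNReal.ofReal (‖(x : ℂ) + h * Complex.I‖ ^ (-b)) =
      ENNReal.ofReal (h ^ (1 - b)) *
        ∫⁻ x : ℝ, ENNReal.ofReal (‖(x : ℂ) + Complex.I‖ ^ (-b)) := by
  let F : ℝ → ℝ≥0∞ := fun x => ENNReal.ofReal (‖(x : ℂ) + Complex.I‖ ^ (-b))
  have hF (x : ℝ) : ENNReal.ofReal (‖(x : ℂ) + h * Complex.I‖ ^ (-b)) =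
      ENNReal.ofReal (h ^ (-b)) * F (h⁻¹ • x) := by
    have hfac : (x : ℂ) + h * Complex.I = h * (((h⁻¹ • x : ℝ) : ℂ) + Complex.I) := by
      have : (h : ℂ) ≠ 0 := Complex.ofReal_ne_zero.2 hh.ne'
      push_cast [smul_eq_mul]
      field_simp
    rw [hfac, norm_mul, Complex.norm_of_nonneg hh.le, Real.mul_rpow hh.le (norm_nonneg _),
      ENNReal.ofReal_mul (by positivity)]
  simp only [hF]
  rw [lintegral_const_mul' _ _ ENNReal.ofReal_ne_top,
    lintegral_comp_smul volume F (inv_ne_zero hh.ne'), Module.finrank_self, pow_one, inv_inv,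
    abs_of_pos hh, ← mul_assoc, ← ENNReal.ofReal_mul (by positivity), ← Real.rpow_add_one hh.ne',
    neg_add_eq_sub]

theorem lintegral_bergmanMeasure_norm_add_I_rpow (a b : ℝ) :
    ∫⁻ z, ENNReal.ofReal (‖z + Complex.I‖ ^ (-b)) ∂bergmanMeasure a =
      (∫⁻ x : ℝ, ENNReal.ofReal (‖(x : ℂ) + Complex.I‖ ^ (-b))) *
        ∫⁻ y in Set.Ioi (0 : ℝ), ENNReal.ofReal (y ^ (a - 1) * (1 + y) ^ (-(b - 1))) := by
  rw [lintegral_bergmanMeasure_eq_lintegral_lintegral a (by fun_prop),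
    ← lintegral_const_mul _ (by fun_prop)]
  refine setLIntegral_congr_fun measurableSet_Ioi fun y (hy : 0 < y) => ?_
  have hline (x : ℝ) : (x : ℂ) + y * Complex.I + Complex.I = x + (1 + y : ℝ) * Complex.I := by
    push_cast
    ring
  simp only [hline]
  rw [lintegral_norm_ofReal_add_mul_I_rpow (by positivity), ENNReal.ofReal_mul (by positivity),
    neg_sub]
  ring

theorem lintegral_bergmanMeasure_norm_add_I_rpow_lt_top (ha : 0 < a) (hb : a + 1 < b) :
    ∫⁻ z, ENNReal.ofReal (‖z + Complex.I‖ ^ (-b)) ∂bergmanMeasure a < ⊤ := by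
  rw [lintegral_bergmanMeasure_norm_add_I_rpow]
  exact ENNReal.mul_lt_top (lintegral_norm_ofReal_add_I_rpow_lt_top (by linarith))
    (integrableOn_Ioi_rpow_mul_one_add_rpow ha (by linarith)).lintegral_lt_top

theorem tendsto_lintegral_bergmanMeasure_norm_add_I_rpow (ha : 0 ≤ a) :
    Tendsto (fun b : ℝ => ∫⁻ z, ENNReal.ofReal (‖z + Complex.I‖ ^ (-b)) ∂bergmanMeasure a)
      (𝓝[>] (a + 1)) (𝓝 ⊤) := by
  have hshift : Tendsto (fun b : ℝ => b - 1) (𝓝[>] (a + 1)) (𝓝[>] a) := by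
    refine tendsto_nhdsWithin_iff.2 ⟨?_, ?_⟩
    · exact tendsto_nhdsWithin_of_tendsto_nhds
        ((continuous_sub_right 1).tendsto' _ _ (add_sub_cancel_right a 1))
    · exact eventually_nhdsWithin_of_forall fun b hb => Set.mem_Ioi.2 (lt_sub_iff_add_lt.2 hb)
  have hlim := ENNReal.Tendsto.const_mul
    (a := ∫⁻ x : ℝ, ENNReal.ofReal (‖(x : ℂ) + Complex.I‖ ^ (-(a + 2))))
    ((tendsto_lintegral_Ioi_rpow_mul_one_add_rpow ha).comp hshift) (.inl ENNReal.top_ne_zero)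
  rw [ENNReal.mul_top (lintegral_norm_ofReal_add_I_rpow_ne_zero _)] at hlim
  refine tendsto_nhds_top_mono hlim ?_
  filter_upwards [Ioo_mem_nhdsGT (show a + 1 < a + 2 by linarith)] with b hb
  rw [lintegral_bergmanMeasure_norm_add_I_rpow]
  exact mul_le_mul_left (antitone_lintegral_norm_ofReal_add_I_rpow hb.2.le) _

end RadialIntegral

section TestFunction

variable {a p c ε t : ℝ} {z : ℂ}

theorem measurable_testFun (c ε ξ : ℝ) : Measurable (testFun c ε ξ) := by
  unfold testFun
  fun_prop

theorem one_le_norm_add_I (hz : z ∈ upperHalf) : 1 ≤ ‖z + Complex.I‖ := by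
  have hz : 0 < z.im := hz
  calc (1 : ℝ) ≤ (z + Complex.I).im := by simpa using hz.le
    _ ≤ ‖z + Complex.I‖ := Complex.im_le_norm _

theorem norm_testFun_zero (c ε : ℝ) (z : ℂ) : ‖testFun c ε 0 z‖ = ‖z + Complex.I‖ ^ (-c - ε) := by
  rw [testFun, Complex.ofReal_zero, mul_zero, add_zero, Complex.norm_cpow_real]

theorem norm_testFun_le (c ε ξ : ℝ) (z : ℂ) :
    ‖testFun c ε ξ z‖ ≤ Real.exp (Real.pi * |ξ|) * ‖testFun c ε 0 z‖ := by
  rw [norm_testFun_zero, testFun]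
  simpa using norm_cpow_le_exp_pi_mul (z + Complex.I) (((-c - ε : ℝ) : ℂ) + Complex.I * ξ)

theorem norm_testFun_zero_le (c ε ξ : ℝ) (hz : z ∈ upperHalf) :
    ‖testFun c ε 0 z‖ ≤ Real.exp (Real.pi * |ξ|) * ‖testFun c ε ξ z‖ := by
  have hz' : z + Complex.I ≠ 0 := norm_pos_iff.1 (one_pos.trans_le (one_le_norm_add_I hz))
  rw [norm_testFun_zero, testFun]
  simpa using rpow_re_le_exp_pi_mul hz' (((-c - ε : ℝ) : ℂ) + Complex.I * ξ)

theorem bergmanNorm_testFun_zero_rpow (hp : 0 < p) (hc : c * p = a + 1) (ε : ℝ) :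
    bergmanNorm p a (testFun c ε 0) ^ p =
      ∫⁻ z, ENNReal.ofReal (‖z + Complex.I‖ ^ (-(a + 1 + ε * p))) ∂bergmanMeasure a := by
  rw [bergmanNorm_rpow hp]
  refine lintegral_congr fun z => ?_
  rw [← ofReal_norm, norm_testFun_zero, ENNReal.ofReal_rpow_of_nonneg (by positivity) hp.le,
    ← Real.rpow_mul (norm_nonneg _), ← hc]
  ring_nf

theorem bergmanNorm_testFun_lt_top (hp : 0 < p) (ha : 0 < a) (hc : c * p = a + 1) (hε : 0 < ε)
    (ξ : ℝ) : bergmanNorm p a (testFun c ε ξ) < ⊤ := by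
  have hzero : bergmanNorm p a (testFun c ε 0) < ⊤ := by
    rw [← ENNReal.rpow_lt_top_iff_of_pos hp, bergmanNorm_testFun_zero_rpow hp hc]
    exact lintegral_bergmanMeasure_norm_add_I_rpow_lt_top ha (lt_add_of_pos_right _ (by positivity))
  exact (bergmanNorm_le_mul hp fun z _ => norm_testFun_le c ε ξ z).trans_lt
    (ENNReal.mul_lt_top ENNReal.ofReal_lt_top hzero)

theorem tendsto_bergmanNorm_testFun (hp : 0 < p) (ha : 0 ≤ a) (hc : c * p = a + 1) (ξ : ℝ) :
    Tendsto (fun ε => bergmanNorm p a (testFun c ε ξ)) (𝓝[>] 0) (𝓝 ⊤) := by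
  have hexp : Tendsto (fun ε : ℝ => a + 1 + ε * p) (𝓝[>] 0) (𝓝[>] (a + 1)) := by
    refine tendsto_nhdsWithin_iff.2 ⟨?_, ?_⟩
    · have : Continuous fun ε : ℝ => a + 1 + ε * p := by fun_prop
      exact tendsto_nhdsWithin_of_tendsto_nhds (this.tendsto' _ _ (by simp))
    · exact eventually_nhdsWithin_of_forall fun ε hε =>
        Set.mem_Ioi.2 (lt_add_of_pos_right _ (mul_pos hε hp))
  have hzero : Tendsto (fun ε => bergmanNorm p a (testFun c ε 0)) (𝓝[>] 0) (𝓝 ⊤) := by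
    have h := ((tendsto_lintegral_bergmanMeasure_norm_add_I_rpow ha).comp hexp).ennrpow_const p⁻¹
    simpa only [Function.comp_def, ← bergmanNorm_testFun_zero_rpow hp hc, ← ENNReal.rpow_mul,
      mul_inv_cancel₀ hp.ne', ENNReal.rpow_one, ENNReal.top_rpow_of_pos (inv_pos.2 hp)] using h
  have hdiv := ENNReal.Tendsto.div_const (b := ENNReal.ofReal (Real.exp (Real.pi * |ξ|))) hzero
    (.inl ENNReal.top_ne_zero)
  rw [ENNReal.top_div_of_ne_top ENNReal.ofReal_ne_top] at hdiv
  exact tendsto_nhds_top_mono hdiv (.of_forall fun ε => ENNReal.div_le_of_le_mul'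
    (bergmanNorm_le_mul hp fun z hz => norm_testFun_zero_le c ε ξ hz))

theorem twistedDilation_testFun (c ε ξ : ℝ) (ht : 0 < t) (hz : z ∈ upperHalf) :
    twistedDilation c ξ t (testFun c ε ξ) z =
      ((t ^ ε : ℝ) : ℂ) * (z + t * Complex.I) ^ (((-c - ε : ℝ) : ℂ) + Complex.I * ξ) := by
  have ht' : (t : ℂ) ≠ 0 := Complex.ofReal_ne_zero.2 ht.ne'
  have hdiv : z / t ∈ upperHalf := by
    change 0 < (z / t).im
    rw [Complex.div_ofReal_im]
    exact div_pos hz ht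
  have hne : z / t + Complex.I ≠ 0 := norm_pos_iff.1 (one_pos.trans_le (one_le_norm_add_I hdiv))
  have hfac : z + t * Complex.I = t * (z / t + Complex.I) := by field_simp
  rw [twistedDilation, testFun, hfac, ofReal_mul_cpow ht hne, ← mul_assoc,
    Complex.ofReal_cpow ht.le, ← Complex.cpow_add _ _ ht']
  congr 2
  push_cast
  ring

theorem exists_norm_twistedDilation_testFun_sub_rpow_mul_le (hc : 0 ≤ c) (ξ : ℝ) (ht : 0 < t) :
    ∃ K : ℝ, ∀ ε ∈ Set.Ioo (0 : ℝ) 1, ∀ z ∈ upperHalf,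
      ‖twistedDilation c ξ t (testFun c ε ξ) z - ((t ^ ε : ℝ) : ℂ) * testFun c ε ξ z‖ ≤
        K * ‖testFun c 1 0 z‖ := by
  let m := min t 1
  have hm : 0 < m := lt_min ht one_pos
  have hm1 : m ≤ 1 := min_le_right t 1
  refine ⟨max t 1 * ((c + 1 + |ξ|) * (Real.exp (Real.pi * |ξ|) * m ^ (-c - 2)) * |t - 1|),
    fun ε ⟨hε0, hε1⟩ z hz => ?_⟩
  let s : ℂ := ((-c - ε : ℝ) : ℂ) + Complex.I * ξ
  have hs_re : s.re = -c - ε := by simp [s]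
  have hs_im : s.im = ξ := by simp [s]
  have hs_norm : ‖s‖ ≤ c + 1 + |ξ| := by
    calc ‖s‖ ≤ |s.re| + |s.im| := Complex.norm_le_abs_re_add_abs_im s
      _ = c + ε + |ξ| := by rw [hs_re, hs_im, abs_of_nonpos (by linarith)]; ring
      _ ≤ c + 1 + |ξ| := by gcongr
  have ht_rpow : t ^ ε ≤ max t 1 := by
    calc t ^ ε ≤ max t 1 ^ ε := by gcongr; exact le_max_left t 1
      _ ≤ max t 1 := Real.rpow_le_self_of_one_le (le_max_right t 1) hε1.le
  have hpow : (m * ‖z + Complex.I‖) ^ (s.re - 1) ≤ m ^ (-c - 2) * ‖testFun c 1 0 z‖ := by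
    rw [norm_testFun_zero, Real.mul_rpow hm.le (norm_nonneg _), hs_re]
    gcongr ?_ * ?_
    · exact Real.rpow_le_rpow_of_exponent_ge hm hm1 (by linarith)
    · exact Real.rpow_le_rpow_of_exponent_le (one_le_norm_add_I hz) (by linarith)
  rw [twistedDilation_testFun c ε ξ ht hz, ← mul_sub, norm_mul,
    Complex.norm_of_nonneg (by positivity), testFun]
  calc t ^ ε * ‖(z + t * Complex.I) ^ s - (z + Complex.I) ^ s‖
      ≤ max t 1 * (‖s‖ * (Real.exp (Real.pi * |s.im|) * (m * ‖z + Complex.I‖) ^ (s.re - 1)) *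
          |t - 1|) := by
        gcongr
        exact norm_add_mul_I_cpow_sub_le (by linarith) (le_of_lt hz) hm hm1 (min_le_left t 1)
    _ ≤ max t 1 * ((c + 1 + |ξ|) * (Real.exp (Real.pi * |ξ|) *
          (m ^ (-c - 2) * ‖testFun c 1 0 z‖)) * |t - 1|) := by
        rw [hs_im]
        gcongr
    _ = _ := by ring

theorem exists_bergmanNorm_twistedDilation_testFun_sub_le (hp : 1 ≤ p) (a : ℝ) (hc : 0 ≤ c) (ξ : ℝ)
    (ht : 0 < t) :
    ∃ K : ℝ, ∀ ε ∈ Set.Ioo (0 : ℝ) 1,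
      bergmanNorm p a (fun z => twistedDilation c ξ t (testFun c ε ξ) z - testFun c ε ξ z) ≤
        ENNReal.ofReal K * bergmanNorm p a (testFun c 1 0) +
          ENNReal.ofReal |t ^ ε - 1| * bergmanNorm p a (testFun c ε ξ) := by
  have hp0 : 0 < p := one_pos.trans_le hp
  obtain ⟨K, hK⟩ := exists_norm_twistedDilation_testFun_sub_rpow_mul_le hc ξ ht
  refine ⟨K, fun ε hε => ?_⟩
  let f := testFun c ε ξ
  let r : ℂ := ((t ^ ε : ℝ) : ℂ)
  have hf : Measurable f := measurable_testFun c ε ξ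
  have hδf : Measurable (twistedDilation c ξ t f) :=
    (measurable_uncurry_twistedDilation c ξ hf).comp measurable_prodMk_left
  have hr (z : ℂ) : ‖(r - 1) * f z‖ ≤ |t ^ ε - 1| * ‖f z‖ := by
    rw [norm_mul, ← Complex.ofReal_one, ← Complex.ofReal_sub, Complex.norm_real, Real.norm_eq_abs]
  calc bergmanNorm p a (fun z => twistedDilation c ξ t f z - f z)
      = bergmanNorm p a fun z => (twistedDilation c ξ t f z - r * f z) + (r - 1) * f z := by
        congr with z
        ring
    _ ≤ bergmanNorm p a (fun z => twistedDilation c ξ t f z - r * f z) +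
          bergmanNorm p a fun z => (r - 1) * f z :=
        bergmanNorm_add_le hp (hδf.sub (hf.const_mul r)) (hf.const_mul (r - 1))
    _ ≤ _ := add_le_add (bergmanNorm_le_mul hp0 (hK ε hε)) (bergmanNorm_le_mul hp0 fun z _ => hr z)

theorem tendsto_bergmanNorm_twistedDilation_testFun_sub_div (hp : 1 ≤ p) (ha : 0 < a)
    (hc : c * p = a + 1) (ξ : ℝ) (ht : 0 < t) :
    Tendsto (fun ε =>
      bergmanNorm p a (fun z => twistedDilation c ξ t (testFun c ε ξ) z - testFun c ε ξ z) /
        bergmanNorm p a (testFun c ε ξ)) (𝓝[Set.Ioo 0 1] 0) (𝓝 0) := by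
  have hp0 : 0 < p := one_pos.trans_le hp
  have hc0 : 0 ≤ c := nonneg_of_mul_nonneg_left (hc ▸ by positivity) hp0
  obtain ⟨K, hK⟩ := exists_bergmanNorm_twistedDilation_testFun_sub_le hp a hc0 ξ ht
  have hC : ENNReal.ofReal K * bergmanNorm p a (testFun c 1 0) ≠ ⊤ :=
    ENNReal.mul_ne_top ENNReal.ofReal_ne_top (bergmanNorm_testFun_lt_top hp0 ha hc one_pos 0).ne
  have h_error : Tendsto (fun ε => ENNReal.ofReal K * bergmanNorm p a (testFun c 1 0) /
      bergmanNorm p a (testFun c ε ξ)) (𝓝[Set.Ioo 0 1] 0) (𝓝 0) := by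
    simpa only [ENNReal.div_top] using ENNReal.Tendsto.const_div
      ((tendsto_bergmanNorm_testFun hp0 ha.le hc ξ).mono_left
        (nhdsWithin_mono 0 Set.Ioo_subset_Ioi_self)) (.inr hC)
  have h_factor : Tendsto (fun ε : ℝ => ENNReal.ofReal |t ^ ε - 1|) (𝓝[Set.Ioo 0 1] 0) (𝓝 0) := by
    have : Continuous fun ε : ℝ => ENNReal.ofReal |t ^ ε - 1| :=
      ENNReal.continuous_ofReal.comp ((Real.continuous_const_rpow ht.ne').sub continuous_const).abs
    exact tendsto_nhdsWithin_of_tendsto_nhds (this.tendsto' 0 0 (by simp))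
  have hsum := h_error.add h_factor
  rw [add_zero] at hsum
  refine tendsto_of_tendsto_of_tendsto_of_le_of_le' tendsto_const_nhds hsum
    (.of_forall fun _ => zero_le) (eventually_nhdsWithin_of_forall fun ε hε => ?_)
  calc _ ≤ (ENNReal.ofReal K * bergmanNorm p a (testFun c 1 0) +
          ENNReal.ofReal |t ^ ε - 1| * bergmanNorm p a (testFun c ε ξ)) /
        bergmanNorm p a (testFun c ε ξ) := by
        gcongr
        exact hK ε hε
    _ ≤ _ := by
        rw [ENNReal.add_div]
        gcongr
        exact ENNReal.div_le_of_le_mul le_rfl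

end TestFunction

/-- Each `f_{ε,ξ}` has finite weighted Bergman norm and, for fixed `ξ`,
`‖ℋ_φ f_{ε,ξ} − k̂_{a,p}(ξ) f_{ε,ξ}‖_{A^p_a} / ‖f_{ε,ξ}‖_{A^p_a} → 0` as `ε → 0⁺` in
`(0,1)`. -/
theorem stmt13 (p a : ℝ) (hp : 1 ≤ p) (ha : 0 < a) (φ : ℝ → ℂ) (hφm : Measurable φ)
    (hφ : IntegrableOn (fun t => ‖φ t‖ * t ^ ((a + 1) / p - 1)) (Set.Ioi (0 : ℝ)))
    (ξ : ℝ) :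
    (∀ ε ∈ Set.Ioo (0 : ℝ) 1, bergmanNorm p a (testFun ((a + 1) / p) ε ξ) < ⊤) ∧
    Tendsto (fun ε : ℝ =>
        bergmanNorm p a (fun z => HphiHol φ (testFun ((a + 1) / p) ε ξ) z -
            khat φ ((a + 1) / p) ξ * testFun ((a + 1) / p) ε ξ z) /
          bergmanNorm p a (testFun ((a + 1) / p) ε ξ))
      (𝓝[Set.Ioo (0 : ℝ) 1] 0) (𝓝 (0 : ℝ≥0∞)) := by
  have hp0 : 0 < p := one_pos.trans_le hp
  have hc : (a + 1) / p * p = a + 1 := div_mul_cancel₀ _ hp0.ne'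
  exact ⟨fun ε hε => bergmanNorm_testFun_lt_top hp0 ha hc hε.1 ξ,
    tendsto_bergmanNorm_HphiHol_sub_khat_mul_div hp hc hφm hφ (fun ε => measurable_testFun _ ε ξ)
      fun t ht => tendsto_bergmanNorm_twistedDilation_testFun_sub_div hp ha hc ξ ht⟩
end

section
/- Let 1 ≤ p < ∞, a > 0, and let φ : (0,∞) → ℂ be measurable with ∫₀^∞ |φ(t)| t^{(a+1)/p − 1} dt < ∞. If C ≥ 0 is a constant such that ‖ℋ_φ f‖_{A^p_a} ≤ C ‖f‖_{A^p_a} for every holomorphic f on 𝕌 with ‖f‖_{A^p_a} < ∞, then sup_{ξ ∈ ℝ} |k̂_{a,p}(ξ)| ≤ C. -/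
open MeasureTheory
open scoped ENNReal NNReal

open Complex Filter Set Topology
open scoped Real

/-! In the coordinate `w = log z` the upper half-plane becomes the strip `0 < Im w < π`. For `s`
with `Re s = (a + 1) / p`, the lift `F w = e ^ (s * w) * f (e ^ w)` turns the Bergman norm into an
`L^p` norm whose weight depends only on `Im w`, and the Hausdorff operator into the average of the
real translates `F (w - log t)` against `t ^ (s - 1) * φ t dt`. Such an average acts on nearly
constant functions as multiplication by the Mellin transform of `φ` at `s`, which is `k̂ ξ` for
`s = (a + 1) / p - i ξ`. We test on the wide Gaussians `e ^ (-(ε * w) ^ 2)`: after rescaling `Re w`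
by `ε⁻¹` both sides of the norm inequality acquire the same factor `ε⁻¹`, and Fatou's lemma as
`ε → 0` leaves the bound on the Mellin transform.
-/

section ChangeOfVariables

theorem lintegral_image_eq_lintegral_enorm_deriv_sq_mul {f f' : ℂ → ℂ} {s : Set ℂ}
    (hs : MeasurableSet s) (hf' : ∀ w ∈ s, HasDerivWithinAt f (f' w) s w) (hf : InjOn f s)
    (g : ℂ → ℝ≥0∞) :
    ∫⁻ z in f '' s, g z = ∫⁻ w in s, ‖f' w‖ₑ ^ 2 * g (f w) := by
  rw [lintegral_image_eq_lintegral_abs_det_fderiv_mul volume hs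
    (fun w hw => (hf' w hw).hasFDerivWithinAt.restrictScalars ℝ) hf]
  refine lintegral_congr fun w => ?_
  have h_det : ((ContinuousLinearMap.toSpanSingleton ℂ (f' w)).restrictScalars ℝ).det
      = ‖f' w‖ ^ 2 := by
    simp [ContinuousLinearMap.det, LinearMap.det_restrictScalars, Algebra.norm_complex_eq,
      normSq_eq_norm_sq]
  rw [h_det, abs_of_nonneg (by positivity), ENNReal.ofReal_pow (norm_nonneg _), ofReal_norm]

/-- The strip `0 < Im w < π`, onto which the principal logarithm maps the upper half-plane. -/
def logStrip : Set ℂ := im ⁻¹' Ioo 0 π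

theorem measurableSet_logStrip : MeasurableSet logStrip :=
  measurable_im measurableSet_Ioo

theorem log_exp_of_mem_logStrip {w : ℂ} (hw : w ∈ logStrip) : log (exp w) = w :=
  log_exp ((neg_lt_zero.2 Real.pi_pos).trans hw.1) hw.2.le

theorem log_mem_logStrip {z : ℂ} (hz : z ∈ upperHalf) : log z ∈ logStrip := by
  have hz : 0 < z.im := hz
  rw [logStrip, mem_preimage, log_im]
  exact ⟨(arg_nonneg_iff.2 hz.le).lt_of_ne fun h => hz.ne' (arg_eq_zero_iff.1 h.symm).2,
    arg_lt_pi_iff.2 (.inr hz.ne')⟩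

theorem exp_mem_upperHalf {w : ℂ} (hw : w ∈ logStrip) : exp w ∈ upperHalf := by
  have : 0 < Real.sin w.im := Real.sin_pos_of_mem_Ioo hw
  rw [upperHalf, mem_ofPred_eq, exp_im]
  positivity

theorem ne_zero_of_mem_upperHalf {z : ℂ} (hz : z ∈ upperHalf) : z ≠ 0 := by
  rintro rfl
  exact lt_irrefl (0 : ℝ) hz

theorem exp_image_logStrip : exp '' logStrip = upperHalf :=
  Subset.antisymm (image_subset_iff.2 fun _ => exp_mem_upperHalf) fun z hz =>
    ⟨log z, log_mem_logStrip hz, exp_log (ne_zero_of_mem_upperHalf hz)⟩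

theorem lintegral_upperHalf_eq_lintegral_logStrip (g : ℂ → ℝ≥0∞) :
    ∫⁻ z in upperHalf, g z = ∫⁻ w in logStrip, ‖exp w‖ₑ ^ 2 * g (exp w) := by
  rw [← exp_image_logStrip]
  exact lintegral_image_eq_lintegral_enorm_deriv_sq_mul measurableSet_logStrip
    (fun w _ => (hasDerivAt_exp w).hasDerivWithinAt)
    (LeftInvOn.injOn fun _ => log_exp_of_mem_logStrip) g

/-- Stretching of the complex plane by the factor `r` in the real direction. -/
noncomputable def stretchRe (r : ℝ) : ℂ →L[ℝ] ℂ :=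
  LinearMap.toContinuousLinearMap (Matrix.toLin basisOneI basisOneI !![r, 0; 0, 1])

theorem det_stretchRe (r : ℝ) : (stretchRe r).det = r := by
  simp [stretchRe, ContinuousLinearMap.det]

@[simp]
theorem stretchRe_re (r : ℝ) (w : ℂ) : (stretchRe r w).re = r * w.re := by
  simp [stretchRe, Matrix.toLin_apply, mul_comm]

@[simp]
theorem stretchRe_im (r : ℝ) (w : ℂ) : (stretchRe r w).im = w.im := by
  simp [stretchRe, Matrix.toLin_apply]

theorem injective_stretchRe {r : ℝ} (hr : r ≠ 0) : Function.Injective (stretchRe r) :=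
  fun w w' h => Complex.ext (mul_left_cancel₀ hr (by simpa using congrArg re h))
    (by simpa using congrArg im h)

theorem stretchRe_image_logStrip {r : ℝ} (hr : r ≠ 0) : stretchRe r '' logStrip = logStrip := by
  refine Subset.antisymm (image_subset_iff.2 fun w hw => by simpa [logStrip] using hw) ?_
  refine fun w hw => ⟨stretchRe r⁻¹ w, by simpa [logStrip] using hw, ?_⟩
  apply Complex.ext <;> simp [hr]

theorem lintegral_logStrip_stretchRe {r : ℝ} (hr : 0 < r) (g : ℂ → ℝ≥0∞) :
    ∫⁻ w in logStrip, g w = ENNReal.ofReal r * ∫⁻ w in logStrip, g (stretchRe r w) := by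
  nth_rw 1 [← stretchRe_image_logStrip hr.ne']
  rw [lintegral_image_eq_lintegral_abs_det_fderiv_mul volume measurableSet_logStrip
    (fun w _ => (stretchRe r).hasFDerivWithinAt) (injective_stretchRe hr.ne').injOn,
    ← lintegral_const_mul' _ _ ENNReal.ofReal_ne_top]
  simp only [det_stretchRe, abs_of_pos hr]

end ChangeOfVariables

section StripMeasure

/-- The weight of the Bergman norm in the coordinate `w = log z`, as a function of `y = Im w`: the
power of the sine comes from `Im z = e ^ Re w * sin y`, and the exponential, with `b = p * s.im`,
compensates the modulus of the factor `e ^ (s * w)` in `stripLift`. -/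
noncomputable def stripWeight (b a y : ℝ) : ℝ :=
  Real.exp (b * y) * Real.sin y ^ (a - 1)

theorem stripWeight_pos (b a : ℝ) {y : ℝ} (hy : y ∈ Ioo 0 π) : 0 < stripWeight b a y :=
  mul_pos (Real.exp_pos _) (Real.rpow_pos_of_pos (Real.sin_pos_of_mem_Ioo hy) _)

theorem measurable_stripWeight (b a : ℝ) : Measurable (stripWeight b a) := by
  unfold stripWeight
  fun_prop

theorem sinc_pos {y : ℝ} (hy : y ∈ Ico 0 π) : 0 < Real.sinc y := by
  rcases hy.1.eq_or_lt with rfl | hy0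
  · simp
  · rw [Real.sinc_of_ne_zero hy0.ne']
    exact div_pos (Real.sin_pos_of_pos_of_lt_pi hy0 hy.2) hy0

theorem intervalIntegrable_sin_rpow {r : ℝ} (hr : -1 < r) :
    IntervalIntegrable (fun y => Real.sin y ^ r) volume 0 π := by
  have h_sinc (y : ℝ) (hy : y ∈ uIcc 0 (π / 2)) : 0 < Real.sinc y := by
    rw [uIcc_of_le (by positivity)] at hy
    exact sinc_pos ⟨hy.1, hy.2.trans_lt (half_lt_self Real.pi_pos)⟩
  have h_sinc_rpow : ContinuousOn (fun y => Real.sinc y ^ r) (uIcc 0 (π / 2)) :=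
    Real.continuous_sinc.continuousOn.rpow_const fun y hy => .inl (h_sinc y hy).ne'
  have h_left : IntervalIntegrable (fun y => Real.sin y ^ r) volume 0 (π / 2) := by
    refine ((intervalIntegral.intervalIntegrable_rpow' hr).mul_continuousOn h_sinc_rpow).congr ?_
    intro y hy
    have hy_pos : 0 < y := by simpa using (uIoc_of_le (by positivity : 0 ≤ π / 2) ▸ hy).1
    beta_reduce
    rw [← Real.mul_rpow hy_pos.le (h_sinc y (uIoc_subset_uIcc hy)).le,
      Real.sinc_of_ne_zero hy_pos.ne', mul_div_cancel₀ _ hy_pos.ne']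
  have h_right : IntervalIntegrable (fun y => Real.sin y ^ r) volume (π / 2) π := by
    simpa [sub_half] using (h_left.comp_sub_left π).symm
  exact h_left.trans h_right

theorem lintegral_stripWeight_ne_top (b : ℝ) {a : ℝ} (ha : 0 < a) :
    ∫⁻ y in Ioo 0 π, ENNReal.ofReal (stripWeight b a y) ≠ ⊤ := by
  have h_int : IntervalIntegrable (stripWeight b a) volume 0 π :=
    (intervalIntegrable_sin_rpow (by linarith)).continuousOn_mul (by fun_prop)
  rw [intervalIntegrable_iff_integrableOn_Ioo_of_le Real.pi_pos.le] at h_int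
  exact h_int.lintegral_lt_top.ne

theorem lintegral_stripWeight_ne_zero (b a : ℝ) :
    ∫⁻ y in Ioo 0 π, ENNReal.ofReal (stripWeight b a y) ≠ 0 := by
  have h_supp : Ioo 0 π ⊆ Function.support fun y => ENNReal.ofReal (stripWeight b a y) :=
    fun y hy => (ENNReal.ofReal_pos.2 (stripWeight_pos b a hy)).ne'
  refine ((setLIntegral_pos_iff (measurable_stripWeight b a).ennreal_ofReal).2 ?_).ne'
  rw [inter_eq_right.2 h_supp, Real.volume_Ioo]
  simp [Real.pi_pos]

/-- The measure on `logStrip` for which `stripLift s` identifies the Bergman norm on the upper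
half-plane with an `L^p` norm; here `b = p * s.im`. -/
noncomputable def stripMeasure (b a : ℝ) : Measure ℂ :=
  (volume.restrict logStrip).withDensity fun w => ENNReal.ofReal (stripWeight b a w.im)

variable (b a : ℝ)

theorem lintegral_stripMeasure (g : ℂ → ℝ≥0∞) :
    ∫⁻ w, g w ∂stripMeasure b a =
      ∫⁻ w in logStrip, ENNReal.ofReal (stripWeight b a w.im) * g w :=
  lintegral_withDensity_eq_lintegral_mul_non_measurable _
    ((measurable_stripWeight b a).comp measurable_im).ennreal_ofReal (by simp) g

theorem ae_stripMeasure_mem_logStrip : ∀ᵐ w ∂stripMeasure b a, w ∈ logStrip :=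
  (withDensity_absolutelyContinuous _ _).ae_le (ae_restrict_mem measurableSet_logStrip)

theorem lintegral_stripMeasure_stretchRe {r : ℝ} (hr : 0 < r) (g : ℂ → ℝ≥0∞) :
    ∫⁻ w, g w ∂stripMeasure b a =
      ENNReal.ofReal r * ∫⁻ w, g (stretchRe r w) ∂stripMeasure b a := by
  rw [lintegral_stripMeasure, lintegral_stripMeasure, lintegral_logStrip_stretchRe hr]
  simp only [stretchRe_im]

theorem lintegral_stripMeasure_comp_re {u : ℝ → ℝ≥0∞} (hu : Measurable u) :
    ∫⁻ w, u w.re ∂stripMeasure b a =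
      (∫⁻ x, u x) * ∫⁻ y in Ioo 0 π, ENNReal.ofReal (stripWeight b a y) := by
  have h_strip : logStrip = measurableEquivRealProd ⁻¹' (univ ×ˢ Ioo 0 π) := by
    ext w
    simp [logStrip]
  calc ∫⁻ w, u w.re ∂stripMeasure b a
      = ∫⁻ x in univ ×ˢ Ioo 0 π, ENNReal.ofReal (stripWeight b a x.2) * u x.1 := by
        rw [lintegral_stripMeasure, h_strip,
          ← volume_preserving_equiv_real_prod.setLIntegral_comp_preimage_emb
            measurableEquivRealProd.measurableEmbedding]
        rfl
    _ = _ := by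
        simp_rw [mul_comm (ENNReal.ofReal _)]
        rw [Measure.volume_eq_prod, ← Measure.prod_restrict, Measure.restrict_univ,
          lintegral_prod_mul hu.aemeasurable
            (measurable_stripWeight b a).ennreal_ofReal.aemeasurable]

end StripMeasure

section Transference

/-- The lift `w ↦ e ^ (s * w) * f (e ^ w)` of a function on the upper half-plane to `logStrip`. -/
noncomputable def stripLift (s : ℂ) (f : ℂ → ℂ) (w : ℂ) : ℂ :=
  exp (s * w) * f (exp w)

/-- The function on the upper half-plane whose lift `stripLift s` is a given function on
`logStrip`. -/
noncomputable def stripDescend (s : ℂ) (F : ℂ → ℂ) (z : ℂ) : ℂ :=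
  exp (-(s * log z)) * F (log z)

/-- The Hausdorff operator in the coordinate `w = log z`: a convolution by `log t`, weighted by
the integrand `t ^ (s - 1) * φ t` of the Mellin transform. -/
noncomputable def stripConv (φ : ℝ → ℂ) (s : ℂ) (F : ℂ → ℂ) (w : ℂ) : ℂ :=
  mellin (fun t => φ t * F (w - Real.log t)) s

theorem sub_ofReal_mem_logStrip {w : ℂ} (hw : w ∈ logStrip) (x : ℝ) : w - x ∈ logStrip := by
  simpa [logStrip] using hw

theorem stripLift_stripDescend (s : ℂ) (F : ℂ → ℂ) {w : ℂ} (hw : w ∈ logStrip) :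
    stripLift s (stripDescend s F) w = F w := by
  rw [stripLift, stripDescend, log_exp_of_mem_logStrip hw, ← mul_assoc, ← exp_add,
    add_neg_cancel, exp_zero, one_mul]

theorem differentiableOn_stripDescend (s : ℂ) {F : ℂ → ℂ} (hF : DifferentiableOn ℂ F logStrip) :
    DifferentiableOn ℂ (stripDescend s F) upperHalf := by
  have h_log : DifferentiableOn ℂ log upperHalf := fun z hz =>
    (differentiableAt_log (.inr (ne_of_gt hz))).differentiableWithinAt
  exact (h_log.const_mul s).neg.cexp.mul (hF.comp h_log fun _ => log_mem_logStrip)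

theorem exp_mul_sub_log (s w : ℂ) {t : ℝ} (ht : 0 < t) :
    exp (s * (w - Real.log t)) = exp (s * w) * (t : ℂ) ^ (-s) := by
  rw [cpow_def_of_ne_zero (ofReal_ne_zero.2 ht.ne'), ← ofReal_log ht.le, ← exp_add]
  ring_nf

theorem stripLift_HphiHol (φ : ℝ → ℂ) (s : ℂ) (f : ℂ → ℂ) (w : ℂ) :
    stripLift s (HphiHol φ f) w = stripConv φ s (stripLift s f) w := by
  rw [stripLift, HphiHol, ← integral_const_mul]
  refine setIntegral_congr_fun measurableSet_Ioi fun t (ht : 0 < t) => ?_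
  have ht0 : (t : ℂ) ≠ 0 := ofReal_ne_zero.2 ht.ne'
  have h_exp : exp (w - Real.log t) = exp w / t := by
    rw [exp_sub, ← ofReal_exp, Real.exp_log ht]
  simp only [stripLift, smul_eq_mul]
  rw [exp_mul_sub_log s w ht, h_exp, cpow_sub _ _ ht0, cpow_one, cpow_neg]
  have : (t : ℂ) ^ s ≠ 0 := by simp [cpow_eq_zero_iff, ht0]
  field_simp

theorem stripConv_congr (φ : ℝ → ℂ) (s : ℂ) {F G : ℂ → ℂ} (hFG : EqOn F G logStrip) {w : ℂ}
    (hw : w ∈ logStrip) : stripConv φ s F w = stripConv φ s G w := by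
  simp only [stripConv, hFG (sub_ofReal_mem_logStrip hw _)]

theorem enorm_stripLift_rpow {p a : ℝ} (hp : 0 < p) {s : ℂ} (hs : s.re = (a + 1) / p)
    (f : ℂ → ℂ) {w : ℂ} (hw : w ∈ logStrip) :
    ENNReal.ofReal (stripWeight (p * s.im) a w.im) * ‖stripLift s f w‖ₑ ^ p =
      ‖exp w‖ₑ ^ 2 * (‖f (exp w)‖ₑ ^ p * ENNReal.ofReal ((exp w).im ^ (a - 1))) := by
  have h_weight : stripWeight (p * s.im) a w.im * ‖exp (s * w)‖ ^ p =
      ‖exp w‖ ^ 2 * (exp w).im ^ (a - 1) := by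
    have h_sin : 0 < Real.sin w.im := Real.sin_pos_of_mem_Ioo hw
    rw [stripWeight, norm_exp, norm_exp, exp_im, Real.mul_rpow (Real.exp_pos _).le h_sin.le,
      mul_right_comm, ← mul_assoc, ← Real.exp_mul, ← Real.exp_mul, ← Real.exp_nat_mul,
      ← Real.exp_add, ← Real.exp_add, mul_re, hs]
    congr 2
    push_cast
    field_simp
    ring
  rw [stripLift, enorm_mul, ENNReal.mul_rpow_of_nonneg _ _ hp.le, ← mul_assoc,
    ← ofReal_norm (exp (s * w)), ENNReal.ofReal_rpow_of_nonneg (norm_nonneg _) hp.le,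
    ← ENNReal.ofReal_mul (stripWeight_pos _ _ hw).le, h_weight,
    ENNReal.ofReal_mul (by positivity), ENNReal.ofReal_pow (norm_nonneg _), ofReal_norm]
  ring

theorem bergmanNorm_rpow_s14 {p a : ℝ} (hp : 0 < p) {s : ℂ} (hs : s.re = (a + 1) / p)
    (f : ℂ → ℂ) :
    bergmanNorm p a f ^ p = ∫⁻ w, ‖stripLift s f w‖ₑ ^ p ∂stripMeasure (p * s.im) a := by
  rw [bergmanNorm, ← ENNReal.rpow_mul, one_div_mul_cancel hp.ne', ENNReal.rpow_one,
    lintegral_upperHalf_eq_lintegral_logStrip, lintegral_stripMeasure]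
  exact setLIntegral_congr_fun measurableSet_logStrip fun w hw =>
    (enorm_stripLift_rpow hp hs f hw).symm

/-- `K` bounds the Hausdorff operator on the Bergman space `A^p_a`. -/
def IsHausdorffBound (p a : ℝ) (φ : ℝ → ℂ) (K : ℝ≥0∞) : Prop :=
  ∀ f : ℂ → ℂ, DifferentiableOn ℂ f upperHalf → bergmanNorm p a f < ⊤ →
    bergmanNorm p a (HphiHol φ f) ≤ K * bergmanNorm p a f

theorem lintegral_stripConv_le {p a : ℝ} (hp : 0 < p) {s : ℂ} (hs : s.re = (a + 1) / p)
    {φ : ℝ → ℂ} {K : ℝ≥0∞} (hK : IsHausdorffBound p a φ K) {F : ℂ → ℂ}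
    (hF : DifferentiableOn ℂ F logStrip)
    (hF_fin : ∫⁻ w, ‖F w‖ₑ ^ p ∂stripMeasure (p * s.im) a < ⊤) :
    ∫⁻ w, ‖stripConv φ s F w‖ₑ ^ p ∂stripMeasure (p * s.im) a ≤
      K ^ p * ∫⁻ w, ‖F w‖ₑ ^ p ∂stripMeasure (p * s.im) a := by
  set f := stripDescend s F
  have h_lift : EqOn (stripLift s f) F logStrip := fun w hw => stripLift_stripDescend s F hw
  have h_norm : bergmanNorm p a f ^ p = ∫⁻ w, ‖F w‖ₑ ^ p ∂stripMeasure (p * s.im) a := by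
    rw [bergmanNorm_rpow_s14 hp hs]
    refine lintegral_congr_ae ?_
    filter_upwards [ae_stripMeasure_mem_logStrip _ _] with w hw
    rw [h_lift hw]
  have h_norm_H : bergmanNorm p a (HphiHol φ f) ^ p =
      ∫⁻ w, ‖stripConv φ s F w‖ₑ ^ p ∂stripMeasure (p * s.im) a := by
    rw [bergmanNorm_rpow_s14 hp hs]
    refine lintegral_congr_ae ?_
    filter_upwards [ae_stripMeasure_mem_logStrip _ _] with w hw
    rw [stripLift_HphiHol, stripConv_congr φ s h_lift hw]
  rw [← h_norm, ← h_norm_H, ← ENNReal.mul_rpow_of_nonneg _ _ hp.le]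
  rw [← h_norm, ENNReal.rpow_lt_top_iff_of_pos hp] at hF_fin
  exact ENNReal.rpow_le_rpow (hK f (differentiableOn_stripDescend s hF) hF_fin) hp.le

end Transference

section MellinTransform

variable {φ : ℝ → ℂ} {s : ℂ}

theorem aestronglyMeasurable_ofReal_cpow (s : ℂ) :
    AEStronglyMeasurable (fun t : ℝ => (t : ℂ) ^ s) (volume.restrict (Ioi 0)) := by
  have : Measurable fun t : ℝ => (t : ℂ) ^ s := by fun_prop
  exact this.aestronglyMeasurable

theorem aestronglyMeasurable_of_mellinConvergent (hφ : MellinConvergent φ s) :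
    AEStronglyMeasurable φ (volume.restrict (Ioi 0)) := by
  refine ((aestronglyMeasurable_ofReal_cpow (1 - s)).smul hφ.1).congr ?_
  filter_upwards [ae_restrict_mem measurableSet_Ioi] with t (ht : 0 < t)
  have ht0 : (t : ℂ) ≠ 0 := ofReal_ne_zero.2 ht.ne'
  rw [Pi.smul_apply', smul_smul, ← cpow_add _ _ ht0]
  simp

theorem mellinConvergent_ofReal {φ : ℝ → ℂ} {c : ℝ}
    (hφm : AEStronglyMeasurable φ (volume.restrict (Ioi 0)))
    (hφ : IntegrableOn (fun t => ‖φ t‖ * t ^ (c - 1)) (Ioi 0)) : MellinConvergent φ c := by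
  rw [MellinConvergent, mellin_convergent_iff_norm subset_rfl measurableSet_Ioi hφm]
  simpa only [ofReal_re, mul_comm] using hφ

theorem mellinConvergent_of_re_eq {s' : ℂ} (hφ : MellinConvergent φ s) (hs : s'.re = s.re) :
    MellinConvergent φ s' := by
  have hφ_meas := aestronglyMeasurable_of_mellinConvergent hφ
  unfold MellinConvergent at hφ ⊢
  rw [mellin_convergent_iff_norm subset_rfl measurableSet_Ioi hφ_meas] at hφ ⊢
  rwa [hs]

theorem tendsto_mellin_mul {ι : Type*} {l : Filter ι} [l.IsCountablyGenerated]
    (hφ : MellinConvergent φ s) {k : ι → ℝ → ℂ} {k₀ : ℝ → ℂ} {M : ℝ}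
    (hk_meas : ∀ᶠ i in l, AEStronglyMeasurable (k i) (volume.restrict (Ioi 0)))
    (hk_bound : ∀ᶠ i in l, ∀ t > 0, ‖k i t‖ ≤ M)
    (hk_lim : ∀ t > 0, Tendsto (k · t) l (𝓝 (k₀ t))) :
    Tendsto (fun i => mellin (fun t => φ t * k i t) s) l
      (𝓝 (mellin (fun t => φ t * k₀ t) s)) := by
  simp only [mellin, smul_eq_mul, ← mul_assoc]
  refine tendsto_integral_filter_of_dominated_convergence
    (fun t : ℝ => ‖(t : ℂ) ^ (s - 1) • φ t‖ * M) ?_ ?_ (hφ.norm.mul_const M) ?_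
  · filter_upwards [hk_meas] with i hi using hφ.1.mul hi
  · filter_upwards [hk_bound] with i hi
    filter_upwards [ae_restrict_mem measurableSet_Ioi] with t ht
    rw [norm_mul, smul_eq_mul]
    exact mul_le_mul_of_nonneg_left (hi t ht) (norm_nonneg _)
  · filter_upwards [ae_restrict_mem measurableSet_Ioi] with t ht using (hk_lim t ht).const_mul _

theorem measurable_stripConv (hφ : AEStronglyMeasurable φ (volume.restrict (Ioi 0))) (s : ℂ)
    {F : ℂ → ℂ} (hF : Measurable F) : Measurable (stripConv φ s F) := by
  obtain ⟨ψ, hψ_meas, hψ⟩ := hφ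
  have h_eq : stripConv φ s F = stripConv ψ s F := by
    funext w
    refine integral_congr_ae ?_
    filter_upwards [hψ] with t ht
    rw [ht]
  rw [h_eq]
  have hψ_meas := hψ_meas.measurable
  refine StronglyMeasurable.measurable (StronglyMeasurable.integral_prod_right
    (f := fun w (t : ℝ) => (t : ℂ) ^ (s - 1) • (ψ t * F (w - Real.log t)))
    (Measurable.stronglyMeasurable ?_))
  simp only [Function.uncurry_def]
  fun_prop

end MellinTransform

section Gaussian

/-- The Gaussian `w ↦ e ^ (-(ε * w) ^ 2)` of width `ε⁻¹`, the test function on `logStrip`. -/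
noncomputable def cgaussian (ε : ℝ) (w : ℂ) : ℂ :=
  exp (-(ε * w) ^ 2)

theorem differentiable_cgaussian (ε : ℝ) : Differentiable ℂ (cgaussian ε) := by
  unfold cgaussian
  fun_prop

theorem cgaussian_stretchRe_sub {ε : ℝ} (hε : ε ≠ 0) (w : ℂ) (x : ℝ) :
    cgaussian ε (stretchRe ε⁻¹ w - x) = exp (-(w.re + ε * (w.im * I - x)) ^ 2) := by
  have h_stretch : stretchRe ε⁻¹ w = (ε : ℂ)⁻¹ * w.re + w.im * I := by
    apply Complex.ext <;> simp
  have hε' : (ε : ℂ) ≠ 0 := ofReal_ne_zero.2 hε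
  rw [cgaussian, h_stretch]
  congr 3
  field_simp
  ring

theorem norm_exp_neg_sq (z : ℂ) : ‖exp (-z ^ 2)‖ = Real.exp (z.im ^ 2 - z.re ^ 2) := by
  rw [norm_exp, neg_re, pow_two, mul_re]
  ring_nf

theorem norm_cgaussian_stretchRe_sub {ε : ℝ} (hε : ε ≠ 0) (w : ℂ) (x : ℝ) :
    ‖cgaussian ε (stretchRe ε⁻¹ w - x)‖ =
      Real.exp ((ε * w.im) ^ 2 - (w.re - ε * x) ^ 2) := by
  rw [cgaussian_stretchRe_sub hε, norm_exp_neg_sq]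
  simp [sub_eq_add_neg]

theorem tendsto_stripConv_cgaussian {φ : ℝ → ℂ} {s : ℂ} (hφ : MellinConvergent φ s) (w : ℂ) :
    Tendsto (fun ε : ℝ => stripConv φ s (cgaussian ε) (stretchRe ε⁻¹ w)) (𝓝[>] 0)
      (𝓝 (mellin φ s * exp (-w.re ^ 2))) := by
  have h_const : mellin (fun t => φ t * exp (-w.re ^ 2)) s = mellin φ s * exp (-w.re ^ 2) := by
    simp only [mul_comm _ (exp (-(w.re : ℂ) ^ 2))]
    exact mellin_const_smul φ s (exp (-(w.re : ℂ) ^ 2))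
  rw [← h_const]
  refine tendsto_mellin_mul hφ (M := Real.exp (w.im ^ 2)) ?_ ?_ fun t _ => ?_
  · refine .of_forall fun ε => Measurable.aestronglyMeasurable ?_
    have := (differentiable_cgaussian ε).continuous.measurable
    fun_prop
  · filter_upwards [Ioc_mem_nhdsGT one_pos] with ε hε t _
    rw [norm_cgaussian_stretchRe_sub hε.1.ne', Real.exp_le_exp]
    nlinarith [sq_nonneg (w.re - ε * Real.log t),
      mul_le_of_le_one_left (sq_nonneg w.im) (pow_le_one₀ (n := 2) hε.1.le hε.2)]
  · have h_cont : Continuous fun ε : ℝ => exp (-(w.re + ε * (w.im * I - Real.log t)) ^ 2) := by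
      fun_prop
    have h_lim := (h_cont.tendsto 0).mono_left (nhdsWithin_le_nhds (s := Ioi 0))
    rw [ofReal_zero, zero_mul, add_zero] at h_lim
    refine h_lim.congr' ?_
    filter_upwards [self_mem_nhdsWithin] with ε (hε : 0 < ε)
    exact (cgaussian_stretchRe_sub hε.ne' w _).symm

/-- The `p`-th power of the norm of `w ↦ e ^ (-(Re w) ^ 2)` in `L^p (stripMeasure b a)`: the limit
of the corresponding quantity for stretched Gaussians as `ε → 0`. -/
noncomputable def gaussianMass (p b a : ℝ) : ℝ≥0∞ :=
  ∫⁻ w, ‖exp (-(w.re : ℂ) ^ 2)‖ₑ ^ p ∂stripMeasure b a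

variable {p a ε : ℝ} (b : ℝ)

theorem lintegral_enorm_exp_neg_sq_rpow (hp : 0 < p) :
    ∫⁻ x : ℝ, ‖exp (-(x : ℂ) ^ 2)‖ₑ ^ p = ENNReal.ofReal √(π / p) := by
  have h_rpow (x : ℝ) : ‖exp (-(x : ℂ) ^ 2)‖ₑ ^ p = ENNReal.ofReal (Real.exp (-p * x ^ 2)) := by
    rw [← ofReal_norm, norm_exp_neg_sq, ENNReal.ofReal_rpow_of_pos (Real.exp_pos _),
      ← Real.exp_mul, ofReal_im, ofReal_re]
    ring_nf
  rw [← integral_gaussian, ofReal_integral_eq_lintegral_ofReal (integrable_exp_neg_mul_sq hp)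
    (.of_forall fun x => (Real.exp_pos _).le)]
  exact lintegral_congr h_rpow

theorem gaussianMass_eq (hp : 0 < p) (b a : ℝ) :
    gaussianMass p b a =
      ENNReal.ofReal √(π / p) * ∫⁻ y in Ioo 0 π, ENNReal.ofReal (stripWeight b a y) := by
  rw [← lintegral_enorm_exp_neg_sq_rpow hp]
  exact lintegral_stripMeasure_comp_re b a (u := fun x => ‖exp (-(x : ℂ) ^ 2)‖ₑ ^ p)
    (by fun_prop)

theorem gaussianMass_ne_top (hp : 0 < p) (ha : 0 < a) : gaussianMass p b a ≠ ⊤ := by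
  rw [gaussianMass_eq hp]
  exact ENNReal.mul_ne_top ENNReal.ofReal_ne_top (lintegral_stripWeight_ne_top b ha)

theorem gaussianMass_ne_zero (hp : 0 < p) (a : ℝ) : gaussianMass p b a ≠ 0 := by
  rw [gaussianMass_eq hp]
  have h_sqrt : 0 < √(π / p) := by positivity
  exact mul_ne_zero (ENNReal.ofReal_pos.2 h_sqrt).ne' (lintegral_stripWeight_ne_zero b a)

theorem lintegral_cgaussian_stretchRe_le (hp : 0 ≤ p) (a : ℝ) (hε : ε ≠ 0) :
    ∫⁻ w, ‖cgaussian ε (stretchRe ε⁻¹ w)‖ₑ ^ p ∂stripMeasure b a ≤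
      ENNReal.ofReal (Real.exp ((ε * π) ^ 2)) ^ p * gaussianMass p b a := by
  rw [gaussianMass, ← lintegral_const_mul' _ _
    (ENNReal.rpow_ne_top_of_nonneg hp ENNReal.ofReal_ne_top)]
  refine lintegral_mono_ae ?_
  filter_upwards [ae_stripMeasure_mem_logStrip b a] with w hw
  rw [← ENNReal.mul_rpow_of_nonneg _ _ hp]
  refine ENNReal.rpow_le_rpow ?_ hp
  have h_norm := norm_cgaussian_stretchRe_sub hε w 0
  rw [ofReal_zero, sub_zero, mul_zero, sub_zero] at h_norm
  rw [← ofReal_norm, ← ofReal_norm, ← ENNReal.ofReal_mul (Real.exp_pos _).le, h_norm,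
    norm_exp_neg_sq, ← Real.exp_add, ofReal_im, ofReal_re]
  have h_im : w.im ^ 2 ≤ π ^ 2 := pow_le_pow_left₀ hw.1.le hw.2.le 2
  refine ENNReal.ofReal_le_ofReal (Real.exp_le_exp.2 ?_)
  nlinarith [mul_le_mul_of_nonneg_left h_im (sq_nonneg ε)]

end Gaussian

section MellinBound

variable {p a : ℝ} {φ : ℝ → ℂ} {s : ℂ} {K : ℝ≥0∞}

theorem lintegral_stripConv_cgaussian_stretchRe_le (hp : 0 < p) (ha : 0 < a)
    (hs : s.re = (a + 1) / p) (hK : IsHausdorffBound p a φ K) {ε : ℝ} (hε : 0 < ε) :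
    ∫⁻ w, ‖stripConv φ s (cgaussian ε) (stretchRe ε⁻¹ w)‖ₑ ^ p ∂stripMeasure (p * s.im) a ≤
      K ^ p * (ENNReal.ofReal (Real.exp ((ε * π) ^ 2)) ^ p * gaussianMass p (p * s.im) a) := by
  have h_gauss := lintegral_cgaussian_stretchRe_le (p * s.im) hp.le a hε.ne'
  have h_stretch (F : ℂ → ℂ) :=
    lintegral_stripMeasure_stretchRe (p * s.im) a (inv_pos.2 hε) (fun w => ‖F w‖ₑ ^ p)
  have h_fin : ∫⁻ w, ‖cgaussian ε w‖ₑ ^ p ∂stripMeasure (p * s.im) a < ⊤ := by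
    rw [h_stretch]
    refine ENNReal.mul_lt_top ENNReal.ofReal_lt_top (h_gauss.trans_lt ?_)
    exact ENNReal.mul_lt_top (ENNReal.rpow_lt_top_of_nonneg hp.le ENNReal.ofReal_ne_top)
      (gaussianMass_ne_top _ hp ha).lt_top
  have h_conv :=
    lintegral_stripConv_le hp hs hK (differentiable_cgaussian ε).differentiableOn h_fin
  rw [h_stretch (stripConv φ s (cgaussian ε)), h_stretch (cgaussian ε), mul_left_comm,
    ENNReal.mul_le_mul_iff_right (by simpa using hε) ENNReal.ofReal_ne_top] at h_conv
  exact h_conv.trans (mul_le_mul_right h_gauss _)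

theorem enorm_mellin_rpow_mul_gaussianMass_le (hp : 0 < p) (ha : 0 < a)
    (hs : s.re = (a + 1) / p) (hφ : MellinConvergent φ s) (hK : IsHausdorffBound p a φ K) :
    ‖mellin φ s‖ₑ ^ p * gaussianMass p (p * s.im) a ≤ K ^ p * gaussianMass p (p * s.im) a := by
  set B := gaussianMass p (p * s.im) a with hB
  set H : ℝ → ℂ → ℝ≥0∞ := fun ε w => ‖stripConv φ s (cgaussian ε) (stretchRe ε⁻¹ w)‖ₑ ^ p
  have h_lim_left (w : ℂ) : Tendsto (fun ε => H ε w) (𝓝[>] 0)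
      (𝓝 (‖mellin φ s‖ₑ ^ p * ‖exp (-(w.re : ℂ) ^ 2)‖ₑ ^ p)) := by
    rw [← ENNReal.mul_rpow_of_nonneg _ _ hp.le, ← enorm_mul]
    exact (tendsto_stripConv_cgaussian hφ w).enorm.ennrpow_const p
  have h_lim_right : Tendsto
      (fun ε : ℝ => K ^ p * (ENNReal.ofReal (Real.exp ((ε * π) ^ 2)) ^ p * B)) (𝓝[>] 0)
      (𝓝 (K ^ p * B)) := by
    have h_cont : Continuous fun ε : ℝ => ENNReal.ofReal (Real.exp ((ε * π) ^ 2)) ^ p * B :=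
      (ENNReal.continuous_mul_const (gaussianMass_ne_top _ hp ha)).comp
        (ENNReal.continuous_rpow_const.comp (ENNReal.continuous_ofReal.comp (by fun_prop)))
    have h_lim := (h_cont.tendsto 0).mono_left (nhdsWithin_le_nhds (s := Ioi 0))
    simp only [zero_mul, zero_pow two_ne_zero, Real.exp_zero, ENNReal.ofReal_one,
      ENNReal.one_rpow, one_mul] at h_lim
    exact ENNReal.Tendsto.const_mul h_lim (.inl (gaussianMass_ne_zero _ hp a))
  have h_meas (ε : ℝ) : Measurable (H ε) :=
    ((measurable_stripConv (aestronglyMeasurable_of_mellinConvergent hφ) s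
      (differentiable_cgaussian ε).continuous.measurable).comp
      (stretchRe ε⁻¹).continuous.measurable).enorm.pow_const p
  calc ‖mellin φ s‖ₑ ^ p * B
      = ∫⁻ w, liminf (fun ε => H ε w) (𝓝[>] 0) ∂stripMeasure (p * s.im) a := by
        rw [hB, gaussianMass, ← lintegral_const_mul' _ _
          (ENNReal.rpow_ne_top_of_nonneg hp.le enorm_ne_top)]
        exact lintegral_congr fun w => (h_lim_left w).liminf_eq.symm
    _ ≤ liminf (fun ε => ∫⁻ w, H ε w ∂stripMeasure (p * s.im) a) (𝓝[>] 0) :=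
        lintegral_liminf_le h_meas
    _ ≤ liminf (fun ε : ℝ => K ^ p * (ENNReal.ofReal (Real.exp ((ε * π) ^ 2)) ^ p * B))
          (𝓝[>] 0) := by
        refine liminf_le_liminf ?_
        filter_upwards [self_mem_nhdsWithin] with ε (hε : 0 < ε)
        exact lintegral_stripConv_cgaussian_stretchRe_le hp ha hs hK hε
    _ = K ^ p * B := h_lim_right.liminf_eq

theorem enorm_mellin_le (hp : 0 < p) (ha : 0 < a) (hs : s.re = (a + 1) / p)
    (hφ : MellinConvergent φ s) (hK : IsHausdorffBound p a φ K) : ‖mellin φ s‖ₑ ≤ K := by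
  have h := enorm_mellin_rpow_mul_gaussianMass_le hp ha hs hφ hK
  rwa [ENNReal.mul_le_mul_iff_left (gaussianMass_ne_zero _ hp a)
    (gaussianMass_ne_top _ hp ha), ENNReal.rpow_le_rpow_iff hp] at h

theorem khat_eq_mellin (φ : ℝ → ℂ) (c ξ : ℝ) : khat φ c ξ = mellin φ (c - I * ξ) := by
  simp only [khat, mellin, smul_eq_mul, mul_comm (φ _), sub_right_comm]

end MellinBound

theorem stmt14_general (p a : ℝ) (hp : 0 < p) (ha : 0 < a) (φ : ℝ → ℂ)
    (hφ : MellinConvergent φ ((a + 1) / p : ℝ)) (C : ℝ) (hC : 0 ≤ C)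
    (hbound : ∀ f : ℂ → ℂ, DifferentiableOn ℂ f upperHalf → bergmanNorm p a f < ⊤ →
      bergmanNorm p a (HphiHol φ f) ≤ ENNReal.ofReal C * bergmanNorm p a f) :
    ∀ ξ : ℝ, ‖khat φ ((a + 1) / p) ξ‖ ≤ C := by
  intro ξ
  have hs : (((a + 1) / p : ℝ) - I * ξ : ℂ).re = (a + 1) / p := by simp
  rw [khat_eq_mellin, ← ENNReal.ofReal_le_ofReal_iff hC, ofReal_norm]
  exact enorm_mellin_le hp ha hs (mellinConvergent_of_re_eq hφ (by rw [hs, ofReal_re])) hbound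

/-- If `C ≥ 0` satisfies `‖ℋ_φ f‖_{A^p_a} ≤ C ‖f‖_{A^p_a}` for every
holomorphic `f` on `𝕌` of finite weighted Bergman norm, then
`sup_{ξ ∈ ℝ} |k̂_{a,p}(ξ)| ≤ C`. -/
theorem stmt14 (p a : ℝ) (hp : 1 ≤ p) (ha : 0 < a) (φ : ℝ → ℂ) (hφm : Measurable φ)
    (hφ : IntegrableOn (fun t => ‖φ t‖ * t ^ ((a + 1) / p - 1)) (Set.Ioi (0 : ℝ)))
    (C : ℝ) (hC : 0 ≤ C)
    (hbound : ∀ f : ℂ → ℂ, DifferentiableOn ℂ f upperHalf → bergmanNorm p a f < ⊤ →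
      bergmanNorm p a (HphiHol φ f) ≤ ENNReal.ofReal C * bergmanNorm p a f) :
    ∀ ξ : ℝ, ‖khat φ ((a + 1) / p) ξ‖ ≤ C :=
  stmt14_general p a (one_pos.trans_le hp) ha φ
    (mellinConvergent_ofReal hφm.aestronglyMeasurable hφ) C hC hbound
end

section
/- Let 1 ≤ p < ∞, a > −1, and let ν ∈ ℂ with p·Re ν > a + 1. Let C_ν be the Hausdorff operator H_φ with kernel φ(t) = t^{−ν}·1_{[1,∞)}(t), i.e. C_ν f(x) = ∫₁^∞ f(x/t) t^{−ν−1} dt. Then C_ν is a bounded linear operator on L^p(ℝ, |x|^a) and its spectrum equals the circle { z ∈ ℂ : |z − p/(2(p·Re ν − a − 1))| = p/(2(p·Re ν − a − 1)) }. -/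
open MeasureTheory

/-- The Hausdorff operator `H_φ f(x) = ∫₀^∞ f(x/t) φ(t) t⁻¹ dt`. -/
noncomputable def Hphi (φ : ℝ → ℂ) (f : ℝ → ℂ) (x : ℝ) : ℂ :=
  ∫ t in Set.Ioi (0 : ℝ), f (x / t) * φ t / (t : ℂ)

/-- The weighted measure `|x|^a dx` on `ℝ`. -/
noncomputable def weightMeasure (a : ℝ) : Measure ℝ :=
  volume.withDensity fun x => ENNReal.ofReal (|x| ^ a)

/-- The Cesàro kernel `φ(t) = t^{−ν}·1_{[1,∞)}(t)`. -/
noncomputable def cesaroKernel (ν : ℂ) (t : ℝ) : ℂ :=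
  if 1 ≤ t then (t : ℂ) ^ (-ν) else 0

/-!
Put `t = e ^ y`. Then `C_ν` averages the dilations `f ↦ f (e ^ (-y) x)` against the kernel
`e ^ (-ν y) 1_{y ≥ 0}`, so it is the resolvent `R ν` of the generator of the dilation group.
Dilation by `e ^ y` multiplies the norm of `L^p(|x|^a)` by `e ^ (s y)` with `s = (a + 1) / p`,
hence `R ω = ∫ e ^ (-ω y) f (e ^ (-y) x) dy` is bounded for `Re ω ≠ s`: integrate over `y ≥ 0` if
`Re ω > s`, and over `y < 0`, with the opposite sign, if `Re ω < s`. For `z⁻¹ = ν - ω` the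
resolvent identity `R ν R ω = z (R ω - R ν)` makes `z - C_ν` invertible as soon as `Re ω ≠ s`. If
`Re ω = s`, the powers `x ^ (-ρ)` cut off to `(0, 1)`, with `ρ → ω` from the left, have norms
tending to infinity and satisfy `C_ν f - (ν - ρ)⁻¹ f = O(1)`, so `z` is in the spectrum. The
exceptional set `Re z⁻¹ = Re ν - s`, completed by `z = 0`, is the circle.
-/

open Filter Topology ENNReal Convolution
open ContinuousLinearMap (mul)

theorem mem_spectrum_of_tendsto_norm_atTop {𝕜 E ι : Type*} [NontriviallyNormedField 𝕜]
    [NormedAddCommGroup E] [NormedSpace 𝕜 E] {l : Filter ι} [l.NeBot] {T : E →L[𝕜] E}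
    {z₀ : 𝕜} {z : ι → 𝕜} {F : ι → E} (hz : Tendsto z l (𝓝 z₀))
    (hF : Tendsto (fun i => ‖F i‖) l atTop)
    (hbdd : l.IsBoundedUnder (· ≤ ·) fun i => ‖z i • F i - T (F i)‖) : z₀ ∈ spectrum 𝕜 T := by
  by_contra hz₀
  obtain ⟨u, hu⟩ := spectrum.notMem_iff.1 hz₀
  obtain ⟨C, hC⟩ := hbdd.eventually_le
  set S : E →L[𝕜] E := ↑u⁻¹
  have hS (x : E) : S (z₀ • x - T x) = x := by
    have hSu : S * (algebraMap 𝕜 (E →L[𝕜] E) z₀ - T) = 1 := by rw [← hu, u.inv_mul]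
    exact DFunLike.congr_fun hSu x
  have hsmall : ∀ᶠ i in l, ‖S‖ * ‖z₀ - z i‖ < 1 / 2 := by
    have : Tendsto (fun i => ‖S‖ * ‖z₀ - z i‖) l (𝓝 (‖S‖ * ‖z₀ - z₀‖)) :=
      (hz.const_sub z₀).norm.const_mul _
    exact this.eventually_lt_const (by simp)
  obtain ⟨i, hi, hCi, hFi⟩ :=
    (hsmall.and (hC.and (hF.eventually_gt_atTop (2 * (‖S‖ * C))))).exists
  have hle : ‖F i‖ ≤ ‖S‖ * ‖z₀ - z i‖ * ‖F i‖ + ‖S‖ * C := calc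
    ‖F i‖ = ‖S ((z₀ - z i) • F i + (z i • F i - T (F i)))‖ := by
      rw [sub_smul, sub_add_sub_cancel, hS]
    _ ≤ ‖S‖ * (‖z₀ - z i‖ * ‖F i‖ + C) := by
      refine (S.le_opNorm _).trans ?_
      gcongr
      exact norm_add_le_of_le (norm_smul_le _ _) hCi
    _ = ‖S‖ * ‖z₀ - z i‖ * ‖F i‖ + ‖S‖ * C := by ring
  nlinarith [norm_nonneg (F i)]

theorem isUnit_algebraMap_sub_of_mul_eq {𝕜 A : Type*} [Field 𝕜] [Ring A] [Algebra 𝕜 A] {a b : A}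
    {z : 𝕜} (hz : z ≠ 0) (hcomm : Commute a b) (hab : a * b = z • (b - a)) :
    IsUnit (algebraMap 𝕜 A z - a) := by
  rw [Algebra.algebraMap_eq_smul_one]
  have hba : b * a = z • (b - a) := hcomm.eq ▸ hab
  refine ⟨⟨_, z⁻¹ • 1 + (z⁻¹ * z⁻¹) • b, ?_, ?_⟩, rfl⟩
  · simp only [sub_mul, mul_add, mul_smul_comm, one_mul, mul_one, smul_mul_assoc, hab]
    match_scalars <;> field_simp <;> ring
  · simp only [mul_sub, add_mul, mul_smul_comm, one_mul, mul_one, smul_mul_assoc, hba]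
    match_scalars <;> field_simp <;> ring

theorem rpow_lintegral_mul_le {α : Type*} [MeasurableSpace α] {μ : Measure α} {q : ℝ}
    (hq : 1 ≤ q) {w g : α → ℝ≥0∞} (hw : AEMeasurable w μ) (hg : AEMeasurable g μ) :
    (∫⁻ y, w y * g y ∂μ) ^ q ≤ (∫⁻ y, w y ∂μ) ^ (q - 1) * ∫⁻ y, w y * g y ^ q ∂μ := by
  have h := eLpNorm'_le_eLpNorm'_mul_rpow_measure_univ (μ := μ.withDensity w) (f := g) one_pos hq
    (hg.mono_ac (withDensity_absolutelyContinuous μ w)).aestronglyMeasurable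
  have h' := ENNReal.rpow_le_rpow h (by positivity : 0 ≤ q)
  have hq' : (1 / 1 - 1 / q) * q = q - 1 := by field_simp
  rw [ENNReal.mul_rpow_of_nonneg _ _ (by positivity), ← ENNReal.rpow_mul, hq',
    withDensity_apply _ .univ, Measure.restrict_univ, mul_comm] at h'
  simpa only [eLpNorm', enorm_eq_self, ENNReal.rpow_one, div_one, ← ENNReal.rpow_mul,
    one_div_mul_cancel (zero_lt_one.trans_le hq).ne',
    lintegral_withDensity_eq_lintegral_mul₀ hw hg, Pi.mul_apply,
    lintegral_withDensity_eq_lintegral_mul₀ hw (hg.pow_const q)] using h'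

section Homogeneous

variable {X : Type*} [MeasurableSpace X] [SMul ℝ X]
  {μ : Measure X} {d : ℝ}

/-- A measure `μ` is homogeneous of degree `d` if `μ (c • A) = c ^ d * μ A` for `c > 0`; the
condition is imposed on the pushforwards of `μ`, which see `c⁻¹ • A`, whence the sign of `d`. -/
def IsHomogeneousMeasure (μ : Measure X) (d : ℝ) : Prop :=
  ∀ c : ℝ, 0 < c → μ.map (c • ·) = ENNReal.ofReal (c ^ (-d)) • μ

theorem IsHomogeneousMeasure.map_exp_neg_smul (hμ : IsHomogeneousMeasure μ d) (y : ℝ) :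
    μ.map (Real.exp (-y) • ·) = ENNReal.ofReal (Real.exp (d * y)) • μ := by
  rw [hμ _ (Real.exp_pos _), ← Real.exp_mul]
  ring_nf

section MeasurableConstSMul

variable [MeasurableConstSMul ℝ X]

theorem IsHomogeneousMeasure.lintegral_comp_exp_neg_smul (hμ : IsHomogeneousMeasure μ d)
    {F : X → ℝ≥0∞} (hF : AEMeasurable F μ) (y : ℝ) :
    ∫⁻ x, F (Real.exp (-y) • x) ∂μ = ENNReal.ofReal (Real.exp (d * y)) * ∫⁻ x, F x ∂μ := by
  have hmap := hμ.map_exp_neg_smul y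
  rw [← lintegral_map' (g := (Real.exp (-y) • ·)) (by rw [hmap]; exact hF.smul_measure _)
    (by fun_prop), hmap, lintegral_smul_measure, smul_eq_mul]

theorem IsHomogeneousMeasure.quasiMeasurePreserving_exp_neg_smul (hμ : IsHomogeneousMeasure μ d)
    (y : ℝ) : Measure.QuasiMeasurePreserving (Real.exp (-y) • · : X → X) μ μ :=
  ⟨by fun_prop, hμ.map_exp_neg_smul y ▸ Measure.smul_absolutelyContinuous⟩

theorem IsHomogeneousMeasure.lintegral_rpow_exp_mul_comp_exp_neg_smul
    (hμ : IsHomogeneousMeasure μ d) {q : ℝ} (hq : 0 < q) {F : X → ℝ≥0∞} (hF : AEMeasurable F μ)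
    (y : ℝ) :
    ∫⁻ x, (ENNReal.ofReal (Real.exp (-(d / q * y))) * F (Real.exp (-y) • x)) ^ q ∂μ =
      ∫⁻ x, F x ^ q ∂μ := by
  have hcancel : ENNReal.ofReal (Real.exp (-(d / q * y))) ^ q *
      ENNReal.ofReal (Real.exp (d * y)) = 1 := by
    rw [ENNReal.ofReal_rpow_of_pos (Real.exp_pos _), ← Real.exp_mul,
      ← ENNReal.ofReal_mul (Real.exp_pos _).le, ← Real.exp_add]
    field_simp
    simp
  have hFy : AEMeasurable (fun x => F (Real.exp (-y) • x) ^ q) μ :=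
    (hF.comp_quasiMeasurePreserving (hμ.quasiMeasurePreserving_exp_neg_smul y)).pow_const q
  simp only [ENNReal.mul_rpow_of_nonneg _ _ hq.le]
  rw [lintegral_const_mul'' _ hFy, hμ.lintegral_comp_exp_neg_smul (hF.pow_const q), ← mul_assoc,
    hcancel, one_mul]

end MeasurableConstSMul

variable [MeasurableSMul₂ ℝ X]

theorem IsHomogeneousMeasure.quasiMeasurePreserving_prod [SFinite μ]
    (hμ : IsHomogeneousMeasure μ d) :
    Measure.QuasiMeasurePreserving (fun z : X × ℝ => Real.exp (-z.2) • z.1) (μ.prod volume) μ :=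
  QuasiMeasurePreserving.prod_of_left (by fun_prop) <|
    .of_forall hμ.quasiMeasurePreserving_exp_neg_smul

theorem IsHomogeneousMeasure.lintegral_rpow_lintegral_le [SFinite μ]
    (hμ : IsHomogeneousMeasure μ d) {q : ℝ} (hq : 1 ≤ q) {W : ℝ → ℝ≥0∞} (hW : AEMeasurable W)
    {F : X → ℝ≥0∞} (hF : AEMeasurable F μ) :
    ∫⁻ x, (∫⁻ y, W y * F (Real.exp (-y) • x)) ^ q ∂μ ≤
      (∫⁻ y, ENNReal.ofReal (Real.exp (d / q * y)) * W y) ^ q * ∫⁻ x, F x ^ q ∂μ := by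
  set w : ℝ → ℝ≥0∞ := fun y => ENNReal.ofReal (Real.exp (d / q * y)) * W y
  set e : ℝ → ℝ≥0∞ := fun y => ENNReal.ofReal (Real.exp (-(d / q * y)))
  have hw : AEMeasurable w := by fun_prop
  have he : AEMeasurable e := by fun_prop
  have hFΦ : AEMeasurable (fun z : X × ℝ => F (Real.exp (-z.2) • z.1)) (μ.prod volume) :=
    hF.comp_quasiMeasurePreserving hμ.quasiMeasurePreserving_prod
  have hwe (y : ℝ) (c : ℝ≥0∞) : W y * c = w y * (e y * c) := by
    have : ENNReal.ofReal (Real.exp (d / q * y)) * e y = 1 := by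
      rw [← ENNReal.ofReal_mul (Real.exp_pos _).le, ← Real.exp_add]; simp
    rw [← mul_assoc, mul_right_comm _ (W y), this, one_mul]
  calc ∫⁻ x, (∫⁻ y, W y * F (Real.exp (-y) • x)) ^ q ∂μ
      ≤ ∫⁻ x, (∫⁻ y, w y) ^ (q - 1) *
          (∫⁻ y, w y * (e y * F (Real.exp (-y) • x)) ^ q) ∂μ := by
        refine lintegral_mono_ae ?_
        filter_upwards [hFΦ.aestronglyMeasurable.prodMk_left] with x hx
        simp only [hwe]
        exact rpow_lintegral_mul_le hq hw (he.mul hx.aemeasurable)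
    _ = (∫⁻ y, w y) ^ (q - 1) *
          ∫⁻ y, (∫⁻ x, w y * (e y * F (Real.exp (-y) • x)) ^ q ∂μ) := by
        have hint : AEMeasurable (fun z : X × ℝ =>
            w z.2 * (e z.2 * F (Real.exp (-z.2) • z.1)) ^ q) (μ.prod volume) :=
          hw.comp_snd.mul ((he.comp_snd.mul hFΦ).pow_const q)
        rw [lintegral_const_mul'' _ hint.lintegral_prod_right', lintegral_lintegral_swap hint]
    _ = (∫⁻ y, w y) ^ (q - 1) * ((∫⁻ y, w y) * ∫⁻ x, F x ^ q ∂μ) := by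
        rw [← lintegral_mul_const'' _ hw]
        congr 1
        refine lintegral_congr fun y => ?_
        have hFy : AEMeasurable (fun x => F (Real.exp (-y) • x)) μ :=
          hF.comp_quasiMeasurePreserving (hμ.quasiMeasurePreserving_exp_neg_smul y)
        rw [lintegral_const_mul'' _ ((hFy.const_mul _).pow_const q),
          hμ.lintegral_rpow_exp_mul_comp_exp_neg_smul (by positivity) hF]
    _ = (∫⁻ y, w y) ^ q * ∫⁻ x, F x ^ q ∂μ := by
        rw [← mul_assoc]
        congr 1
        nth_rw 2 [← ENNReal.rpow_one (∫⁻ y, w y)]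
        rw [← ENNReal.rpow_add_of_nonneg _ _ (by linarith) zero_le_one, sub_add_cancel]

end Homogeneous

/-- Integrability of `K` against the weight `e ^ (s y)`: the condition on a kernel under which
the operator `logHausdorff K` below is bounded on `L^p` of a measure homogeneous of degree
`s * p`. -/
def ExpIntegrable (s : ℝ) (K : ℝ → ℂ) : Prop :=
  Integrable fun y => Real.exp (s * y) • K y

section ExpIntegrable

variable {s : ℝ} {K L : ℝ → ℂ}

theorem enorm_exp_smul (r : ℝ) (c : ℂ) :
    ‖Real.exp r • c‖ₑ = ENNReal.ofReal (Real.exp r) * ‖c‖ₑ := by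
  rw [enorm_smul, Real.enorm_of_nonneg (Real.exp_pos r).le]

theorem ExpIntegrable.aestronglyMeasurable (hK : ExpIntegrable s K) : AEStronglyMeasurable K := by
  have hinv : Continuous fun y : ℝ => Real.exp (-(s * y)) := by fun_prop
  refine (hinv.aestronglyMeasurable.smul hK.1).congr (.of_forall fun y => ?_)
  simp only [Pi.smul_apply', smul_smul, ← Real.exp_add, neg_add_cancel, Real.exp_zero, one_smul]

theorem ExpIntegrable.const_smul (hK : ExpIntegrable s K) (c : ℂ) : ExpIntegrable s (c • K) :=
  (Integrable.smul c hK).congr (.of_forall fun _ => smul_comm c _ _)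

theorem ExpIntegrable.sub (hK : ExpIntegrable s K) (hL : ExpIntegrable s L) :
    ExpIntegrable s (K - L) :=
  (Integrable.sub hK hL).congr (.of_forall fun _ => (smul_sub _ _ _).symm)

theorem ExpIntegrable.convolution (hK : ExpIntegrable s K) (hL : ExpIntegrable s L) :
    ExpIntegrable s (K ⋆[mul ℂ ℂ] L) := by
  refine (Integrable.integrable_convolution (mul ℂ ℂ) hK hL).congr (.of_forall fun w => ?_)
  simp only [convolution_mul, ← integral_smul]
  congr 1 with y
  simp only [smul_mul_smul_comm, ← Real.exp_add]
  ring_nf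

theorem convolution_mul_comm (K L : ℝ → ℂ) : K ⋆[mul ℂ ℂ] L = L ⋆[mul ℂ ℂ] K := by
  ext w
  rw [convolution_mul, convolution_mul_swap]
  simp only [mul_comm]

theorem integral_smul_integral_smul_add {E : Type*} [NormedAddCommGroup E] [NormedSpace ℂ E]
    [CompleteSpace E] {φ : ℝ → E} (hK : AEStronglyMeasurable K) (hL : AEStronglyMeasurable L)
    (hφ : AEStronglyMeasurable φ)
    (hfin : ∫⁻ y, ‖K y‖ₑ * ∫⁻ z, ‖L z‖ₑ * ‖φ (z + y)‖ₑ ≠ ∞) :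
    ∫ y, K y • ∫ z, L z • φ (z + y) = ∫ w, (K ⋆[mul ℂ ℂ] L) w • φ w := by
  have hmeas : AEStronglyMeasurable
      (Function.uncurry fun w y : ℝ => (K y * L (w - y)) • φ w) (volume.prod volume) :=
    (hK.convolution_integrand (mul ℂ ℂ) hL).smul hφ.comp_fst
  have hint : Integrable
      (Function.uncurry fun w y : ℝ => (K y * L (w - y)) • φ w) (volume.prod volume) := by
    refine ⟨hmeas, ?_⟩
    rw [HasFiniteIntegral, lintegral_prod_symm _ hmeas.enorm]
    refine lt_of_eq_of_lt (lintegral_congr fun y => ?_) hfin.lt_top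
    rw [← lintegral_const_mul' _ _ enorm_ne_top,
      ← lintegral_sub_right_eq_self (fun z => ‖K y‖ₑ * (‖L z‖ₑ * ‖φ (z + y)‖ₑ)) y]
    simp only [Function.uncurry_apply_pair, enorm_smul, enorm_mul, sub_add_cancel, mul_assoc]
  calc ∫ y, K y • ∫ z, L z • φ (z + y)
      = ∫ y, ∫ w, (K y * L (w - y)) • φ w := by
        congr 1 with y
        rw [← integral_smul, ← integral_sub_right_eq_self _ y]
        simp only [sub_add_cancel, mul_smul]
    _ = ∫ w, ∫ y, (K y * L (w - y)) • φ w := (integral_integral_swap hint).symm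
    _ = ∫ w, (K ⋆[mul ℂ ℂ] L) w • φ w := by
        simp only [integral_smul_const, convolution_mul]

end ExpIntegrable

section LogHausdorff

variable {X E : Type*} [MeasurableSpace X] [NormedAddCommGroup E] [NormedSpace ℂ E]

/-- The Hausdorff operator in the logarithmic variable `t = e ^ y`, for functions on any space on
which the scalars act: `Hphi φ` is `logHausdorff K` with `K y = φ (e ^ y)`. In this form the
composition of operators is the additive convolution of kernels. -/
noncomputable def logHausdorff [SMul ℝ X] (K : ℝ → ℂ) (f : X → E) (x : X) : E :=
  ∫ y, K y • f (Real.exp (-y) • x)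

section SMul

variable [SMul ℝ X] [MeasurableSMul₂ ℝ X] {μ : Measure X} [SFinite μ] {d q : ℝ} {p : ℝ≥0∞}
  {K L : ℝ → ℂ} {f g : X → E}

theorem logHausdorff_congr_ae (hμ : IsHomogeneousMeasure μ d) (hfg : f =ᵐ[μ] g) :
    logHausdorff K f =ᵐ[μ] logHausdorff K g := by
  filter_upwards [Measure.ae_ae_of_ae_prod (hμ.quasiMeasurePreserving_prod.ae_eq_comp hfg)]
    with x hx
  exact integral_congr_ae (hx.mono fun y hy => congrArg (K y • ·) hy)

theorem IsHomogeneousMeasure.aestronglyMeasurable_smul_comp (hμ : IsHomogeneousMeasure μ d)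
    (hK : AEStronglyMeasurable K) (hf : AEStronglyMeasurable f μ) :
    AEStronglyMeasurable (fun z : X × ℝ => K z.2 • f (Real.exp (-z.2) • z.1)) (μ.prod volume) :=
  hK.comp_snd.smul (hf.comp_quasiMeasurePreserving hμ.quasiMeasurePreserving_prod)

theorem ExpIntegrable.lintegral_rpow_lintegral_ne_top (hμ : IsHomogeneousMeasure μ d)
    (hq : 1 ≤ q) (hK : ExpIntegrable (d / q) K) {F : X → ℝ≥0∞} (hF : AEMeasurable F μ)
    (hFq : ∫⁻ x, F x ^ q ∂μ ≠ ∞) :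
    ∫⁻ x, (∫⁻ y, ‖K y‖ₑ * F (Real.exp (-y) • x)) ^ q ∂μ ≠ ∞ := by
  have hKfin := hK.2
  simp only [HasFiniteIntegral, enorm_exp_smul] at hKfin
  refine ((hμ.lintegral_rpow_lintegral_le hq hK.aestronglyMeasurable.enorm hF).trans_lt ?_).ne
  exact mul_lt_top (rpow_lt_top_of_nonneg (by positivity) hKfin.ne) hFq.lt_top

theorem ExpIntegrable.ae_lintegral_ne_top (hμ : IsHomogeneousMeasure μ d)
    (hq : 1 ≤ q) (hK : ExpIntegrable (d / q) K) {F : X → ℝ≥0∞} (hF : AEMeasurable F μ)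
    (hFq : ∫⁻ x, F x ^ q ∂μ ≠ ∞) :
    ∀ᵐ x ∂μ, ∫⁻ y, ‖K y‖ₑ * F (Real.exp (-y) • x) ≠ ∞ := by
  have hmeas : AEMeasurable (fun z : X × ℝ => ‖K z.2‖ₑ * F (Real.exp (-z.2) • z.1))
      (μ.prod volume) :=
    hK.aestronglyMeasurable.comp_snd.enorm.mul
      (hF.comp_quasiMeasurePreserving hμ.quasiMeasurePreserving_prod)
  filter_upwards [ae_lt_top' (hmeas.lintegral_prod_right'.pow_const q)
    (hK.lintegral_rpow_lintegral_ne_top hμ hq hF hFq)] with x hx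
  exact ((rpow_lt_top_iff_of_pos (by positivity)).1 hx).ne

theorem aestronglyMeasurable_logHausdorff (hμ : IsHomogeneousMeasure μ d)
    (hK : AEStronglyMeasurable K) (hf : AEStronglyMeasurable f μ) :
    AEStronglyMeasurable (logHausdorff K f) μ :=
  (hμ.aestronglyMeasurable_smul_comp hK hf).integral_prod_right'

variable [Fact (1 ≤ p)]

theorem one_le_toReal_of_fact (hp : p ≠ ∞) : 1 ≤ p.toReal := by
  simpa using toReal_mono hp (Fact.out : 1 ≤ p)

theorem ExpIntegrable.ae_integrable_smul_comp (hμ : IsHomogeneousMeasure μ d) (hp : p ≠ ∞)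
    (hK : ExpIntegrable (d / p.toReal) K) (hf : MemLp f p μ) :
    ∀ᵐ x ∂μ, Integrable fun y => K y • f (Real.exp (-y) • x) := by
  have hp0 : p ≠ 0 := (zero_lt_one.trans_le Fact.out).ne'
  filter_upwards [hK.ae_lintegral_ne_top hμ (one_le_toReal_of_fact hp) hf.1.enorm
      (lintegral_rpow_enorm_lt_top_of_eLpNorm_lt_top hp0 hp hf.2).ne,
    (hμ.aestronglyMeasurable_smul_comp hK.aestronglyMeasurable hf.1).prodMk_left] with x hfin hmeas
  refine ⟨hmeas, ?_⟩
  simpa only [HasFiniteIntegral, enorm_smul] using hfin.lt_top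

theorem eLpNorm_logHausdorff_le (hμ : IsHomogeneousMeasure μ d) (hp : p ≠ ∞)
    (hK : AEStronglyMeasurable K) (hf : AEStronglyMeasurable f μ) :
    eLpNorm (logHausdorff K f) p μ ≤
      (∫⁻ y, ‖Real.exp (d / p.toReal * y) • K y‖ₑ) * eLpNorm f p μ := by
  have hp0 : p ≠ 0 := (zero_lt_one.trans_le Fact.out).ne'
  have hq : 0 < p.toReal := toReal_pos hp0 hp
  simp only [eLpNorm_eq_lintegral_rpow_enorm_toReal hp0 hp, enorm_exp_smul, one_div]
  rw [rpow_inv_le_iff hq, mul_rpow_of_nonneg _ _ hq.le, rpow_inv_rpow hq.ne']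
  refine le_trans (lintegral_mono fun x => ?_)
    (hμ.lintegral_rpow_lintegral_le (one_le_toReal_of_fact hp) hK.enorm hf.enorm)
  gcongr
  simpa only [logHausdorff, enorm_smul] using
    enorm_integral_le_lintegral_enorm fun y => K y • f (Real.exp (-y) • x)

theorem ExpIntegrable.memLp_logHausdorff (hμ : IsHomogeneousMeasure μ d) (hp : p ≠ ∞)
    (hK : ExpIntegrable (d / p.toReal) K) (hf : MemLp f p μ) : MemLp (logHausdorff K f) p μ :=
  ⟨aestronglyMeasurable_logHausdorff hμ hK.aestronglyMeasurable hf.1,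
    (eLpNorm_logHausdorff_le hμ hp hK.aestronglyMeasurable hf.1).trans_lt
      (mul_lt_top hK.2 hf.2)⟩

/-- The operator `logHausdorff K` as a bounded operator on `L^p` of a homogeneous measure. -/
noncomputable def logHausdorffL (hμ : IsHomogeneousMeasure μ d) (hp : p ≠ ∞)
    (hK : ExpIntegrable (d / p.toReal) K) : Lp E p μ →L[ℂ] Lp E p μ :=
  LinearMap.mkContinuous
    { toFun := fun f => (hK.memLp_logHausdorff hμ hp (Lp.memLp f)).toLp
      map_add' := fun f g => by
        rw [← MemLp.toLp_add]
        refine MemLp.toLp_congr _ _ ((logHausdorff_congr_ae hμ (Lp.coeFn_add f g)).trans ?_)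
        filter_upwards [hK.ae_integrable_smul_comp hμ hp (Lp.memLp f),
          hK.ae_integrable_smul_comp hμ hp (Lp.memLp g)] with x hf hg
        simp only [logHausdorff, Pi.add_apply, smul_add, integral_add hf hg]
      map_smul' := fun c f => by
        rw [RingHom.id_apply, ← MemLp.toLp_const_smul]
        refine MemLp.toLp_congr _ _ ((logHausdorff_congr_ae hμ (Lp.coeFn_smul c f)).trans ?_)
        refine .of_forall fun x => ?_
        simp only [logHausdorff, Pi.smul_apply, smul_comm _ c, integral_smul] }
    (∫⁻ y, ‖Real.exp (d / p.toReal * y) • K y‖ₑ).toReal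
    fun f => by
      rw [LinearMap.coe_mk, AddHom.coe_mk, Lp.norm_toLp, Lp.norm_def, ← toReal_mul]
      exact toReal_mono (mul_lt_top hK.2 (Lp.eLpNorm_lt_top f)).ne
        (eLpNorm_logHausdorff_le hμ hp hK.aestronglyMeasurable (Lp.aestronglyMeasurable f))

theorem coeFn_logHausdorffL (hμ : IsHomogeneousMeasure μ d) (hp : p ≠ ∞)
    (hK : ExpIntegrable (d / p.toReal) K) (f : Lp E p μ) :
    ⇑(logHausdorffL hμ hp hK f) =ᵐ[μ] logHausdorff K f :=
  (hK.memLp_logHausdorff hμ hp (Lp.memLp f)).coeFn_toLp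

theorem logHausdorffL_const_smul_sub (hμ : IsHomogeneousMeasure μ d) (hp : p ≠ ∞)
    (hK : ExpIntegrable (d / p.toReal) K) (hL : ExpIntegrable (d / p.toReal) L) (c : ℂ) :
    (logHausdorffL hμ hp ((hK.sub hL).const_smul c) : Lp E p μ →L[ℂ] Lp E p μ) =
      c • (logHausdorffL hμ hp hK - logHausdorffL hμ hp hL) := by
  ext f
  filter_upwards [coeFn_logHausdorffL hμ hp ((hK.sub hL).const_smul c) f,
    coeFn_logHausdorffL hμ hp hK f, coeFn_logHausdorffL hμ hp hL f,
    Lp.coeFn_smul c (logHausdorffL hμ hp hK f - logHausdorffL hμ hp hL f),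
    Lp.coeFn_sub (logHausdorffL hμ hp hK f) (logHausdorffL hμ hp hL f),
    hK.ae_integrable_smul_comp hμ hp (Lp.memLp f),
    hL.ae_integrable_smul_comp hμ hp (Lp.memLp f)] with x hKL hKf hLf hsmul hsub hKi hLi
  rw [smul_apply, sub_apply, hsmul, Pi.smul_apply, hsub,
    Pi.sub_apply, hKL, hKf, hLf]
  simp only [logHausdorff, Pi.smul_apply, Pi.sub_apply, smul_assoc, sub_smul, integral_smul,
    integral_sub hKi hLi]

end SMul

section MulAction

variable [CompleteSpace E] [MulAction ℝ X] [MeasurableSMul₂ ℝ X] {μ : Measure X} [SFinite μ]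
  {d : ℝ} {p : ℝ≥0∞} [Fact (1 ≤ p)] {K L : ℝ → ℂ} {f : X → E}

theorem logHausdorff_logHausdorff (hμ : IsHomogeneousMeasure μ d) (hp : p ≠ ∞)
    (hK : ExpIntegrable (d / p.toReal) K) (hL : ExpIntegrable (d / p.toReal) L)
    (hf : MemLp f p μ) :
    logHausdorff K (logHausdorff L f) =ᵐ[μ] logHausdorff (K ⋆[mul ℂ ℂ] L) f := by
  have hq := one_le_toReal_of_fact hp
  have hp0 : p ≠ 0 := (zero_lt_one.trans_le Fact.out).ne'
  have hexp (x : X) (y z : ℝ) :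
      Real.exp (-z) • Real.exp (-y) • x = Real.exp (-(z + y)) • x := by
    rw [smul_smul, ← Real.exp_add, neg_add]
  have hF : AEMeasurable (fun x => ∫⁻ z, ‖L z‖ₑ * ‖f (Real.exp (-z) • x)‖ₑ) μ := by
    simpa only [enorm_smul] using
      (hμ.aestronglyMeasurable_smul_comp hL.aestronglyMeasurable hf.1).enorm.lintegral_prod_right'
  have hFp := hL.lintegral_rpow_lintegral_ne_top hμ hq hf.1.enorm
    (lintegral_rpow_enorm_lt_top_of_eLpNorm_lt_top hp0 hp hf.2).ne
  filter_upwards [hK.ae_lintegral_ne_top hμ hq hF hFp,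
    (hf.1.comp_quasiMeasurePreserving hμ.quasiMeasurePreserving_prod).prodMk_left] with x hfin hfx
  simp only [hexp] at hfin
  simp only [logHausdorff, hexp]
  exact integral_smul_integral_smul_add hK.aestronglyMeasurable hL.aestronglyMeasurable hfx hfin

theorem logHausdorffL_mul (hμ : IsHomogeneousMeasure μ d) (hp : p ≠ ∞)
    (hK : ExpIntegrable (d / p.toReal) K) (hL : ExpIntegrable (d / p.toReal) L) :
    (logHausdorffL hμ hp hK * logHausdorffL hμ hp hL : Lp E p μ →L[ℂ] Lp E p μ) =
      logHausdorffL hμ hp (hK.convolution hL) :=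
  ContinuousLinearMap.ext fun f => Lp.ext <| calc
    _ =ᵐ[μ] logHausdorff K (logHausdorffL hμ hp hL f) :=
      coeFn_logHausdorffL hμ hp hK (logHausdorffL hμ hp hL f)
    _ =ᵐ[μ] logHausdorff K (logHausdorff L f) :=
      logHausdorff_congr_ae hμ (coeFn_logHausdorffL hμ hp hL f)
    _ =ᵐ[μ] logHausdorff (K ⋆[mul ℂ ℂ] L) f :=
      logHausdorff_logHausdorff hμ hp hK hL (Lp.memLp f)
    _ =ᵐ[μ] logHausdorffL hμ hp (hK.convolution hL) f :=
      (coeFn_logHausdorffL hμ hp (hK.convolution hL) f).symm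

theorem commute_logHausdorffL (hμ : IsHomogeneousMeasure μ d) (hp : p ≠ ∞)
    (hK : ExpIntegrable (d / p.toReal) K) (hL : ExpIntegrable (d / p.toReal) L) :
    Commute (logHausdorffL hμ hp hK : Lp E p μ →L[ℂ] Lp E p μ) (logHausdorffL hμ hp hL) := by
  simp only [Commute, SemiconjBy, logHausdorffL_mul, convolution_mul_comm K L]

theorem logHausdorffL_mul_of_convolution_eq (hμ : IsHomogeneousMeasure μ d) (hp : p ≠ ∞)
    (hK : ExpIntegrable (d / p.toReal) K) (hL : ExpIntegrable (d / p.toReal) L) {c : ℂ}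
    (hc : K ⋆[mul ℂ ℂ] L = c • (L - K)) :
    (logHausdorffL hμ hp hK * logHausdorffL hμ hp hL : Lp E p μ →L[ℂ] Lp E p μ) =
      c • (logHausdorffL hμ hp hL - logHausdorffL hμ hp hK) := by
  simp only [logHausdorffL_mul, hc, logHausdorffL_const_smul_sub hμ hp hL hK c]

end MulAction

end LogHausdorff

section Kernels

variable {s : ℝ} {ν ω : ℂ}

/-- The kernel of the resolvent at `ω` of the generator of dilations, where `Re ω` exceeds the
growth exponent of dilations. -/
noncomputable def causalKernel (ω : ℂ) : ℝ → ℂ :=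
  (Set.Ici 0).indicator fun y => Complex.exp (-ω * y)

/-- The kernel of the resolvent at `ω` of the generator of dilations, where `Re ω` is below the
growth exponent of dilations. -/
noncomputable def anticausalKernel (ω : ℂ) : ℝ → ℂ :=
  (Set.Iio 0).indicator fun y => -Complex.exp (-ω * y)

theorem exp_smul_cexp_neg_mul (s : ℝ) (ω : ℂ) (y : ℝ) :
    Real.exp (s * y) • Complex.exp (-ω * y) = Complex.exp ((s - ω) * y) := by
  rw [Complex.real_smul, Complex.ofReal_exp, ← Complex.exp_add]
  push_cast
  ring_nf

theorem expIntegrable_causalKernel (h : s < ω.re) : ExpIntegrable s (causalKernel ω) := by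
  have hint : IntegrableOn (fun y : ℝ => Complex.exp ((s - ω) * y)) (Set.Ici 0) :=
    (integrableOn_exp_mul_complex_Ioi (by simpa using h) 0).congr_set_ae Ioi_ae_eq_Ici.symm
  refine (hint.integrable_indicator measurableSet_Ici).congr (.of_forall fun y => ?_)
  simp only [causalKernel, Set.indicator_apply, smul_ite, smul_zero, exp_smul_cexp_neg_mul]

theorem expIntegrable_anticausalKernel (h : ω.re < s) : ExpIntegrable s (anticausalKernel ω) := by
  have hint : IntegrableOn (fun y : ℝ => -Complex.exp ((s - ω) * y)) (Set.Iio 0) :=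
    ((integrableOn_exp_mul_complex_Iic (by simpa using h) 0).mono_set Set.Iio_subset_Iic_self).neg
  refine (hint.integrable_indicator measurableSet_Iio).congr (.of_forall fun y => ?_)
  simp only [anticausalKernel, Set.indicator_apply, smul_ite, smul_zero, smul_neg,
    exp_smul_cexp_neg_mul]

theorem cexp_mul_cexp_sub (ν ω : ℂ) (y w : ℝ) :
    Complex.exp (-ν * y) * Complex.exp (-ω * (w - y : ℝ)) =
      Complex.exp (-ω * w) * Complex.exp ((ω - ν) * y) := by
  rw [← Complex.exp_add, ← Complex.exp_add]
  push_cast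
  ring_nf

theorem cexp_neg_mul_mul_cexp_sub_mul (ν ω : ℂ) (w : ℝ) :
    Complex.exp (-ω * w) * Complex.exp ((ω - ν) * w) = Complex.exp (-ν * w) := by
  rw [← Complex.exp_add]
  ring_nf

theorem causalKernel_convolution_causalKernel (h : ω ≠ ν) :
    causalKernel ν ⋆[mul ℂ ℂ] causalKernel ω = (ν - ω)⁻¹ • (causalKernel ω - causalKernel ν) := by
  ext w
  have hsub : ω - ν ≠ 0 := sub_ne_zero.2 h
  have hinv : (ν - ω)⁻¹ = -(ω - ν)⁻¹ := by rw [← inv_neg, neg_sub]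
  have hprod (y : ℝ) : causalKernel ν y * causalKernel ω (w - y) = (Set.Icc 0 w).indicator
      (fun y : ℝ => Complex.exp (-ω * w) * Complex.exp ((ω - ν) * y)) y := by
    simp only [← cexp_mul_cexp_sub, ← Set.Ici_inter_Iic, Set.inter_indicator_mul]
    simp only [causalKernel, Set.indicator_apply, Set.mem_Ici, Set.mem_Iic, sub_nonneg]
  simp only [convolution_mul, hprod, integral_indicator measurableSet_Icc, integral_const_mul]
  rcases le_or_gt 0 w with hw | hw
  · simp only [integral_Icc_eq_integral_Ioc, ← intervalIntegral.integral_of_le hw,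
      integral_exp_mul_complex hsub, causalKernel, Pi.smul_apply, Pi.sub_apply, smul_eq_mul, hinv,
      Set.indicator_of_mem (Set.mem_Ici.2 hw), Complex.ofReal_zero, mul_zero, Complex.exp_zero]
    linear_combination (ω - ν)⁻¹ * cexp_neg_mul_mul_cexp_sub_mul ν ω w
  · simp [causalKernel, hw.not_ge]

theorem causalKernel_convolution_anticausalKernel (h : ω.re < ν.re) :
    causalKernel ν ⋆[mul ℂ ℂ] anticausalKernel ω =
      (ν - ω)⁻¹ • (anticausalKernel ω - causalKernel ν) := by
  ext w
  have hre : (ω - ν).re < 0 := by simpa using h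
  have hinv : (ν - ω)⁻¹ = -(ω - ν)⁻¹ := by rw [← inv_neg, neg_sub]
  have hprod (y : ℝ) : causalKernel ν y * anticausalKernel ω (w - y) =
      (Set.Ici 0 ∩ Set.Ioi w).indicator
        (fun y : ℝ => -(Complex.exp (-ω * w) * Complex.exp ((ω - ν) * y))) y := by
    simp only [← cexp_mul_cexp_sub, ← mul_neg, Set.inter_indicator_mul]
    simp only [causalKernel, anticausalKernel, Set.indicator_apply, Set.mem_Iio, Set.mem_Ioi,
      sub_neg]
  simp only [convolution_mul, hprod, integral_neg, integral_const_mul,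
    integral_indicator (measurableSet_Ici.inter measurableSet_Ioi)]
  rcases le_or_gt 0 w with hw | hw
  · have hset : Set.Ici 0 ∩ Set.Ioi w = Set.Ioi w :=
      Set.inter_eq_right.2 (Set.Ioi_subset_Ici hw)
    simp only [hset, integral_exp_mul_complex_Ioi hre, causalKernel, anticausalKernel,
      Pi.smul_apply, Pi.sub_apply, smul_eq_mul, hinv, Set.indicator_of_mem (Set.mem_Ici.2 hw),
      Set.indicator_of_notMem (Set.notMem_Iio.2 hw)]
    linear_combination (ω - ν)⁻¹ * cexp_neg_mul_mul_cexp_sub_mul ν ω w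
  · have hset : Set.Ici 0 ∩ Set.Ioi w = Set.Ici 0 :=
      Set.inter_eq_left.2 (Set.Ici_subset_Ioi.2 hw)
    simp only [hset, integral_Ici_eq_integral_Ioi, integral_exp_mul_complex_Ioi hre, causalKernel,
      anticausalKernel, Pi.smul_apply, Pi.sub_apply, smul_eq_mul, hinv,
      Set.indicator_of_mem (Set.mem_Iio.2 hw), Set.indicator_of_notMem (Set.notMem_Ici.2 hw),
      Complex.ofReal_zero, mul_zero, Complex.exp_zero]
    ring

end Kernels

section CesaroKernel

instance sFinite_weightMeasure (a : ℝ) : SFinite (weightMeasure a) := by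
  unfold weightMeasure
  infer_instance

theorem isHomogeneousMeasure_weightMeasure (a : ℝ) :
    IsHomogeneousMeasure (weightMeasure a) (a + 1) := by
  intro c hc
  ext A hA
  set w : ℝ → ℝ≥0∞ := fun x => ENNReal.ofReal (|x| ^ a)
  have hw : Measurable w := by fun_prop
  have hwc (x : ℝ) : w x = ENNReal.ofReal (c ^ (-a)) * w (c * x) := by
    simp only [w]
    rw [← ENNReal.ofReal_mul (by positivity), abs_mul, abs_of_pos hc,
      Real.mul_rpow hc.le (abs_nonneg x), ← mul_assoc, ← Real.rpow_add hc, neg_add_cancel,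
      Real.rpow_zero, one_mul]
  have hind (x : ℝ) : ((c • ·) ⁻¹' A).indicator w x =
      ENNReal.ofReal (c ^ (-a)) * A.indicator w (c * x) := by
    by_cases hx : c * x ∈ A
    · rw [Set.indicator_of_mem hx, ← hwc, Set.indicator_of_mem (by exact hx)]
    · rw [Set.indicator_of_notMem hx, Set.indicator_of_notMem (by exact hx), mul_zero]
  calc (weightMeasure a).map (c • ·) A = ∫⁻ x, ((c • ·) ⁻¹' A).indicator w x := by
        have hcA : MeasurableSet ((c • · : ℝ → ℝ) ⁻¹' A) := hA.preimage (by fun_prop)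
        rw [Measure.map_apply (by fun_prop) hA, weightMeasure, withDensity_apply _ hcA,
          lintegral_indicator hcA]
    _ = ENNReal.ofReal (c ^ (-a)) * ∫⁻ x, A.indicator w (c * x) := by
        rw [lintegral_congr hind, lintegral_const_mul' _ _ ofReal_ne_top]
    _ = ENNReal.ofReal (c ^ (-a)) * (ENNReal.ofReal c⁻¹ * ∫⁻ x, A.indicator w x) := by
        rw [← lintegral_map (μ := volume) (hw.indicator hA) (measurable_const_mul c),
          Real.map_volume_mul_left hc.ne', lintegral_smul_measure, smul_eq_mul,
          abs_of_pos (inv_pos.2 hc)]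
    _ = (ENNReal.ofReal (c ^ (-(a + 1))) • weightMeasure a) A := by
        rw [← mul_assoc, ← ENNReal.ofReal_mul (by positivity), ← Real.rpow_neg_one,
          ← Real.rpow_add hc, ← neg_add, Measure.smul_apply, weightMeasure, withDensity_apply _ hA,
          lintegral_indicator hA, smul_eq_mul]

theorem Hphi_eq_logHausdorff (φ f : ℝ → ℂ) : Hphi φ f = logHausdorff (φ ∘ Real.exp) f := by
  ext x
  have hexp := integral_image_eq_integral_abs_deriv_smul (s := Set.univ) (f' := Real.exp) .univ
    (fun y _ => (Real.hasDerivAt_exp y).hasDerivWithinAt) Real.exp_injective.injOn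
    (fun t : ℝ => f (x / t) * φ t / (t : ℂ))
  rw [Set.image_univ, Real.range_exp, Measure.restrict_univ] at hexp
  rw [Hphi, hexp, logHausdorff]
  congr 1 with y
  have hne : (Real.exp y : ℂ) ≠ 0 := by simp
  rw [abs_of_pos (Real.exp_pos y), Complex.real_smul, mul_div_cancel₀ _ hne, Real.exp_neg,
    smul_eq_mul, smul_eq_mul, div_eq_inv_mul, mul_comm, Function.comp_apply]

theorem ofReal_exp_cpow (y : ℝ) (ρ : ℂ) : (Real.exp y : ℂ) ^ ρ = Complex.exp (ρ * y) := by
  rw [Complex.cpow_def_of_ne_zero (by simp), ← Complex.ofReal_log (Real.exp_pos y).le,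
    Real.log_exp, mul_comm]

theorem cesaroKernel_comp_exp (ν : ℂ) : cesaroKernel ν ∘ Real.exp = causalKernel ν := by
  ext y
  simp only [Function.comp_apply, cesaroKernel, Real.one_le_exp_iff, ofReal_exp_cpow,
    causalKernel, Set.indicator_apply, Set.mem_Ici]

/-- The power `x ^ (-ρ)` cut off to `(0, 1)`, an approximate eigenfunction of the Cesàro operator
when `Re ρ` approaches the critical exponent. -/
noncomputable def truncatedPower (ρ : ℂ) : ℝ → ℂ :=
  (Set.Ioo 0 1).indicator fun x => (x : ℂ) ^ (-ρ)

theorem truncatedPower_comp_exp (ρ : ℂ) : truncatedPower ρ ∘ Real.exp = -anticausalKernel ρ := by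
  ext y
  simp only [Function.comp_apply, truncatedPower, anticausalKernel, Set.indicator_apply,
    Set.mem_Ioo, Set.mem_Iio, Real.exp_pos, Real.exp_lt_one_iff, true_and, ofReal_exp_cpow,
    Pi.neg_apply, neg_ite, neg_neg, neg_zero]

theorem logHausdorff_comp_exp (K f : ℝ → ℂ) :
    logHausdorff K f ∘ Real.exp = K ⋆[mul ℂ ℂ] (f ∘ Real.exp) := by
  ext w
  rw [convolution_mul, Function.comp_apply, logHausdorff]
  simp only [smul_eq_mul, ← Real.exp_add, neg_add_eq_sub, Function.comp_apply]

theorem logHausdorff_causalKernel_truncatedPower {ν ρ : ℂ} (h : ρ.re < ν.re) :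
    logHausdorff (causalKernel ν) (truncatedPower ρ) =
      (ν - ρ)⁻¹ • (truncatedPower ρ + cesaroKernel ν) := by
  ext x
  rcases le_or_gt x 0 with hx | hx
  · have hvanish (c : ℝ) (hc : 0 < c) : truncatedPower ρ (c * x) = 0 :=
      Set.indicator_of_notMem (fun hcx => (mul_nonpos_of_nonneg_of_nonpos hc.le hx).not_gt hcx.1) _
    have hx1 : ¬ 1 ≤ x := (hx.trans_lt one_pos).not_ge
    have hx0 : truncatedPower ρ x = 0 := by simpa only [one_mul] using hvanish 1 one_pos
    simp [logHausdorff, hvanish _ (Real.exp_pos _), cesaroKernel, hx1, hx0]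
  · obtain ⟨w, rfl⟩ : ∃ w, Real.exp w = x := ⟨_, Real.exp_log hx⟩
    calc (logHausdorff (causalKernel ν) (truncatedPower ρ) ∘ Real.exp) w
        = -(causalKernel ν ⋆[mul ℂ ℂ] anticausalKernel ρ) w := by
          rw [logHausdorff_comp_exp, truncatedPower_comp_exp]
          simp only [convolution_mul, Pi.neg_apply, mul_neg, integral_neg]
      _ = (ν - ρ)⁻¹ * ((-anticausalKernel ρ) w + causalKernel ν w) := by
          rw [causalKernel_convolution_anticausalKernel h]
          simp only [Pi.smul_apply, Pi.sub_apply, Pi.neg_apply, smul_eq_mul]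
          ring
      _ = (ν - ρ)⁻¹ * (truncatedPower ρ (Real.exp w) + cesaroKernel ν (Real.exp w)) := by
          rw [← truncatedPower_comp_exp, ← cesaroKernel_comp_exp, Function.comp_apply,
            Function.comp_apply]

theorem eLpNorm_indicator_cpow {A : Set ℝ} (hA : MeasurableSet A) (hA0 : A ⊆ Set.Ioi 0) (ρ : ℂ)
    {p : ℝ≥0∞} (hp0 : p ≠ 0) (hp : p ≠ ∞) (a : ℝ) :
    eLpNorm (A.indicator fun x => (x : ℂ) ^ (-ρ)) p (weightMeasure a) =
      (∫⁻ x in A, ENNReal.ofReal (x ^ (a - p.toReal * ρ.re))) ^ (1 / p.toReal) := by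
  have hq : 0 < p.toReal := toReal_pos hp0 hp
  rw [eLpNorm_indicator_eq_eLpNorm_restrict hA, eLpNorm_eq_lintegral_rpow_enorm_toReal hp0 hp,
    weightMeasure, restrict_withDensity hA,
    lintegral_withDensity_eq_lintegral_mul₀ (by fun_prop) (by fun_prop)]
  congr 1
  refine setLIntegral_congr_fun hA fun x hx => ?_
  have hx0 : 0 < x := hA0 hx
  rw [Pi.mul_apply, ← ofReal_norm, Complex.norm_cpow_eq_rpow_re_of_pos hx0,
    ENNReal.ofReal_rpow_of_nonneg (by positivity) hq.le, ← ENNReal.ofReal_mul (by positivity),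
    abs_of_pos hx0, ← Real.rpow_mul hx0.le, ← Real.rpow_add hx0, Complex.neg_re, neg_mul,
    mul_comm, sub_eq_add_neg, mul_comm]

theorem eLpNorm_truncatedPower {p : ℝ≥0∞} (hp0 : p ≠ 0) (hp : p ≠ ∞) {a : ℝ} {ρ : ℂ}
    (hρ : p.toReal * ρ.re < a + 1) :
    eLpNorm (truncatedPower ρ) p (weightMeasure a) =
      ENNReal.ofReal ((a + 1 - p.toReal * ρ.re)⁻¹ ^ (1 / p.toReal)) := by
  have hr : -1 < a - p.toReal * ρ.re := by linarith
  have hint : IntegrableOn (fun x : ℝ => x ^ (a - p.toReal * ρ.re)) (Set.Ioo 0 1) :=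
    (intervalIntegral.integrableOn_Ioo_rpow_iff one_pos).2 hr
  have hnonneg : ∀ᵐ x ∂volume.restrict (Set.Ioo (0 : ℝ) 1), 0 ≤ x ^ (a - p.toReal * ρ.re) :=
    (ae_restrict_mem measurableSet_Ioo).mono fun x hx => Real.rpow_nonneg hx.1.le _
  rw [truncatedPower, eLpNorm_indicator_cpow measurableSet_Ioo (fun x hx => hx.1) ρ hp0 hp,
    ← ofReal_integral_eq_lintegral_ofReal hint hnonneg, ← integral_Ioc_eq_integral_Ioo,
    ← intervalIntegral.integral_of_le zero_le_one, integral_rpow (.inl hr), Real.one_rpow,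
    Real.zero_rpow (by linarith), sub_zero, one_div, sub_add_eq_add_sub,
    ENNReal.ofReal_rpow_of_nonneg (inv_nonneg.2 (by linarith)) (by positivity)]

theorem memLp_truncatedPower {p : ℝ≥0∞} (hp0 : p ≠ 0) (hp : p ≠ ∞) {a : ℝ} {ρ : ℂ}
    (hρ : p.toReal * ρ.re < a + 1) : MemLp (truncatedPower ρ) p (weightMeasure a) :=
  ⟨((by fun_prop : Measurable fun x : ℝ => (x : ℂ) ^ (-ρ)).indicator
      measurableSet_Ioo).aestronglyMeasurable,
    eLpNorm_truncatedPower hp0 hp hρ ▸ ofReal_lt_top⟩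

theorem memLp_cesaroKernel {p : ℝ≥0∞} (hp0 : p ≠ 0) (hp : p ≠ ∞) {a : ℝ} {ν : ℂ}
    (hν : a + 1 < p.toReal * ν.re) : MemLp (cesaroKernel ν) p (weightMeasure a) := by
  have heq : cesaroKernel ν = (Set.Ici 1).indicator fun x : ℝ => (x : ℂ) ^ (-ν) := by
    ext x
    simp only [cesaroKernel, Set.indicator_apply, Set.mem_Ici]
  have hint : IntegrableOn (fun x : ℝ => x ^ (a - p.toReal * ν.re)) (Set.Ici 1) :=
    (integrableOn_Ioi_rpow_of_lt (by linarith) one_pos).congr_set_ae Ioi_ae_eq_Ici.symm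
  rw [heq]
  refine ⟨((by fun_prop : Measurable fun x : ℝ => (x : ℂ) ^ (-ν)).indicator
      measurableSet_Ici).aestronglyMeasurable, ?_⟩
  rw [eLpNorm_indicator_cpow measurableSet_Ici (Set.Ici_subset_Ioi.2 one_pos) ν hp0 hp]
  exact rpow_lt_top_of_nonneg (by positivity) hint.setLIntegral_lt_top.ne

end CesaroKernel

section Spectrum

theorem notMem_spectrum_logHausdorffL_causalKernel {X E : Type*} [MeasurableSpace X]
    [MulAction ℝ X] [MeasurableSMul₂ ℝ X] {μ : Measure X} [SFinite μ] [NormedAddCommGroup E]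
    [NormedSpace ℂ E] [CompleteSpace E] {d : ℝ} {p : ℝ≥0∞} [Fact (1 ≤ p)]
    (hμ : IsHomogeneousMeasure μ d) (hp : p ≠ ∞) {ν z : ℂ} (hν : d / p.toReal < ν.re)
    (hz : z ≠ 0) (hre : z⁻¹.re ≠ ν.re - d / p.toReal) :
    z ∉ spectrum ℂ (logHausdorffL hμ hp (expIntegrable_causalKernel hν) :
      Lp E p μ →L[ℂ] Lp E p μ) := by
  rw [spectrum.notMem_iff]
  set ω : ℂ := ν - z⁻¹
  have hωre : ω.re = ν.re - z⁻¹.re := Complex.sub_re ..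
  have hωz : (ν - ω)⁻¹ = z := by simp only [ω, _root_.sub_sub_cancel, inv_inv]
  obtain ⟨K, hK, hconv⟩ : ∃ K, ExpIntegrable (d / p.toReal) K ∧
      causalKernel ν ⋆[mul ℂ ℂ] K = z • (K - causalKernel ν) := by
    rcases lt_or_gt_of_ne hre with hlt | hgt
    · have hων : ω ≠ ν := sub_eq_self.not.2 (inv_ne_zero hz)
      exact ⟨causalKernel ω, expIntegrable_causalKernel (by linarith),
        hωz ▸ causalKernel_convolution_causalKernel hων⟩
    · exact ⟨anticausalKernel ω, expIntegrable_anticausalKernel (by linarith),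
        hωz ▸ causalKernel_convolution_anticausalKernel (by linarith)⟩
  exact isUnit_algebraMap_sub_of_mul_eq hz (commute_logHausdorffL hμ hp _ hK)
    (logHausdorffL_mul_of_convolution_eq hμ hp _ hK hconv)

variable {p : ℝ≥0∞} [Fact (1 ≤ p)] {a : ℝ} {ν z : ℂ}

/-- The operator `C_ν` on `L^p(|x|^a)`. -/
noncomputable def cesaroL (hp : p ≠ ∞) (hν : (a + 1) / p.toReal < ν.re) :
    Lp ℂ p (weightMeasure a) →L[ℂ] Lp ℂ p (weightMeasure a) :=
  logHausdorffL (isHomogeneousMeasure_weightMeasure a) hp (expIntegrable_causalKernel hν)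

theorem coeFn_cesaroL (hp : p ≠ ∞) (hν : (a + 1) / p.toReal < ν.re)
    (f : Lp ℂ p (weightMeasure a)) :
    ⇑(cesaroL hp hν f) =ᵐ[weightMeasure a] Hphi (cesaroKernel ν) f := by
  rw [Hphi_eq_logHausdorff, cesaroKernel_comp_exp]
  exact coeFn_logHausdorffL ..

theorem cesaroL_toLp_truncatedPower (hp : p ≠ ∞) (hν : (a + 1) / p.toReal < ν.re) {ρ : ℂ}
    (hρν : ρ.re < ν.re) (hρ : MemLp (truncatedPower ρ) p (weightMeasure a))
    (hG : MemLp (cesaroKernel ν) p (weightMeasure a)) :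
    cesaroL hp hν hρ.toLp = (ν - ρ)⁻¹ • (hρ.toLp + hG.toLp) := by
  rw [← MemLp.toLp_add, ← MemLp.toLp_const_smul]
  refine Lp.ext ?_
  refine (coeFn_logHausdorffL ..).trans <|
    (logHausdorff_congr_ae (isHomogeneousMeasure_weightMeasure a) hρ.coeFn_toLp).trans ?_
  rw [logHausdorff_causalKernel_truncatedPower hρν]
  exact (MemLp.coeFn_toLp _).symm

theorem tendsto_norm_toLp_truncatedPower_atTop (hp : p ≠ ∞) {ι : Type*} {l : Filter ι}
    {ρ : ι → ℂ} (hρ : ∀ i, (ρ i).re < (a + 1) / p.toReal)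
    (hlim : Tendsto (fun i => (ρ i).re) l (𝓝 ((a + 1) / p.toReal)))
    (hmem : ∀ i, MemLp (truncatedPower (ρ i)) p (weightMeasure a)) :
    Tendsto (fun i => ‖(hmem i).toLp‖) l atTop := by
  have hp0 : p ≠ 0 := (zero_lt_one.trans_le Fact.out).ne'
  have hq : 0 < p.toReal := toReal_pos hp0 hp
  have hgap (i : ι) : 0 < a + 1 - p.toReal * (ρ i).re := sub_pos.2 ((lt_div_iff₀' hq).1 (hρ i))
  have hnorm (i : ι) :
      ‖(hmem i).toLp‖ = (a + 1 - p.toReal * (ρ i).re)⁻¹ ^ (1 / p.toReal) := by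
    rw [Lp.norm_toLp, eLpNorm_truncatedPower hp0 hp (sub_pos.1 (hgap i)),
      toReal_ofReal (Real.rpow_nonneg (inv_nonneg.2 (hgap i).le) _)]
  have hzero : Tendsto (fun i => a + 1 - p.toReal * (ρ i).re) l (𝓝[>] 0) := by
    refine tendsto_nhdsWithin_iff.2 ⟨?_, .of_forall hgap⟩
    simpa [mul_div_cancel₀ _ hq.ne'] using (hlim.const_mul p.toReal).const_sub (a + 1)
  simp only [hnorm]
  exact (tendsto_rpow_atTop (by positivity)).comp hzero.inv_tendsto_nhdsGT_zero

theorem mem_spectrum_cesaroL_of_re_inv_eq (hp : p ≠ ∞) (hν : (a + 1) / p.toReal < ν.re)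
    (hz : z ≠ 0) (hre : z⁻¹.re = ν.re - (a + 1) / p.toReal) :
    z ∈ spectrum ℂ (cesaroL hp hν) := by
  have hp0 : p ≠ 0 := (zero_lt_one.trans_le Fact.out).ne'
  have hq : 0 < p.toReal := toReal_pos hp0 hp
  set ε : ℕ → ℝ := fun n => 1 / ((n : ℝ) + 1)
  have hε0 (n : ℕ) : 0 < ε n := Nat.one_div_pos_of_nat
  have hε : Tendsto ε atTop (𝓝 0) := tendsto_one_div_add_atTop_nhds_zero_nat
  set ρ : ℕ → ℂ := fun n => ν - z⁻¹ - ε n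
  have hρre (n : ℕ) : (ρ n).re = (a + 1) / p.toReal - ε n := by simp [ρ, hre]
  have hρ (n : ℕ) : (ρ n).re < (a + 1) / p.toReal := by linarith [hρre n, hε0 n]
  have hF (n : ℕ) : MemLp (truncatedPower (ρ n)) p (weightMeasure a) :=
    memLp_truncatedPower hp0 hp ((lt_div_iff₀' hq).1 (hρ n))
  have hG : MemLp (cesaroKernel ν) p (weightMeasure a) :=
    memLp_cesaroKernel hp0 hp ((div_lt_iff₀' hq).1 hν)
  have hζ : Tendsto (fun n => (ν - ρ n)⁻¹) atTop (𝓝 z) := by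
    have hlim : Tendsto (fun n => z⁻¹ + (ε n : ℂ)) atTop (𝓝 z⁻¹) := by
      simpa using hε.ofReal.const_add z⁻¹
    simpa [ρ, sub_sub, inv_inv] using hlim.inv₀ (inv_ne_zero hz)
  have hnorm : Tendsto (fun n => ‖(hF n).toLp‖) atTop atTop :=
    tendsto_norm_toLp_truncatedPower_atTop hp hρ
      (by simpa only [hρre, sub_zero] using hε.const_sub ((a + 1) / p.toReal)) hF
  have hres (n : ℕ) :
      (ν - ρ n)⁻¹ • (hF n).toLp - cesaroL hp hν (hF n).toLp = -((ν - ρ n)⁻¹ • hG.toLp) := by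
    rw [cesaroL_toLp_truncatedPower hp hν ((hρ n).trans hν) (hF n) hG, smul_add]
    abel
  refine mem_spectrum_of_tendsto_norm_atTop hζ hnorm ?_
  simpa only [hres] using (hζ.smul_const hG.toLp).neg.norm.isBoundedUnder_le

theorem mem_sphere_iff_re_inv_eq {δ : ℝ} (hδ : 0 < δ) (hz : z ≠ 0) :
    z ∈ Metric.sphere (((2 * δ)⁻¹ : ℝ) : ℂ) (2 * δ)⁻¹ ↔ z⁻¹.re = δ := by
  have hz0 : 0 < Complex.normSq z := Complex.normSq_pos.2 hz
  rw [mem_sphere_iff_norm, ← sq_eq_sq₀ (norm_nonneg _) (by positivity),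
    ← Complex.normSq_eq_norm_sq, Complex.inv_re, div_eq_iff hz0.ne', Complex.normSq_apply,
    Complex.normSq_apply]
  simp only [Complex.sub_re, Complex.sub_im, Complex.ofReal_re, Complex.ofReal_im, sub_zero]
  constructor
  · intro h
    field_simp at h
    nlinarith
  · intro h
    field_simp
    linear_combination (-4 * δ) * h

theorem zero_mem_spectrum_cesaroL (hp : p ≠ ∞) (hν : (a + 1) / p.toReal < ν.re) :
    0 ∈ spectrum ℂ (cesaroL hp hν) := by
  set δ := ν.re - (a + 1) / p.toReal
  have hδ0 : 0 < δ := sub_pos.2 hν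
  have hlim : Tendsto (fun n : ℕ => (δ + n * Complex.I : ℂ)⁻¹) atTop (𝓝 0) := by
    refine tendsto_inv₀_cobounded.comp (tendsto_norm_atTop_iff_cobounded.1 ?_)
    refine tendsto_atTop_mono (fun n : ℕ => ?_) tendsto_natCast_atTop_atTop
    simpa using Complex.abs_im_le_norm (δ + n * Complex.I)
  refine (spectrum.isClosed (cesaroL hp hν)).mem_of_tendsto hlim (.of_forall fun n => ?_)
  have hre : (δ + n * Complex.I : ℂ).re = δ := by simp
  have hne : (δ + n * Complex.I : ℂ) ≠ 0 := fun h => hδ0.ne' (by rw [← hre, h, Complex.zero_re])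
  exact mem_spectrum_cesaroL_of_re_inv_eq hp hν (inv_ne_zero hne) (by rw [inv_inv, hre])

theorem spectrum_cesaroL (hp : p ≠ ∞) (hν : (a + 1) / p.toReal < ν.re) :
    spectrum ℂ (cesaroL hp hν) =
      Metric.sphere (((2 * (ν.re - (a + 1) / p.toReal))⁻¹ : ℝ) : ℂ)
        (2 * (ν.re - (a + 1) / p.toReal))⁻¹ := by
  have hδ : 0 < ν.re - (a + 1) / p.toReal := sub_pos.2 hν
  ext z
  rcases eq_or_ne z 0 with rfl | hz
  · refine iff_of_true (zero_mem_spectrum_cesaroL hp hν) ?_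
    rw [mem_sphere_iff_norm, zero_sub, norm_neg, Complex.norm_real,
      Real.norm_of_nonneg (by positivity)]
  · rw [mem_sphere_iff_re_inv_eq hδ hz]
    exact ⟨not_imp_not.1 fun hre => notMem_spectrum_logHausdorffL_causalKernel _ hp hν hz hre,
      mem_spectrum_cesaroL_of_re_inv_eq hp hν hz⟩

end Spectrum

theorem stmt16_general (p a : ℝ) [Fact (1 ≤ ENNReal.ofReal p)] (ν : ℂ) (hν : a + 1 < p * ν.re) :
    ∃ T : Lp ℂ (ENNReal.ofReal p) (weightMeasure a) →L[ℂ]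
          Lp ℂ (ENNReal.ofReal p) (weightMeasure a),
      (∀ f : Lp ℂ (ENNReal.ofReal p) (weightMeasure a),
        ⇑(T f) =ᵐ[weightMeasure a] Hphi (cesaroKernel ν) ⇑f) ∧
      spectrum ℂ T =
        {z : ℂ | ‖z - ((p / (2 * (p * ν.re - a - 1)) : ℝ) : ℂ)‖
          = p / (2 * (p * ν.re - a - 1))} := by
  have hp : 0 < p := zero_lt_one.trans_le (ENNReal.one_le_ofReal.1 Fact.out)
  have hpq : (ENNReal.ofReal p).toReal = p := toReal_ofReal hp.le
  have hν' : (a + 1) / (ENNReal.ofReal p).toReal < ν.re := by rwa [hpq, div_lt_iff₀' hp]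
  have hradius : (2 * (ν.re - (a + 1) / p))⁻¹ = p / (2 * (p * ν.re - a - 1)) := by
    field_simp
    ring
  refine ⟨cesaroL ofReal_ne_top hν', coeFn_cesaroL ofReal_ne_top hν', ?_⟩
  ext z
  rw [spectrum_cesaroL, hpq, hradius, mem_sphere_iff_norm, Set.mem_ofPred_eq]

/-- For `1 ≤ p < ∞`, `a > −1`, `ν ∈ ℂ` with `p·Re ν > a + 1`, the Cesàro
operator `C_ν f(x) = ∫₁^∞ f(x/t) t^{−ν−1} dt` is a bounded linear operator on
`L^p(ℝ, |x|^a)` and its spectrum equals the circle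
`{ z : |z − p/(2(p Re ν − a − 1))| = p/(2(p Re ν − a − 1)) }`. -/
theorem stmt16 (p a : ℝ) (hp : 1 ≤ p) (ha : -1 < a) [Fact (1 ≤ ENNReal.ofReal p)]
    (ν : ℂ) (hν : a + 1 < p * ν.re) :
    ∃ T : Lp ℂ (ENNReal.ofReal p) (weightMeasure a) →L[ℂ]
          Lp ℂ (ENNReal.ofReal p) (weightMeasure a),
      (∀ f : Lp ℂ (ENNReal.ofReal p) (weightMeasure a),
        ⇑(T f) =ᵐ[weightMeasure a] Hphi (cesaroKernel ν) ⇑f) ∧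
      spectrum ℂ T =
        {z : ℂ | ‖z - ((p / (2 * (p * ν.re - a - 1)) : ℝ) : ℂ)‖
          = p / (2 * (p * ν.re - a - 1))} :=
  stmt16_general p a ν hν
end
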